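/- Let 0 ≤ s ≤ 1, h = π/N ∈ (0,1], 1 < M < π/h, and t ≥ 0. Let u_{h,0}^± : 𝕋_h → ℝ with 𝓕_h u_{h,0}^±(0) = 0, and suppose 𝓥_h^± ∈ C([0,t]; H^s(𝕋_h)) solves the decoupled FPU profile equation with data u_{h,0}^± and 𝓦^± ∈ C([0,t]; H^s(𝕋)) solves the KdV profile equation with data 𝓛_h u_{h,0}^±, both having mean zero for every time. Then there is a constant C, independent of h, M, t and the data, such that ‖P_{M≤·≤π/h}(𝓛_h 𝓥_h^± − 𝓦^±)(t)‖_{L²(𝕋)} ≤ C·[ M^{−1/2}·sup_{t′∈[0,t]}( ‖(𝓛_h 𝓥_h^± − 𝓦^±)(t′)‖_{L²(𝕋)}·(1 + ‖𝓥_h^±(t′)‖_{H^s(𝕋_h)} + ‖𝓦^±(t′)‖_{H^s(𝕋)})² ) + h^{s/2}·sup_{t′∈[0,t]}( (1+t′)^{1+s/2}·(1 + ‖𝓥_h^±(t′)‖_{H^s(𝕋_h)})·‖𝓥_h^±(t′)‖²_{H^s(𝕋_h)} ) + ∫_0^t ‖(𝓛_h 𝓥_h^± − 𝓦^±)(t′)‖_{L²(𝕋)}·(1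 + ‖𝓥_h^±(t′)‖_{H^s(𝕋_h)} + ‖𝓦^±(t′)‖_{H^s(𝕋)})³ dt′ ] (for either choice of sign). -/

import Mathlib

/-!
Written in Fourier variables, both profile equations are instances of one quadratic system `Sol`,
with symbols `S`, `c`: for KdV, `S n = n` and `c n = 1`; for FPU, `S n = (4/h) sin(hn/4)` and
`c n = cos(hn/4)`. The quadratic resonance function is `-(1/8) S(k) S(k₁) S(k₂)`, and in both cases
the sum of the two resonance functions met in the cubic term factorises as
`-(1/8) S(k₁+k₃) S(k₃+k₄) S(k₁+k₄)` (the field `Symb.idt`; for FPU it is a trigonometric identity).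

*Normal form.* Two differentiations by parts in time (`Sol.nf1`, `Sol.nf`) turn the increment of a
solution over `[t0, t1]` into quadratic and cubic boundary terms, a resonant cubic term and quartic
terms without derivative loss. The boundary terms are pointwise `O(⟨k⟩⁻¹)`, hence `O(M^(-1/2))` in
`ℓ²(|k| ≥ M)` (`tail_bd`); the resonant term reproduces one of its inputs; the quartic terms are
`O(⟨k⟩⁻¹)` as well. All multilinear bounds reduce to `wt_pr` and `pr_res`.

*Comparison of the two flows.* The symbols and phases of the two systems differ by
`O(h R)` and `O(t h² R⁴)`, where `R` is the product of the brackets of the input frequencies.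
Interpolating with the trivial bound gives `h^(s/2) (1+t)^(s/2) R^s`, and `R^s` is paid for by the
`H^s` norm of the FPU profile (`sym_close`). Together with multilinearity in the difference of the
profiles this gives `state_cmp`.

*Interpolation.* `𝓛_h` acts on Fourier coefficients as periodic extension followed by
multiplication by `sinc²(hk/2)` (`tF_interp`), an admissible perturbation of the symbol `1`. The
error caused by it, aliasing included, is `O(h^(s/2))` in `ℓ²` (`al_sub_bd`). Among the frequencies
`|k| ≤ N` only `k = N` is not in the dual lattice, and it is an alias of `-N` (`incr_bd`).

*Absorption.* Integrated in time, the lattice error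
`L = h^(s/2) (1+t)^(s/2) (1 + ‖𝓥‖) ‖𝓥‖²` comes with an additional factor `‖𝓥‖`, and the resulting
time integral need not be bounded by the claimed right-hand side. The remedy is to start at the last time
`t0` at which the difference is at most `L`; such a time exists since the difference vanishes at
time `0`. At `t0` the difference is bounded by the second term of the claim, and on `(t0, t]` the
lattice error in the integral is dominated by the difference, so that it is absorbed in the third
term (`absorb`).
-/


open scoped Real BigOperators ENNReal NNReal
open MeasureTheory

noncomputable section

namespace FPU

/-- `e^{ix}`. -/
def eI (x : ℝ) : ℂ := Complex.exp (Complex.I * x)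

/-- Mesh size `h = π / N`. -/
def msh (N : ℕ) : ℝ := Real.pi / N

/-- Frequency/index set `{-N, …, N-1}` of `𝕋_h` (identified with `(𝕋_h)*`). -/
def dual (N : ℕ) : Finset ℤ := Finset.Icc (-(N : ℤ)) ((N : ℤ) - 1)

/-- Reduction of an integer into `{-N, …, N-1}` modulo `2N`. -/
def red (N : ℕ) (m : ℤ) : ℤ := (m + N) % (2 * N) - N

/-- Complexification of a real lattice function. -/
def cf (f : ℤ → ℝ) : ℤ → ℂ := fun n => (f n : ℂ)

/-- Discrete Fourier coefficient `𝓕_h f (k)` on `𝕋_h`. -/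
def dF (N : ℕ) (f : ℤ → ℂ) (k : ℤ) : ℂ :=
  ((msh N / Real.sqrt (2 * Real.pi) : ℝ) : ℂ) *
    ∑ n ∈ dual N, f n * eI (-(msh N * n * k))

/-- `L²(𝕋_h)` norm. -/
def L2h (N : ℕ) (f : ℤ → ℂ) : ℝ :=
  Real.sqrt (msh N * ∑ n ∈ dual N, ‖f n‖ ^ 2)

/-- `H^s(𝕋_h)` norm. -/
def Hs (N : ℕ) (s : ℝ) (f : ℤ → ℂ) : ℝ :=
  Real.sqrt (∑ k ∈ dual N, (1 + (k : ℝ) ^ 2) ^ s * ‖dF N f k‖ ^ 2)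

/-- `ℍ^s(𝕋_h)` norm of a pair. -/
def HsPair (N : ℕ) (s : ℝ) (f g : ℤ → ℂ) : ℝ :=
  Real.sqrt (Hs N s f ^ 2 + Hs N s g ^ 2)

/-- Fourier multiplier on `𝕋_h` with symbol `m`. -/
def mult (N : ℕ) (m : ℤ → ℂ) (f : ℤ → ℂ) : ℤ → ℂ := fun n =>
  ((1 / Real.sqrt (2 * Real.pi) : ℝ) : ℂ) *
    ∑ k ∈ dual N, m k * dF N f k * eI (msh N * n * k)

/-- Symbol of `∇_h`. -/
def gradSymb (N : ℕ) (k : ℤ) : ℂ :=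
  2 * Complex.I / ((msh N : ℝ) : ℂ) * ((Real.sin (msh N * k / 2) : ℝ) : ℂ)

/-- `∇_h`. -/
def gradh (N : ℕ) : (ℤ → ℂ) → ℤ → ℂ := mult N (gradSymb N)

/-- `∇_h⁻¹` (vanishing at frequency `0`). -/
def gradhInv (N : ℕ) : (ℤ → ℂ) → ℤ → ℂ :=
  mult N fun k => if k = 0 then 0 else (gradSymb N k)⁻¹

/-- The FPU dispersion `s_h(k) = (1/h²)(k - (2/h)sin(hk/2))`. -/
def sh (N : ℕ) (k : ℤ) : ℝ :=
  (1 / msh N ^ 2) * (k - (2 / msh N) * Real.sin (msh N * k / 2))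

/-- Linear FPU propagator `S_h^σ(t)`, the multiplier with symbol `e^{iσt·s_h(k)}`. -/
def Sh (N : ℕ) (σ t : ℝ) : (ℤ → ℂ) → ℤ → ℂ :=
  mult N fun k => eI (σ * t * sh N k)

/-- `e^{σc∂_h}`, the multiplier with symbol `e^{iσck}`. -/
def expDh (N : ℕ) (c : ℝ) : (ℤ → ℂ) → ℤ → ℂ :=
  mult N fun k => eI (c * k)

/-- Coupled FPU integral equation (component with sign `σ`, the other component is `w`). -/
def coupledEq (N : ℕ) (σ T : ℝ) (u0 : ℤ → ℂ) (u w : ℝ → ℤ → ℂ) : Prop :=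
  ∀ t ∈ Set.Icc (-T) T, ∀ n : ℤ,
    u t n = Sh N σ t u0 n - (σ : ℂ) / 4 *
      ∫ t' in (0:ℝ)..t,
        Sh N σ (t - t')
          (gradh N (fun m =>
            (u t' m + expDh N (σ * (2 * t' / msh N ^ 2)) (w t') m) ^ 2)) n

/-- Decoupled FPU integral equation with sign `σ`. -/
def decoupledEq (N : ℕ) (σ T : ℝ) (u0 : ℤ → ℂ) (v : ℝ → ℤ → ℂ) : Prop :=
  ∀ t ∈ Set.Icc (-T) T, ∀ n : ℤ,
    v t n = Sh N σ t u0 n - (σ : ℂ) / 4 *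
      ∫ t' in (0:ℝ)..t, Sh N σ (t - t') (gradh N (fun m => (v t' m) ^ 2)) n

/-- Fourier coefficient on `𝕋 = ℝ/2πℤ`. -/
def tF (f : ℝ → ℂ) (k : ℤ) : ℂ :=
  ((1 / Real.sqrt (2 * Real.pi) : ℝ) : ℂ) *
    ∫ x in (-Real.pi)..Real.pi, f x * eI (-(x * k))

/-- Fourier multiplier on `𝕋`. -/
def tmult (m : ℤ → ℂ) (f : ℝ → ℂ) : ℝ → ℂ := fun x =>
  ((1 / Real.sqrt (2 * Real.pi) : ℝ) : ℂ) * ∑' k : ℤ, m k * tF f k * eI (x * k)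

/-- Airy propagator `S^σ(t)`, multiplier with symbol `e^{iσtk³/24}`. -/
def airy (σ t : ℝ) : (ℝ → ℂ) → ℝ → ℂ :=
  tmult fun k => eI (σ * t * (k : ℝ) ^ 3 / 24)

/-- `∂_x` as a Fourier multiplier on `𝕋`. -/
def tderiv : (ℝ → ℂ) → ℝ → ℂ := tmult fun k => Complex.I * (k : ℂ)

/-- `L²(𝕋)` norm (computed on the Fourier side). -/
def L2T (f : ℝ → ℂ) : ℝ≥0∞ :=
  (∑' k : ℤ, ENNReal.ofReal (‖tF f k‖ ^ 2)) ^ (1/2 : ℝ)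

/-- `H^s(𝕋)` norm. -/
def HsT (s : ℝ) (f : ℝ → ℂ) : ℝ≥0∞ :=
  (∑' k : ℤ, ENNReal.ofReal ((1 + (k : ℝ) ^ 2) ^ s * ‖tF f k‖ ^ 2)) ^ (1/2 : ℝ)

/-- `L²(𝕋)` norm of the sharp frequency projection onto the set `K`. -/
def L2Tproj (K : Set ℤ) (f : ℝ → ℂ) : ℝ≥0∞ :=
  (∑' k : ℤ, ENNReal.ofReal (K.indicator (fun j => ‖tF f j‖ ^ 2) k)) ^ (1/2 : ℝ)

/-- Linear interpolation `𝓛_h` of a lattice function, as a function on `𝕋` (2π-periodic). -/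
def interp (N : ℕ) (f : ℤ → ℂ) : ℝ → ℂ := fun x =>
  f (red N ⌊x / msh N⌋) +
    (f (red N (⌊x / msh N⌋ + 1)) - f (red N ⌊x / msh N⌋)) *
      (((x - msh N * ⌊x / msh N⌋) / msh N : ℝ) : ℂ)

/-- KdV integral equation with sign `σ`. -/
def kdvEq (σ T : ℝ) (w0 : ℝ → ℂ) (w : ℝ → ℝ → ℂ) : Prop :=
  ∀ t ∈ Set.Icc (-T) T, ∀ x : ℝ,
    w t x = airy σ t w0 x - (σ : ℂ) / 4 *
      ∫ t' in (0:ℝ)..t, airy σ (t - t') (tderiv (fun y => (w t' y) ^ 2)) x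

/-- Continuity in `H^s(𝕋)` on `[-T,T]`, together with membership in `H^s`. -/
def contHsT (s T : ℝ) (w : ℝ → ℝ → ℂ) : Prop :=
  ∀ t₀ ∈ Set.Icc (-T) T, HsT s (w t₀) < ⊤ ∧
    ∀ ε : ℝ, 0 < ε → ∃ δ : ℝ, 0 < δ ∧ ∀ t ∈ Set.Icc (-T) T,
      |t - t₀| < δ → HsT s (fun x => w t x - w t₀ x) < ENNReal.ofReal ε

/-- Japanese bracket `⟨x⟩`. -/
def jap (x : ℝ) : ℝ := Real.sqrt (1 + x ^ 2)

/-- Space-time Fourier transform on `ℝ × 𝕋_h`. -/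
def stF (N : ℕ) (u : ℝ → ℤ → ℂ) (τ : ℝ) (k : ℤ) : ℂ :=
  ((msh N / (2 * Real.pi) : ℝ) : ℂ) *
    ∑ n ∈ dual N, ∫ t : ℝ, eI (-(t * τ)) * eI (-(msh N * n * k)) * u t n

/-- Bourgain norm `X^{s,b}_{h,σ}` (with sign `σ = ±1`). -/
def Xnorm (N : ℕ) (σ s b : ℝ) (u : ℝ → ℤ → ℂ) : ℝ≥0∞ :=
  (∑ k ∈ dual N, ∫⁻ τ : ℝ, ENNReal.ofReal
      (jap (k : ℝ) ^ (2 * s) * jap (τ - σ * sh N k) ^ (2 * b) * ‖stF N u τ k‖ ^ 2)) ^ (1/2 : ℝ)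

/-- `Z^s_{h,σ}` norm. -/
def Znorm (N : ℕ) (σ s : ℝ) (u : ℝ → ℤ → ℂ) : ℝ≥0∞ :=
  Xnorm N σ s (-(1/2)) u +
    (∑ k ∈ dual N, (∫⁻ τ : ℝ, ENNReal.ofReal
        (jap (k : ℝ) ^ s * (jap (τ - σ * sh N k))⁻¹ * ‖stF N u τ k‖)) ^ 2) ^ (1/2 : ℝ)

/-- `Y^s_{h,σ}` norm. -/
def Ynorm (N : ℕ) (σ s : ℝ) (u : ℝ → ℤ → ℂ) : ℝ≥0∞ :=
  Xnorm N σ s (1/2) u +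
    (∑ k ∈ dual N, (∫⁻ τ : ℝ, ENNReal.ofReal
        (jap (k : ℝ) ^ s * ‖stF N u τ k‖)) ^ 2) ^ (1/2 : ℝ)

/-- Time restricted norm `Y^{s,T}_{h,σ}` (infimum over extensions). -/
def YnormT (N : ℕ) (σ s T : ℝ) (u : ℝ → ℤ → ℂ) : ℝ≥0∞ :=
  ⨅ g : {g : ℝ → ℤ → ℂ // ∀ t ∈ Set.Icc (-T) T, ∀ n : ℤ, g t n = u t n},
    Ynorm N σ s g.1

/-- `L⁴(ℝ × 𝕋_h)` norm. -/
def L4st (N : ℕ) (u : ℝ → ℤ → ℂ) : ℝ≥0∞ :=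
  (∫⁻ t : ℝ, ENNReal.ofReal (msh N * ∑ n ∈ dual N, ‖u t n‖ ^ 4)) ^ (1/4 : ℝ)

/-- KdV resonance `Ψ²(k,k₁,k₂) = -(1/8)kk₁k₂`. -/
def Psi2 (k k₁ k₂ : ℤ) : ℝ := -(1/8 : ℝ) * (k : ℝ) * (k₁ : ℝ) * (k₂ : ℝ)

/-- KdV cubic resonance `Ψ³ = -(1/8)(a+b)(b+c)(a+c)`. -/
def Psi3 (a b c : ℤ) : ℝ :=
  -(1/8 : ℝ) * (((a + b : ℤ) : ℝ) * ((b + c : ℤ) : ℝ) * ((a + c : ℤ) : ℝ))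

/-- KdV quartic resonance. -/
def Psi4 (k₁ k₂ k₃ k₄ : ℤ) : ℝ := Psi3 (k₁ + k₂) k₃ k₄ + Psi2 (k₁ + k₂) k₁ k₂

/-- FPU resonance `Φ_h²`. -/
def Phi2 (h : ℝ) (k k₁ k₂ : ℤ) : ℝ :=
  -(8 / h ^ 3) *
    (Real.sin (h * k₁ / 4) * Real.sin (h * k₂ / 4) * Real.sin (h * k / 4))

/-- FPU cubic resonance `Φ_h³`. -/
def Phi3 (h : ℝ) (a b c : ℤ) : ℝ :=
  -(8 / h ^ 3) *
    (Real.sin (h * (a + b) / 4) * Real.sin (h * (b + c) / 4) * Real.sin (h * (a + c) / 4))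

/-- FPU quartic resonance `Φ_h⁴`. -/
def Phi4 (h : ℝ) (k₁ k₂ k₃ k₄ : ℤ) : ℝ :=
  Phi3 h (k₁ + k₂) k₃ k₄ + Phi2 h (k₁ + k₂) k₁ k₂

/-- Decoupled FPU profile equation in Fourier variables (sign `σ`), on the time set `I`. -/
def fpuProfileEq (N : ℕ) (σ : ℝ) (u0 : ℤ → ℂ) (V : ℝ → ℤ → ℂ) (I : Set ℝ) : Prop :=
  ∀ t ∈ I, ∀ k ∈ dual N,
    dF N (V t) k = dF N u0 k -
      (σ : ℂ) * Complex.I / (2 * ((msh N : ℝ) : ℂ)) * ((Real.sin (msh N * k / 2) : ℝ) : ℂ) *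
        ∫ t' in (0:ℝ)..t,
          ∑ k₁ ∈ dual N,
            (if k₁ ≠ 0 ∧ k - k₁ ≠ 0 ∧ k - k₁ ∈ dual N then
              eI (σ * t' * Phi2 (msh N) k k₁ (k - k₁)) * dF N (V t') k₁ * dF N (V t') (k - k₁)
            else 0)

/-- KdV profile equation in Fourier variables (sign `σ`), on the time set `I`;
`W t k` denotes the `k`-th Fourier coefficient of the profile at time `t`. -/
def kdvProfileEq (σ : ℝ) (w0 : ℤ → ℂ) (W : ℝ → ℤ → ℂ) (I : Set ℝ) : Prop :=
  ∀ t ∈ I, ∀ k : ℤ,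
    W t k = w0 k -
      (σ : ℂ) * Complex.I * (k : ℂ) / 4 *
        ∫ t' in (0:ℝ)..t,
          ∑' k₁ : ℤ,
            (if k₁ ≠ 0 ∧ k - k₁ ≠ 0 then
              eI (σ * t' * Psi2 k k₁ (k - k₁)) * W t' k₁ * W t' (k - k₁)
            else 0)

/-- `H^s(𝕋)` norm of a Fourier coefficient sequence (extended-real valued). -/
def HsSeq (s : ℝ) (a : ℤ → ℂ) : ℝ≥0∞ :=
  (∑' k : ℤ, ENNReal.ofReal ((1 + (k : ℝ) ^ 2) ^ s * ‖a k‖ ^ 2)) ^ (1/2 : ℝ)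

/-- `H^s(𝕋)` norm of a Fourier coefficient sequence (real valued). -/
def HsSeqR (s : ℝ) (a : ℤ → ℂ) : ℝ :=
  Real.sqrt (∑' k : ℤ, (1 + (k : ℝ) ^ 2) ^ s * ‖a k‖ ^ 2)

/-- `ℓ²(ℤ)` norm of a Fourier coefficient sequence. -/
def l2R (a : ℤ → ℂ) : ℝ := Real.sqrt (∑' k : ℤ, ‖a k‖ ^ 2)

/-- `ℓ²` norm of the projection of a coefficient sequence to the frequency set `K`. -/
def l2projR (K : Set ℤ) (a : ℤ → ℂ) : ℝ :=
  Real.sqrt (∑' k : ℤ, K.indicator (fun j => ‖a j‖ ^ 2) k)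

/-- Periodic discrete Laplacian `Δ_h` on real lattice functions. -/
def lapR (N : ℕ) (f : ℤ → ℝ) (n : ℤ) : ℝ :=
  (f (red N (n + 1)) + f (red N (n - 1)) - 2 * f n) / msh N ^ 2

/-! ### Sums of nonnegative families -/

/-- The family `f` is nonnegative with total sum at most `F`, expressed through finite partial
sums so that summability is part of the statement. -/
def SB {ι : Type*} (f : ι → ℝ) (F : ℝ) : Prop :=
  (∀ i, 0 ≤ f i) ∧ ∀ s : Finset ι, ∑ i ∈ s, f i ≤ F

theorem SB.summable {ι : Type*} {f : ι → ℝ} {F : ℝ} (h : SB f F) : Summable f :=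
  summable_of_sum_le h.1 h.2

theorem SB.tsum_le {ι : Type*} {f : ι → ℝ} {F : ℝ} (h : SB f F) : ∑' i, f i ≤ F :=
  h.summable.tsum_le_of_sum_le h.2

theorem SB.nonneg {ι : Type*} {f : ι → ℝ} {F : ℝ} (h : SB f F) : 0 ≤ F := by
  simpa using h.2 ∅

theorem SB.of_tsum {ι : Type*} {f : ι → ℝ} {F : ℝ} (h0 : ∀ i, 0 ≤ f i) (hs : Summable f)
    (hF : ∑' i, f i ≤ F) : SB f F :=
  ⟨h0, fun s => (hs.sum_le_tsum s fun i _ => h0 i).trans hF⟩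

theorem SB.mono {ι : Type*} {f g : ι → ℝ} {F G : ℝ} (h : SB g G) (h0 : ∀ i, 0 ≤ f i)
    (hfg : ∀ i, f i ≤ g i) (hF : G ≤ F) : SB f F :=
  ⟨h0, fun s => ((Finset.sum_le_sum fun i _ => hfg i).trans (h.2 s)).trans hF⟩

theorem SB.add {ι : Type*} {f g : ι → ℝ} {F G : ℝ} (hf : SB f F) (hg : SB g G) :
    SB (fun i => f i + g i) (F + G) :=
  ⟨fun i => add_nonneg (hf.1 i) (hg.1 i), fun s => by
    rw [Finset.sum_add_distrib]; exact add_le_add (hf.2 s) (hg.2 s)⟩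

theorem SB.const_mul {ι : Type*} {f : ι → ℝ} {F : ℝ} (hf : SB f F) {c : ℝ} (hc : 0 ≤ c) :
    SB (fun i => c * f i) (c * F) :=
  ⟨fun i => mul_nonneg hc (hf.1 i), fun s => by
    rw [← Finset.mul_sum]; exact mul_le_mul_of_nonneg_left (hf.2 s) hc⟩

theorem SB.comp_inj {ι κ : Type*} {f : ι → ℝ} {F : ℝ} (hf : SB f F) {e : κ → ι}
    (he : Function.Injective e) : SB (fun i => f (e i)) F :=
  ⟨fun i => hf.1 _, fun s => by
    have := hf.2 (s.map ⟨e, he⟩)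
    simpa using this⟩

/-- Cauchy–Schwarz. -/
theorem SB.cs {ι : Type*} {f g : ι → ℝ} {F G : ℝ} (hf0 : ∀ i, 0 ≤ f i) (hg0 : ∀ i, 0 ≤ g i)
    (hF : 0 ≤ F) (hG : 0 ≤ G) (hf : SB (fun i => f i ^ 2) (F ^ 2))
    (hg : SB (fun i => g i ^ 2) (G ^ 2)) : SB (fun i => f i * g i) (F * G) := by
  refine ⟨fun i => mul_nonneg (hf0 i) (hg0 i), fun s => ?_⟩
  have h := Finset.sum_mul_sq_le_sq_mul_sq s f g
  refine abs_le_of_sq_le_sq' ?_ (mul_nonneg hF hG) |>.2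
  calc _ ≤ _ := h
    _ ≤ F ^ 2 * G ^ 2 := mul_le_mul (hf.2 s) (hg.2 s)
        (Finset.sum_nonneg fun i _ => sq_nonneg _) (sq_nonneg _)
    _ = _ := by ring

theorem SB.sigma {ι κ : Type*} {f : ι × κ → ℝ} {F : ι → ℝ} {B : ℝ}
    (h : ∀ i, SB (fun j => f (i, j)) (F i)) (hF : SB F B) : SB f B := by
  classical
  refine ⟨fun p => (h p.1).1 p.2, fun s => ?_⟩
  calc ∑ p ∈ s, f p ≤ ∑ p ∈ (s.image Prod.fst) ×ˢ (s.image Prod.snd), f p := by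
        refine Finset.sum_le_sum_of_subset_of_nonneg ?_ fun p _ _ => (h p.1).1 p.2
        intro p hp
        simp only [Finset.mem_product, Finset.mem_image]
        exact ⟨⟨p, hp, rfl⟩, ⟨p, hp, rfl⟩⟩
    _ = ∑ i ∈ s.image Prod.fst, ∑ j ∈ s.image Prod.snd, f (i, j) := by
        rw [Finset.sum_product]
    _ ≤ ∑ i ∈ s.image Prod.fst, F i := Finset.sum_le_sum fun i _ => (h i).2 _
    _ ≤ B := hF.2 _

theorem SB.prod {ι κ : Type*} {f : ι → ℝ} {g : κ → ℝ} {F G : ℝ} (hf : SB f F) (hg : SB g G) :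
    SB (fun p : ι × κ => f p.1 * g p.2) (F * G) := by
  refine SB.sigma (F := fun i => f i * G) (fun i => hg.const_mul (hf.1 i)) ?_
  simpa [mul_comm] using hf.const_mul hg.nonneg

/-- A family dominated by an `SB` family is summable, with the corresponding bound. -/
theorem SB.norm_tsum {ι : Type*} {f : ι → ℂ} {g : ι → ℝ} {G : ℝ} (hg : SB g G)
    (h : ∀ i, ‖f i‖ ≤ g i) : Summable f ∧ ‖∑' i, f i‖ ≤ G :=
  ⟨Summable.of_norm_bounded hg.summable h,
    (tsum_of_norm_bounded hg.summable.hasSum h).trans hg.tsum_le⟩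

/-! ### Weights -/

/-- The bracket `1 + |n|`, comparable to `⟨n⟩`. -/
def J (n : ℤ) : ℝ := 1 + |(n : ℝ)|

theorem J_ge (n : ℤ) : 1 ≤ J n := by unfold J; linarith [abs_nonneg (n : ℝ)]

theorem J_pos (n : ℤ) : 0 < J n := lt_of_lt_of_le one_pos (J_ge n)

theorem J_neg (n : ℤ) : J (-n) = J n := by simp [J]

theorem abs_le_J (n : ℤ) : |(n : ℝ)| ≤ J n := by unfold J; linarith

theorem J_le_two_abs {n : ℤ} (hn : n ≠ 0) : J n ≤ 2 * |(n : ℝ)| := by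
  have : (1 : ℝ) ≤ |(n : ℝ)| := by exact_mod_cast Int.one_le_abs hn
  unfold J; linarith

theorem J_add_le (m n : ℤ) : J (m + n) ≤ J m + J n := by
  unfold J; push_cast; linarith [abs_add_le (m : ℝ) n]

theorem J_add_le_mul (m n : ℤ) : J (m + n) ≤ J m * J n := by
  unfold J; push_cast
  nlinarith [abs_add_le (m : ℝ) n, abs_nonneg (m : ℝ), abs_nonneg (n : ℝ)]

/-- The square-summing weight `(1 + |n|)⁻²`. -/
def gw (n : ℤ) : ℝ := ((J n) ^ 2)⁻¹

theorem gw_pos (n : ℤ) : 0 < gw n := inv_pos.2 (pow_pos (J_pos n) 2)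

theorem gw_le_one (n : ℤ) : gw n ≤ 1 := inv_le_one_of_one_le₀ (one_le_pow₀ (J_ge n))

theorem gw_neg (n : ℤ) : gw (-n) = gw n := by simp [gw, J_neg]

theorem gw_summable : Summable gw := by
  have h : Summable fun n : ℤ => 1 / (n : ℝ) ^ 2 := Real.summable_one_div_int_pow.2 one_lt_two
  have h0 : Summable fun n : ℤ => if n = 0 then (1 : ℝ) else 0 :=
    summable_of_ne_finset_zero (s := {0}) (by intro b hb; simp at hb; simp [hb])
  refine Summable.of_nonneg_of_le (fun n => (gw_pos n).le) (fun n => ?_) (h.add h0)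
  by_cases hn : n = 0
  · simp [hn, gw, J]
  · have h1 : (0 : ℝ) < |(n : ℝ)| := abs_pos.2 (by exact_mod_cast hn)
    simp only [hn, if_false, add_zero, one_div, gw]
    refine inv_anti₀ (by positivity) ?_
    rw [← sq_abs]
    exact pow_le_pow_left₀ h1.le (abs_le_J n) 2

/-- The total mass of `gw`. -/
def Cg : ℝ := ∑' n, gw n

theorem gw_SB : SB gw Cg := SB.of_tsum (fun n => (gw_pos n).le) gw_summable le_rfl

theorem Cg_nonneg : 0 ≤ Cg := gw_SB.nonneg

theorem inj_sub_left (k : ℤ) : Function.Injective fun j : ℤ => k - j := fun a b h => by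
  simpa using h

theorem inj_add_left (k : ℤ) : Function.Injective fun j : ℤ => k + j := fun a b h => by
  simpa using h

/-- `gw` is subconvolutive: `gw * gw ≲ gw`. -/
theorem gw_conv (k : ℤ) : SB (fun j => gw j * gw (k - j)) (4 * Cg * gw k) := by
  have h : SB (fun j => (2 * gw k) * (gw j + gw (k - j))) ((2 * gw k) * (Cg + Cg)) :=
    (gw_SB.add (gw_SB.comp_inj (inj_sub_left k))).const_mul (by have := gw_pos k; positivity)
  refine h.mono (fun j => (mul_pos (gw_pos _) (gw_pos _)).le) (fun j => ?_) (le_of_eq (by ring))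
  have h1 : J k ≤ J j + J (k - j) := by
    have := J_add_le j (k - j); simpa using this
  have a := J_pos j
  have b := J_pos (k - j)
  have c := J_pos k
  unfold gw
  have h2 : J k ^ 2 ≤ 2 * (J j ^ 2 + J (k - j) ^ 2) := by
    nlinarith [sq_nonneg (J j - J (k - j))]
  rw [show (J j ^ 2)⁻¹ * (J (k - j) ^ 2)⁻¹ =
    (J k ^ 2) * ((J k ^ 2)⁻¹ * ((J j ^ 2)⁻¹ * (J (k - j) ^ 2)⁻¹)) by field_simp]
  calc _ ≤ (2 * (J j ^ 2 + J (k - j) ^ 2)) *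
      ((J k ^ 2)⁻¹ * ((J j ^ 2)⁻¹ * (J (k - j) ^ 2)⁻¹)) := by gcongr
    _ = _ := by field_simp; ring

/-- Dominating weight for the cubic and quartic normal form terms at output frequency `k`:
with `k₁ + k₃ + k₄ = k` and pair sums `a = k₁+k₃`, `b = k₃+k₄`, `c = k₁+k₄`, the sum of
`1/⟨a⟩⟨b⟩⟨c⟩`, `1/⟨k₁⟩⟨a⟩⟨b⟩` and `1/⟨k₁⟩⟨b⟩⟨c⟩`. -/
def wt (k : ℤ) (p : ℤ × ℤ) : ℝ :=
  (J (p.1 + p.2))⁻¹ * (J (k - p.1))⁻¹ * (J (k - p.2))⁻¹ +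
  (J p.1)⁻¹ * (J (p.1 + p.2))⁻¹ * (J (k - p.1))⁻¹ +
  (J p.1)⁻¹ * (J (k - p.1))⁻¹ * (J (k - p.2))⁻¹

theorem Jinv_pos (n : ℤ) : 0 < (J n)⁻¹ := inv_pos.2 (J_pos n)

theorem wt_pos (k : ℤ) (p : ℤ × ℤ) : 0 < wt k p := by
  have := Jinv_pos
  unfold wt
  have := this (p.1 + p.2); have := Jinv_pos (k - p.1); have := Jinv_pos (k - p.2)
  have := Jinv_pos p.1
  positivity

theorem gw_two_mul_le (k : ℤ) : gw (2 * k) ≤ gw k := by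
  unfold gw
  refine inv_anti₀ (pow_pos (J_pos _) 2) (pow_le_pow_left₀ (J_pos _).le ?_ 2)
  unfold J; push_cast; rw [abs_mul, abs_two]; linarith [abs_nonneg (k : ℝ)]

/-- Constant in the square-sum bound for `wt`. -/
def Cw : ℝ := Real.sqrt (3 * ((4 * Cg) ^ 2 + 2 * (4 * Cg * Cg)))

theorem Cw_nonneg : 0 ≤ Cw := Real.sqrt_nonneg _

theorem Cw_sq : Cw ^ 2 = 3 * ((4 * Cg) ^ 2 + 2 * (4 * Cg * Cg)) :=
  Real.sq_sqrt (by have := Cg_nonneg; positivity)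

theorem wt_sq (k : ℤ) : SB (fun p => wt k p ^ 2) ((Cw * (J k)⁻¹) ^ 2) := by
  have hA : SB (fun p : ℤ × ℤ => gw (p.1 + p.2) * gw (k - p.1) * gw (k - p.2))
      ((4 * Cg) ^ 2 * gw k) := by
    refine SB.sigma (F := fun i => (4 * Cg) * (gw (k + i) * gw (k - i))) (fun i => ?_) ?_
    · have h := ((gw_conv (k + i)).comp_inj (inj_add_left i)).const_mul (gw_pos (k - i)).le
      refine h.mono (fun j => ?_) (fun j => le_of_eq ?_) (le_of_eq (by ring))
      · have := gw_pos (i + j); have := gw_pos (k - i); have := gw_pos (k - j); positivity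
      · simp only [show k + i - (i + j) = k - j by ring]; ring
    · have h := ((gw_conv (2 * k)).comp_inj (inj_add_left k)).const_mul
        (show (0 : ℝ) ≤ 4 * Cg by have := Cg_nonneg; positivity)
      refine h.mono (fun j => ?_) (fun j => le_of_eq ?_) ?_
      · have := gw_pos (k + j); have := gw_pos (k - j); have := Cg_nonneg; positivity
      · simp only [show 2 * k - (k + j) = k - j by ring]
      · have := mul_le_mul_of_nonneg_left (gw_two_mul_le k)
          (show 0 ≤ (4 * Cg) ^ 2 by positivity)
        linarith
  have hB : SB (fun p : ℤ × ℤ => gw p.1 * gw (p.1 + p.2) * gw (k - p.1))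
      (4 * Cg * Cg * gw k) := by
    refine SB.sigma (F := fun i => Cg * (gw i * gw (k - i))) (fun i => ?_) ?_
    · have h := (gw_SB.comp_inj (inj_add_left i)).const_mul
        (mul_nonneg (gw_pos i).le (gw_pos (k - i)).le)
      refine h.mono (fun j => ?_) (fun j => le_of_eq ?_) (le_of_eq (by ring))
      · have := gw_pos (i + j); have := gw_pos (k - i); have := gw_pos i; positivity
      · ring
    · exact ((gw_conv k).const_mul Cg_nonneg).mono
        (fun j => mul_nonneg Cg_nonneg (mul_nonneg (gw_pos _).le (gw_pos _).le))
        (fun j => le_rfl) (le_of_eq (by ring))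
  have hC : SB (fun p : ℤ × ℤ => gw p.1 * gw (k - p.1) * gw (k - p.2))
      (4 * Cg * Cg * gw k) := by
    refine SB.sigma (F := fun i => Cg * (gw i * gw (k - i))) (fun i => ?_) ?_
    · have h := (gw_SB.comp_inj (inj_sub_left k)).const_mul
        (mul_nonneg (gw_pos i).le (gw_pos (k - i)).le)
      refine h.mono (fun j => ?_) (fun j => le_of_eq ?_) (le_of_eq (by ring))
      · have := gw_pos (k - j); have := gw_pos (k - i); have := gw_pos i; positivity
      · ring
    · exact ((gw_conv k).const_mul Cg_nonneg).mono
        (fun j => mul_nonneg Cg_nonneg (mul_nonneg (gw_pos _).le (gw_pos _).le))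
        (fun j => le_rfl) (le_of_eq (by ring))
  refine (((hA.add hB).add hC).const_mul (show (0 : ℝ) ≤ 3 by norm_num)).mono
    (fun p => sq_nonneg _) (fun p => ?_) ?_
  · have h3 : ∀ x y z : ℝ, (x + y + z) ^ 2 ≤ 3 * (x ^ 2 + y ^ 2 + z ^ 2) := fun x y z => by
      nlinarith [sq_nonneg (x - y), sq_nonneg (y - z), sq_nonneg (x - z)]
    refine (h3 _ _ _).trans (le_of_eq ?_)
    simp only [gw, mul_pow, inv_pow]
  · rw [show (Cw * (J k)⁻¹) ^ 2 = Cw ^ 2 * gw k by unfold gw; rw [mul_pow, inv_pow], Cw_sq]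
    exact le_of_eq (by ring)

/-! ### Multilinear sums -/

/-- `x` is a nonnegative sequence with `ℓ²` norm at most `X`. -/
def Bd (x : ℤ → ℝ) (X : ℝ) : Prop :=
  0 ≤ X ∧ (∀ k, 0 ≤ x k) ∧ SB (fun k => x k ^ 2) (X ^ 2)

/-- `x` is a nonnegative sequence with `ℓ^∞` norm at most `X`. -/
def Sp (x : ℤ → ℝ) (X : ℝ) : Prop := 0 ≤ X ∧ (∀ k, 0 ≤ x k) ∧ ∀ k, x k ≤ X

theorem Bd.sp {x : ℤ → ℝ} {X : ℝ} (h : Bd x X) : Sp x X :=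
  ⟨h.1, h.2.1, fun k => abs_le_of_sq_le_sq' (by simpa using h.2.2.2 {k}) h.1 |>.2⟩

theorem Bd.mono {x y : ℤ → ℝ} {X Y : ℝ} (h : Bd y Y) (h0 : ∀ k, 0 ≤ x k)
    (hxy : ∀ k, x k ≤ y k) (hY : Y ≤ X) : Bd x X :=
  ⟨h.1.trans hY, h0, h.2.2.mono (fun _ => sq_nonneg _)
    (fun k => pow_le_pow_left₀ (h0 k) (hxy k) 2) (pow_le_pow_left₀ h.1 hY 2)⟩

theorem Bd.const_mul {x : ℤ → ℝ} {X c : ℝ} (h : Bd x X) (hc : 0 ≤ c) :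
    Bd (fun k => c * x k) (c * X) :=
  ⟨mul_nonneg hc h.1, fun k => mul_nonneg hc (h.2.1 k), by
    simpa only [mul_pow] using h.2.2.const_mul (sq_nonneg c)⟩

theorem Bd.add {x y : ℤ → ℝ} {X Y : ℝ} (hx : Bd x X) (hy : Bd y Y) :
    Bd (fun k => x k + y k) (X + Y) := by
  refine ⟨add_nonneg hx.1 hy.1, fun k => add_nonneg (hx.2.1 k) (hy.2.1 k),
    fun _ => sq_nonneg _, fun s => ?_⟩
  have hc := (SB.cs hx.2.1 hy.2.1 hx.1 hy.1 hx.2.2 hy.2.2).2 s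
  have h1 := hx.2.2.2 s
  have h2 := hy.2.2.2 s
  have : ∑ i ∈ s, (x i + y i) ^ 2 =
      ∑ i ∈ s, x i ^ 2 + 2 * ∑ i ∈ s, x i * y i + ∑ i ∈ s, y i ^ 2 := by
    rw [Finset.mul_sum, ← Finset.sum_add_distrib, ← Finset.sum_add_distrib]
    exact Finset.sum_congr rfl fun i _ => by ring
  rw [this]; nlinarith

theorem Bd.conv {x y : ℤ → ℝ} {X Y : ℝ} (hx : Bd x X) (hy : Bd y Y) (k : ℤ) :
    SB (fun j => x j * y (k - j)) (X * Y) :=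
  SB.cs hx.2.1 (fun _ => hy.2.1 _) hx.1 hy.1 hx.2.2 (hy.2.2.comp_inj (inj_sub_left k))

/-- Cubic product at output frequency `k`. -/
def pr (k : ℤ) (x y z : ℤ → ℝ) (p : ℤ × ℤ) : ℝ := x p.1 * y p.2 * z (k - p.1 - p.2)

theorem pr_sq1 {x y z : ℤ → ℝ} {X Y Z : ℝ} (hx : Sp x X) (hy : Bd y Y) (hz : Bd z Z) (k : ℤ) :
    SB (fun p => pr k x y z p ^ 2) ((X * Y * Z) ^ 2) := by
  have hi : Function.Injective fun p : ℤ × ℤ => (p.2, k - p.1 - p.2) := by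
    rintro ⟨a, b⟩ ⟨c, d⟩ h
    simp only [Prod.mk.injEq] at h ⊢
    omega
  have h := ((hy.2.2.prod hz.2.2).comp_inj hi).const_mul (sq_nonneg X)
  refine h.mono (fun _ => sq_nonneg _) (fun p => ?_) (le_of_eq (by ring))
  have h2 : x p.1 ^ 2 ≤ X ^ 2 := pow_le_pow_left₀ (hx.2.1 _) (hx.2.2 _) 2
  calc pr k x y z p ^ 2 = x p.1 ^ 2 * (y p.2 ^ 2 * z (k - p.1 - p.2) ^ 2) := by
        unfold pr; ring
    _ ≤ _ := mul_le_mul_of_nonneg_right h2 (by positivity)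

theorem pr_sq2 {x y z : ℤ → ℝ} {X Y Z : ℝ} (hx : Bd x X) (hy : Sp y Y) (hz : Bd z Z) (k : ℤ) :
    SB (fun p => pr k x y z p ^ 2) ((X * Y * Z) ^ 2) := by
  have hi : Function.Injective fun p : ℤ × ℤ => (p.1, k - p.1 - p.2) := by
    rintro ⟨a, b⟩ ⟨c, d⟩ h
    simp only [Prod.mk.injEq] at h ⊢
    omega
  have h := ((hx.2.2.prod hz.2.2).comp_inj hi).const_mul (sq_nonneg Y)
  refine h.mono (fun _ => sq_nonneg _) (fun p => ?_) (le_of_eq (by ring))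
  have h2 : y p.2 ^ 2 ≤ Y ^ 2 := pow_le_pow_left₀ (hy.2.1 _) (hy.2.2 _) 2
  calc pr k x y z p ^ 2 = y p.2 ^ 2 * (x p.1 ^ 2 * z (k - p.1 - p.2) ^ 2) := by
        unfold pr; ring
    _ ≤ _ := mul_le_mul_of_nonneg_right h2 (by positivity)

theorem pr_sq3 {x y z : ℤ → ℝ} {X Y Z : ℝ} (hx : Bd x X) (hy : Bd y Y) (hz : Sp z Z) (k : ℤ) :
    SB (fun p => pr k x y z p ^ 2) ((X * Y * Z) ^ 2) := by
  have h := (hx.2.2.prod hy.2.2).const_mul (sq_nonneg Z)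
  refine h.mono (fun _ => sq_nonneg _) (fun p => ?_) (le_of_eq (by ring))
  have h2 : z (k - p.1 - p.2) ^ 2 ≤ Z ^ 2 := pow_le_pow_left₀ (hz.2.1 _) (hz.2.2 _) 2
  calc pr k x y z p ^ 2 = z (k - p.1 - p.2) ^ 2 * (x p.1 ^ 2 * y p.2 ^ 2) := by
        unfold pr; ring
    _ ≤ _ := mul_le_mul_of_nonneg_right h2 (by positivity)

/-- The key pointwise trilinear bound: since the weight is square summable with norm `≲ 1/⟨k⟩`,
it suffices that two of the three factors are in `ℓ²` and the third is bounded. -/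
theorem wt_pr {x y z : ℤ → ℝ} {P : ℝ} {k : ℤ} (hx : ∀ k, 0 ≤ x k) (hy : ∀ k, 0 ≤ y k)
    (hz : ∀ k, 0 ≤ z k) (hP : 0 ≤ P) (h : SB (fun p => pr k x y z p ^ 2) (P ^ 2)) :
    SB (fun p => wt k p * pr k x y z p) (Cw * (J k)⁻¹ * P) :=
  SB.cs (fun p => (wt_pos k p).le)
    (fun _ => mul_nonneg (mul_nonneg (hx _) (hy _)) (hz _))
    (mul_nonneg Cw_nonneg (Jinv_pos k).le) hP (wt_sq k) h

theorem Jinv_sq (n : ℤ) : ((J n)⁻¹) ^ 2 = gw n := by simp [gw]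

/-- Absolute convergence of the cubic sum produced by the first normal form step. -/
theorem pr_Jinv {x y z : ℤ → ℝ} {X Y Z : ℝ} (hx : Bd x X) (hy : Bd y Y) (hz : Bd z Z) (k : ℤ) :
    SB (fun p => (J p.1)⁻¹ * pr k x y z p) (Real.sqrt Cg * Y * (X * Z)) := by
  have hi : Function.Injective fun p : ℤ × ℤ => (p.1, k - p.1 - p.2) := by
    rintro ⟨a, b⟩ ⟨c, d⟩ h
    simp only [Prod.mk.injEq] at h ⊢
    omega
  have h1 : SB (fun p : ℤ × ℤ => ((J p.1)⁻¹ * y p.2) ^ 2) ((Real.sqrt Cg * Y) ^ 2) := by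
    simp only [mul_pow, Real.sq_sqrt Cg_nonneg, Jinv_sq]
    exact gw_SB.prod hy.2.2
  have h2 : SB (fun p : ℤ × ℤ => (x p.1 * z (k - p.1 - p.2)) ^ 2) ((X * Z) ^ 2) := by
    simp only [mul_pow]
    exact (hx.2.2.prod hz.2.2).comp_inj hi
  have h := SB.cs (fun p : ℤ × ℤ => mul_nonneg (Jinv_pos p.1).le (hy.2.1 p.2))
    (fun p => mul_nonneg (hx.2.1 _) (hz.2.1 _)) (mul_nonneg (Real.sqrt_nonneg _) hy.1)
    (mul_nonneg hx.1 hz.1) h1 h2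
  refine h.mono (fun p => ?_) (fun p => le_of_eq ?_) le_rfl
  · exact mul_nonneg (Jinv_pos p.1).le
      (mul_nonneg (mul_nonneg (hx.2.1 _) (hy.2.1 _)) (hz.2.1 _))
  · unfold pr; ring

/-- Resonant pairs `(k₁, k₃)`: `k₁ + k₃ = 0` or `k₁ + k₄ = 0` (that is, `k₃ = k`). -/
def resP (k : ℤ) (p : ℤ × ℤ) : Prop := p.1 + p.2 = 0 ∨ k - p.2 = 0

open Classical in
/-- On resonant pairs the two other inputs are paired by Cauchy–Schwarz, and the resonant input
keeps the output frequency, so the sum is pointwise bounded without any weight. -/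
theorem pr_res {x y z : ℤ → ℝ} {X Y Z : ℝ} (hx : Bd x X) (hy : Bd y Y) (hz : Bd z Z) (k : ℤ) :
    SB (fun p => if resP k p then pr k x y z p else 0) (X * Y * z k + X * Z * y k) := by
  have h0 : ∀ p, 0 ≤ pr k x y z p := fun p =>
    mul_nonneg (mul_nonneg (hx.2.1 _) (hy.2.1 _)) (hz.2.1 _)
  have hsing : ∀ (j : ℤ) (a : ℝ), 0 ≤ a → SB (fun i : ℤ => if i = j then a else 0) a := by
    intro j a ha
    refine ⟨fun i => by dsimp only; split_ifs <;> simp [ha], fun s => ?_⟩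
    rw [Finset.sum_ite_eq']
    split_ifs <;> simp [ha]
  have h1 : SB (fun p : ℤ × ℤ => if p.2 = -p.1 then pr k x y z p else 0) (X * Y * z k) := by
    refine SB.sigma (F := fun i => z k * (x i * y (0 - i))) (fun i => ?_) ?_
    · refine (hsing (-i) (z k * (x i * y (0 - i))) ?_).mono (fun j => ?_) (fun j => ?_) le_rfl
      · exact mul_nonneg (hz.2.1 _) (mul_nonneg (hx.2.1 _) (hy.2.1 _))
      · dsimp only; split_ifs <;> simp [h0]
      · dsimp only
        split_ifs with h
        · subst h; unfold pr
          rw [show k - i - -i = k by ring, zero_sub]; apply le_of_eq; ring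
        · exact le_rfl
    · refine ((hx.conv hy 0).const_mul (hz.2.1 k)).mono (fun i => ?_) (fun i => le_rfl)
        (le_of_eq (by ring))
      exact mul_nonneg (hz.2.1 _) (mul_nonneg (hx.2.1 _) (hy.2.1 _))
  have h2 : SB (fun p : ℤ × ℤ => if p.2 = k then pr k x y z p else 0) (X * Z * y k) := by
    refine SB.sigma (F := fun i => y k * (x i * z (0 - i))) (fun i => ?_) ?_
    · refine (hsing k (y k * (x i * z (0 - i))) ?_).mono (fun j => ?_) (fun j => ?_) le_rfl
      · exact mul_nonneg (hy.2.1 _) (mul_nonneg (hx.2.1 _) (hz.2.1 _))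
      · dsimp only; split_ifs <;> simp [h0]
      · dsimp only
        split_ifs with h
        · subst h; unfold pr
          rw [show j - i - j = 0 - i by ring]; apply le_of_eq; ring
        · exact le_rfl
    · refine ((hx.conv hz 0).const_mul (hy.2.1 k)).mono (fun i => ?_) (fun i => le_rfl)
        (le_of_eq (by ring))
      exact mul_nonneg (hy.2.1 _) (mul_nonneg (hx.2.1 _) (hz.2.1 _))
  refine (h1.add h2).mono (fun p => by split_ifs <;> simp [h0]) (fun p => ?_) le_rfl
  have := h0 p
  unfold resP
  split_ifs with a b c d e f <;> first | linarith | (exfalso; omega)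

/-! ### Term-by-term integration -/

/-- Fundamental theorem of calculus for a countable series of functions whose derivatives are
absolutely summable, uniformly in time. -/
theorem ftc_tsum {ι : Type*} [Countable ι] {f f' : ι → ℝ → ℂ} {t0 t1 B : ℝ} (h01 : t0 ≤ t1)
    (hc : ∀ i, ContinuousOn (f i) (Set.Icc t0 t1))
    (hd : ∀ i, ∀ t ∈ Set.Ioo t0 t1, HasDerivAt (f i) (f' i t) t)
    (hc' : ∀ i, ContinuousOn (f' i) (Set.Icc t0 t1))
    (hB : ∀ t ∈ Set.Icc t0 t1, SB (fun i => ‖f' i t‖) B)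
    (hs0 : Summable fun i => f i t0) (hs1 : Summable fun i => f i t1) :
    IntervalIntegrable (fun t => ∑' i, f' i t) volume t0 t1 ∧
      ∑' i, f i t1 - ∑' i, f i t0 = ∫ t in t0..t1, ∑' i, f' i t := by
  have hii : ∀ i, IntervalIntegrable (f' i) volume t0 t1 := fun i =>
    ContinuousOn.intervalIntegrable (by rw [Set.uIcc_of_le h01]; exact hc' i)
  have hI : ∀ i, Integrable (f' i) (volume.restrict (Set.Ioc t0 t1)) := fun i =>
    (intervalIntegrable_iff_integrableOn_Ioc_of_le h01).1 (hii i)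
  have hae : ∀ᵐ t ∂(volume.restrict (Set.Ioc t0 t1)), t ∈ Set.Icc t0 t1 := by
    filter_upwards [ae_restrict_mem measurableSet_Ioc] with t ht
    exact Set.Ioc_subset_Icc_self ht
  have hsum : Summable fun i => ∫ t in Set.Ioc t0 t1, ‖f' i t‖ := by
    refine summable_of_sum_le (c := (t1 - t0) * B)
      (fun i => integral_nonneg fun _ => norm_nonneg _) fun s => ?_
    rw [← integral_finsetSum _ fun i _ => (hI i).norm]
    calc ∫ t in Set.Ioc t0 t1, ∑ i ∈ s, ‖f' i t‖ ≤ ∫ t in Set.Ioc t0 t1, B := by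
          refine integral_mono_ae (integrable_finsetSum _ fun i _ => (hI i).norm)
            (integrable_const _) ?_
          filter_upwards [hae] with t ht using (hB t ht).2 s
      _ = (t1 - t0) * B := by simp [h01]
  have hfs := hasSum_integral_of_summable_integral_norm hI hsum
  have hbd : ∀ᵐ t ∂(volume.restrict (Set.Ioc t0 t1)), ‖∑' i, f' i t‖ ≤ B := by
    filter_upwards [hae] with t ht
    exact ((hB t ht).norm_tsum fun i => le_rfl).2
  have hmeas : AEStronglyMeasurable (fun t => ∑' i, f' i t)
      (volume.restrict (Set.Ioc t0 t1)) := by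
    refine aestronglyMeasurable_of_tendsto_ae (u := Filter.atTop)
      (f := fun (s : Finset ι) t => ∑ i ∈ s, f' i t) ?_ ?_
    · intro s
      exact (integrable_finsetSum s fun i _ => hI i).aestronglyMeasurable
    · filter_upwards [hae] with t ht
      exact ((hB t ht).norm_tsum fun i => le_rfl).1.hasSum
  have hint : IntervalIntegrable (fun t => ∑' i, f' i t) volume t0 t1 := by
    rw [intervalIntegrable_iff_integrableOn_Ioc_of_le h01]
    exact (integrable_const B).mono' hmeas hbd
  refine ⟨hint, ?_⟩
  have hft : ∀ i, ∫ t in Set.Ioc t0 t1, f' i t = f i t1 - f i t0 := fun i => by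
    rw [← intervalIntegral.integral_of_le h01]
    exact intervalIntegral.integral_eq_sub_of_hasDerivAt_of_le h01 (hc i) (hd i) (hii i)
  rw [intervalIntegral.integral_of_le h01, ← hs1.tsum_sub hs0, ← hfs.tsum_eq]
  exact tsum_congr fun i => (hft i).symm

/-! ### The abstract quadratic system -/

theorem eI_norm (x : ℝ) : ‖eI x‖ = 1 := by
  unfold eI; rw [mul_comm]; exact Complex.norm_exp_ofReal_mul_I x

theorem eI_add (x y : ℝ) : eI (x + y) = eI x * eI y := by
  unfold eI; rw [← Complex.exp_add]; push_cast; ring_nf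

theorem eI_zero : eI 0 = 1 := by simp [eI]

theorem eI_hasDerivAt (a t : ℝ) :
    HasDerivAt (fun t : ℝ => eI (t * a)) (Complex.I * a * eI (t * a)) t := by
  unfold eI
  have h : HasDerivAt (fun t : ℝ => Complex.I * ((t * a : ℝ) : ℂ)) (Complex.I * a) t := by
    have := ((hasDerivAt_id t).mul_const a).ofReal_comp.const_mul Complex.I
    simpa using this
  have := h.cexp
  rwa [mul_comm] at this

theorem eI_continuous (a : ℝ) : Continuous fun t : ℝ => eI (t * a) :=
  continuous_iff_continuousAt.2 fun t => (eI_hasDerivAt a t).continuousAt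

/-- Bilinear Fourier multiplier with symbol `μ`, at output frequency `k`. -/
def Bi (μ : ℤ → ℂ) (x y : ℤ → ℂ) (k : ℤ) : ℂ := ∑' j, μ j * (x j * y (k - j))

/-- Complex trilinear product at output frequency `k`. -/
def trip (k : ℤ) (x y z : ℤ → ℂ) (p : ℤ × ℤ) : ℂ := x p.1 * y p.2 * z (k - p.1 - p.2)

/-- Trilinear Fourier multiplier with symbol `μ`, at output frequency `k`. -/
def Tr (μ : ℤ × ℤ → ℂ) (x y z : ℤ → ℂ) (k : ℤ) : ℂ := ∑' p, μ p * trip k x y z p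

/-- Quadratic resonance function. -/
def ph2 (S : ℤ → ℝ) (i j : ℤ) : ℝ := -(1/8) * (S (i + j) * S i * S j)

/-- Cubic resonance function, in the variables `k` and `p = (k₁, k₃)`, with
`k₄ = k - k₁ - k₃`; the arguments of `S` are the pair sums `k₁+k₃`, `k₃+k₄`, `k₁+k₄`. -/
def ph3 (S : ℤ → ℝ) (k : ℤ) (p : ℤ × ℤ) : ℝ :=
  -(1/8) * (S (p.1 + p.2) * S (k - p.1) * S (k - p.2))

/-- Symbol of the derivative in front of the nonlinearity. -/
def qq (S c : ℤ → ℝ) (k : ℤ) : ℝ := S k * c k / 4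

/-- Symbol of the quadratic boundary term. -/
def m2 (S c : ℤ → ℝ) (k j : ℤ) : ℝ := 2 * c k / (S j * S (k - j))

/-- Symbol of the cubic term after one normal form step. -/
def m3 (S c : ℤ → ℝ) (k : ℤ) (p : ℤ × ℤ) : ℝ := 2 * m2 S c k p.1 * qq S c (k - p.1)

/-- Symbol of the cubic boundary term. It vanishes at resonant pairs because `x / 0 = 0`. -/
def m4 (S c : ℤ → ℝ) (k : ℤ) (p : ℤ × ℤ) : ℝ :=
  -8 * (c k * c (k - p.1)) / (S p.1 * S (p.1 + p.2) * S (k - p.1) * S (k - p.2))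

/-- Oscillating factor of the quadratic terms. -/
def e2 (S : ℤ → ℝ) (σ t : ℝ) (k j : ℤ) : ℂ := eI (t * (σ * ph2 S j (k - j)))

/-- Oscillating factor of the cubic and quartic terms. -/
def e3 (S : ℤ → ℝ) (σ t : ℝ) (k : ℤ) (p : ℤ × ℤ) : ℂ := eI (t * (σ * ph3 S k p))

/-- The quadratic nonlinearity of the profile equation. -/
def GG (S : ℤ → ℝ) (σ t : ℝ) (x : ℤ → ℂ) (k : ℤ) : ℂ := Bi (e2 S σ t k) x x k

/-- Quadratic boundary term. -/
def B2 (S c : ℤ → ℝ) (σ t : ℝ) (x : ℤ → ℂ) (k : ℤ) : ℂ :=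
  Bi (fun j => (m2 S c k j : ℂ) * e2 S σ t k j) x x k

/-- Cubic boundary term. -/
def B3 (S c : ℤ → ℝ) (σ t : ℝ) (x : ℤ → ℂ) (k : ℤ) : ℂ :=
  Tr (fun p => (m4 S c k p : ℂ) * e3 S σ t k p) x x x k

open Classical in
/-- Cubic resonant term. -/
def RR (S c : ℤ → ℝ) (x : ℤ → ℂ) (k : ℤ) : ℂ :=
  Tr (fun p => ((if resP k p then m3 S c k p else 0 : ℝ) : ℂ)) x x x k

/-- Quartic terms: the nonlinearity is inserted in the first, second or third slot of the cubic
boundary term. -/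
def QQ (S c : ℤ → ℝ) (σ t : ℝ) (x : ℤ → ℂ) (k : ℤ) : ℂ :=
  Tr (fun p => ((m4 S c k p * qq S c p.1 : ℝ) : ℂ) * e3 S σ t k p) (GG S σ t x) x x k +
  Tr (fun p => ((m4 S c k p * qq S c p.2 : ℝ) : ℂ) * e3 S σ t k p) x (GG S σ t x) x k +
  Tr (fun p => ((m4 S c k p * qq S c (k - p.1 - p.2) : ℝ) : ℂ) * e3 S σ t k p)
    x x (GG S σ t x) k

/-- Structural assumptions on the symbols: `S n` is comparable to `n`, `c` is bounded by `1`, and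
the resonance function factorises for input frequencies in `D`. -/
structure Symb (S c : ℤ → ℝ) (D : Set ℤ) : Prop where
  lo : ∀ n : ℤ, |(n : ℝ)| / 2 ≤ |S n|
  hi : ∀ n : ℤ, |S n| ≤ |(n : ℝ)|
  c1 : ∀ n, |c n| ≤ 1
  idt : ∀ k₁ ∈ D, ∀ k₃ ∈ D, ∀ k₄ ∈ D, c (k₁ + k₃ + k₄) ≠ 0 →
    S (k₁ + k₃ + k₄) * S k₁ + S k₃ * S k₄ = S (k₁ + k₃) * S (k₁ + k₄)

/-- `X` is a mean-zero solution of the profile equation in `C([0,T]; ℓ²)`, supported on `D`. -/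
structure Sol (S c : ℤ → ℝ) (D : Set ℤ) (σ T : ℝ) (X : ℝ → ℤ → ℂ) : Prop where
  symb : Symb S c D
  sg : |σ| = 1
  zero : ∀ t ∈ Set.Icc 0 T, X t 0 = 0
  off : ∀ t ∈ Set.Icc 0 T, ∀ k ∉ D, X t k = 0
  bdd : ∃ B, ∀ t ∈ Set.Icc 0 T, Bd (fun k => ‖X t k‖) B
  cont : ∀ t₀ ∈ Set.Icc 0 T, ∀ ε > 0, ∃ δ > 0, ∀ t ∈ Set.Icc 0 T, |t - t₀| < δ →
    Bd (fun k => ‖X t k - X t₀ k‖) ε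
  eq : ∀ t ∈ Set.Icc 0 T, ∀ k, X t k = X 0 k -
    Complex.I * σ * qq S c k * ∫ τ in (0:ℝ)..t, GG S σ τ (X τ) k

section symbols

variable {S c : ℤ → ℝ} {D : Set ℤ}

theorem Symb.zero (h : Symb S c D) : S 0 = 0 := by
  have := h.hi 0; simpa using this

theorem Symb.ne (h : Symb S c D) {n : ℤ} (hn : n ≠ 0) : S n ≠ 0 := by
  have := h.lo n
  have h1 : (0 : ℝ) < |(n : ℝ)| := abs_pos.2 (by exact_mod_cast hn)
  exact abs_pos.1 (by linarith)

theorem Symb.inv_le (h : Symb S c D) (n : ℤ) : |(S n)⁻¹| ≤ 4 * (J n)⁻¹ := by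
  by_cases hn : n = 0
  · subst hn; simp [h.zero, J]
  · have h1 := h.lo n
    have h2 := J_le_two_abs hn
    have h3 := J_pos n
    rw [abs_inv, ← div_eq_mul_inv, inv_eq_one_div, div_le_div_iff₀ (by linarith) h3]
    linarith

theorem Symb.le_J (h : Symb S c D) (n : ℤ) : |S n| ≤ J n := (h.hi n).trans (abs_le_J n)

theorem Symb.inv_mul (_ : Symb S c D) (n : ℤ) : |(S n)⁻¹ * S n| ≤ 1 := by
  by_cases hn : S n = 0
  · simp [hn]
  · rw [inv_mul_cancel₀ hn]; simp

theorem m2_eq (S c : ℤ → ℝ) (k j : ℤ) :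
    m2 S c k j = 2 * c k * (S j)⁻¹ * (S (k - j))⁻¹ := by
  unfold m2; rw [div_eq_mul_inv, mul_inv]; ring

theorem m4_eq (S c : ℤ → ℝ) (k : ℤ) (p : ℤ × ℤ) :
    m4 S c k p = -8 * (c k * c (k - p.1)) * (S p.1)⁻¹ * (S (p.1 + p.2))⁻¹ * (S (k - p.1))⁻¹ *
      (S (k - p.2))⁻¹ := by
  unfold m4; rw [div_eq_mul_inv, mul_inv, mul_inv, mul_inv]; ring

/-- `1/⟨i⟩⟨j⟩ ≤ 1/⟨i+j⟩`. -/
theorem Jinv_mul_le (k j : ℤ) : (J j)⁻¹ * (J (k - j))⁻¹ ≤ (J k)⁻¹ := by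
  rw [← mul_inv]
  refine inv_anti₀ (J_pos k) ?_
  have := J_add_le_mul j (k - j)
  simpa using this

theorem Symb.m2_le (h : Symb S c D) (k j : ℤ) : |m2 S c k j| ≤ 32 * (J k)⁻¹ := by
  rw [m2_eq, abs_mul, abs_mul, abs_mul, abs_two]
  have h1 := h.inv_le j
  have h2 := h.inv_le (k - j)
  have h3 := h.c1 k
  have h4 := Jinv_mul_le k j
  have := Jinv_pos j
  have := Jinv_pos (k - j)
  calc 2 * |c k| * |(S j)⁻¹| * |(S (k - j))⁻¹| ≤ 2 * 1 * (4 * (J j)⁻¹) * (4 * (J (k - j))⁻¹) := by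
        gcongr
    _ ≤ _ := by linarith

theorem Symb.m2q_le (h : Symb S c D) (k j : ℤ) :
    |m2 S c k j * qq S c (k - j)| ≤ 2 * (J j)⁻¹ := by
  rw [m2_eq, show 2 * c k * (S j)⁻¹ * (S (k - j))⁻¹ * qq S c (k - j) =
    (1 / 2) * c k * (S j)⁻¹ * ((S (k - j))⁻¹ * S (k - j)) * c (k - j) by unfold qq; ring,
    abs_mul, abs_mul, abs_mul, abs_mul]
  have h1 := h.inv_le j
  have h2 := h.inv_mul (k - j)
  have h3 := h.c1 k
  have h4 := h.c1 (k - j)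
  have := Jinv_pos j
  calc |1 / 2| * |c k| * |(S j)⁻¹| * |(S (k - j))⁻¹ * S (k - j)| * |c (k - j)|
      ≤ |1 / 2| * 1 * (4 * (J j)⁻¹) * 1 * 1 := by gcongr
    _ = _ := by norm_num; ring

theorem Symb.m3_le (h : Symb S c D) (k : ℤ) (p : ℤ × ℤ) : |m3 S c k p| ≤ 4 * (J p.1)⁻¹ := by
  unfold m3
  rw [mul_assoc, abs_mul, abs_two]
  linarith [h.m2q_le k p.1]

/-- The four reciprocals bounding the cubic boundary symbol. -/
theorem Symb.m4_aux (h : Symb S c D) (k : ℤ) (p : ℤ × ℤ) (r : ℝ) :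
    |m4 S c k p * r| ≤ 512 * |(S p.1)⁻¹ * r| * ((J (p.1 + p.2))⁻¹ * (J (k - p.1))⁻¹ *
      (J (k - p.2))⁻¹) := by
  rw [m4_eq, show ∀ x y z w u v : ℝ, -8 * (x * y) * z * w * u * v * r =
    -8 * x * y * (z * r) * w * u * v by intros; ring]
  simp only [abs_mul _ ((S (k - p.2))⁻¹), abs_mul _ ((S (k - p.1))⁻¹),
    abs_mul _ ((S (p.1 + p.2))⁻¹), abs_mul _ ((S p.1)⁻¹ * r), abs_mul _ (c (k - p.1)),
    abs_mul _ (c k)]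
  have h1 := h.inv_le (p.1 + p.2)
  have h2 := h.inv_le (k - p.1)
  have h3 := h.inv_le (k - p.2)
  have h4 := h.c1 k
  have h5 := h.c1 (k - p.1)
  have := Jinv_pos (p.1 + p.2)
  have := Jinv_pos (k - p.1)
  have := Jinv_pos (k - p.2)
  calc |(-8 : ℝ)| * |c k| * |c (k - p.1)| * |(S p.1)⁻¹ * r| * |(S (p.1 + p.2))⁻¹| *
      |(S (k - p.1))⁻¹| * |(S (k - p.2))⁻¹|
      ≤ |(-8 : ℝ)| * 1 * 1 * |(S p.1)⁻¹ * r| * (4 * (J (p.1 + p.2))⁻¹) *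
      (4 * (J (k - p.1))⁻¹) * (4 * (J (k - p.2))⁻¹) := by gcongr
    _ = _ := by norm_num; ring

theorem Symb.m4_le (h : Symb S c D) (k : ℤ) (p : ℤ × ℤ) : |m4 S c k p| ≤ 2048 * wt k p := by
  have h0 := h.m4_aux k p 1
  rw [mul_one, mul_one] at h0
  have h1 := h.inv_le p.1
  have h2 : (J p.1)⁻¹ ≤ 1 := inv_le_one_of_one_le₀ (J_ge _)
  have := Jinv_pos (p.1 + p.2)
  have := Jinv_pos (k - p.1)
  have := Jinv_pos (k - p.2)
  have := Jinv_pos p.1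
  refine h0.trans ?_
  calc _ ≤ 512 * 4 * ((J (p.1 + p.2))⁻¹ * (J (k - p.1))⁻¹ * (J (k - p.2))⁻¹) := by
        gcongr; linarith
    _ ≤ _ := by
        unfold wt
        have : 0 < (J p.1)⁻¹ * (J (p.1 + p.2))⁻¹ * (J (k - p.1))⁻¹ := by positivity
        have : 0 < (J p.1)⁻¹ * (J (k - p.1))⁻¹ * (J (k - p.2))⁻¹ := by positivity
        linarith

theorem Symb.qq_le (h : Symb S c D) (k : ℤ) : |qq S c k| ≤ |S k| / 4 := by
  unfold qq
  rw [abs_div, abs_mul, show |(4 : ℝ)| = 4 by norm_num]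
  have := mul_le_mul_of_nonneg_left (h.c1 k) (abs_nonneg (S k))
  linarith

theorem Symb.m4q1_le (h : Symb S c D) (k : ℤ) (p : ℤ × ℤ) :
    |m4 S c k p * qq S c p.1| ≤ 2048 * wt k p := by
  have h0 := h.m4_aux k p (qq S c p.1)
  have h1 : |(S p.1)⁻¹ * qq S c p.1| ≤ 1 := by
    have h2 := h.inv_mul p.1
    rw [abs_mul] at h2 ⊢
    have := mul_le_mul_of_nonneg_left (h.qq_le p.1) (abs_nonneg ((S p.1)⁻¹))
    linarith
  have := Jinv_pos (p.1 + p.2)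
  have := Jinv_pos (k - p.1)
  have := Jinv_pos (k - p.2)
  have := Jinv_pos p.1
  refine h0.trans ?_
  calc _ ≤ 512 * 1 * ((J (p.1 + p.2))⁻¹ * (J (k - p.1))⁻¹ * (J (k - p.2))⁻¹) := by
        gcongr
    _ ≤ _ := by
        unfold wt
        have : 0 < (J (p.1 + p.2))⁻¹ * (J (k - p.1))⁻¹ * (J (k - p.2))⁻¹ := by positivity
        have : 0 < (J p.1)⁻¹ * (J (p.1 + p.2))⁻¹ * (J (k - p.1))⁻¹ := by positivity
        have : 0 < (J p.1)⁻¹ * (J (k - p.1))⁻¹ * (J (k - p.2))⁻¹ := by positivity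
        linarith

theorem Symb.m4q3_le (h : Symb S c D) (k : ℤ) (p : ℤ × ℤ) :
    |m4 S c k p * qq S c p.2| ≤ 2048 * wt k p := by
  have h0 := h.m4_aux k p (qq S c p.2)
  have h1 : |(S p.1)⁻¹ * qq S c p.2| ≤ (J p.1)⁻¹ * (J (p.1 + p.2) + J p.1) := by
    rw [abs_mul]
    have h2 := h.inv_le p.1
    have h3 : |qq S c p.2| ≤ (J (p.1 + p.2) + J p.1) / 4 := by
      have h4 := J_add_le (p.1 + p.2) (-p.1)
      rw [show p.1 + p.2 + -p.1 = p.2 by ring, J_neg] at h4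
      linarith [h.qq_le p.2, h.le_J p.2]
    have := Jinv_pos p.1
    calc _ ≤ (4 * (J p.1)⁻¹) * ((J (p.1 + p.2) + J p.1) / 4) := by gcongr
      _ = _ := by ring
  have a1 := Jinv_pos (p.1 + p.2)
  have a2 := Jinv_pos (k - p.1)
  have a3 := Jinv_pos (k - p.2)
  have a4 := Jinv_pos p.1
  refine h0.trans ?_
  calc _ ≤ 512 * ((J p.1)⁻¹ * (J (p.1 + p.2) + J p.1)) *
        ((J (p.1 + p.2))⁻¹ * (J (k - p.1))⁻¹ * (J (k - p.2))⁻¹) := by gcongr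
    _ = 512 * ((J (p.1 + p.2))⁻¹ * (J (k - p.1))⁻¹ * (J (k - p.2))⁻¹ +
        (J p.1)⁻¹ * (J (k - p.1))⁻¹ * (J (k - p.2))⁻¹) := by
        have := (J_pos (p.1 + p.2)).ne'
        have := (J_pos p.1).ne'
        field_simp
        ring
    _ ≤ _ := by
        unfold wt
        have : 0 < (J (p.1 + p.2))⁻¹ * (J (k - p.1))⁻¹ * (J (k - p.2))⁻¹ := by positivity
        have : 0 < (J p.1)⁻¹ * (J (p.1 + p.2))⁻¹ * (J (k - p.1))⁻¹ := by positivity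
        have : 0 < (J p.1)⁻¹ * (J (k - p.1))⁻¹ * (J (k - p.2))⁻¹ := by positivity
        linarith

theorem Symb.m4q4_le (h : Symb S c D) (k : ℤ) (p : ℤ × ℤ) :
    |m4 S c k p * qq S c (k - p.1 - p.2)| ≤ 2048 * wt k p := by
  have h0 := h.m4_aux k p (qq S c (k - p.1 - p.2))
  have h1 : |(S p.1)⁻¹ * qq S c (k - p.1 - p.2)| ≤ (J p.1)⁻¹ * (J (k - p.2) + J p.1) := by
    rw [abs_mul]
    have h2 := h.inv_le p.1
    have h3 : |qq S c (k - p.1 - p.2)| ≤ (J (k - p.2) + J p.1) / 4 := by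
      have h4 := J_add_le (k - p.2) (-p.1)
      rw [show k - p.2 + -p.1 = k - p.1 - p.2 by ring, J_neg] at h4
      linarith [h.qq_le (k - p.1 - p.2), h.le_J (k - p.1 - p.2)]
    have := Jinv_pos p.1
    calc _ ≤ (4 * (J p.1)⁻¹) * ((J (k - p.2) + J p.1) / 4) := by gcongr
      _ = _ := by ring
  have a1 := Jinv_pos (p.1 + p.2)
  have a2 := Jinv_pos (k - p.1)
  have a3 := Jinv_pos (k - p.2)
  have a4 := Jinv_pos p.1
  refine h0.trans ?_
  calc _ ≤ 512 * ((J p.1)⁻¹ * (J (k - p.2) + J p.1)) *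
        ((J (p.1 + p.2))⁻¹ * (J (k - p.1))⁻¹ * (J (k - p.2))⁻¹) := by gcongr
    _ = 512 * ((J (p.1 + p.2))⁻¹ * (J (k - p.1))⁻¹ * (J (k - p.2))⁻¹ +
        (J p.1)⁻¹ * (J (p.1 + p.2))⁻¹ * (J (k - p.1))⁻¹) := by
        have := (J_pos (k - p.2)).ne'
        have := (J_pos p.1).ne'
        field_simp
        ring
    _ ≤ _ := by
        unfold wt
        have : 0 < (J (p.1 + p.2))⁻¹ * (J (k - p.1))⁻¹ * (J (k - p.2))⁻¹ := by positivity
        have : 0 < (J p.1)⁻¹ * (J (p.1 + p.2))⁻¹ * (J (k - p.1))⁻¹ := by positivity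
        have : 0 < (J p.1)⁻¹ * (J (k - p.1))⁻¹ * (J (k - p.2))⁻¹ := by positivity
        linarith

/-- The first normal form symbol cancels the resonance function. -/
theorem Symb.m2_ph2 (h : Symb S c D) {k j : ℤ} (hj : j ≠ 0) (hk : k - j ≠ 0) :
    m2 S c k j * ph2 S j (k - j) = -qq S c k := by
  unfold m2 ph2 qq
  rw [show j + (k - j) = k by ring]
  have := h.ne hj; have := h.ne hk
  field_simp
  ring

open Classical in
/-- The second normal form symbol cancels the resonance function away from resonant pairs. -/
theorem Symb.m4_ph3 (h : Symb S c D) (k : ℤ) (p : ℤ × ℤ) :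
    m4 S c k p * ph3 S k p = if resP k p then 0 else m3 S c k p := by
  by_cases hr : resP k p
  · rw [if_pos hr]
    have : ph3 S k p = 0 := by
      unfold ph3
      rcases hr with hr | hr <;> rw [hr, h.zero] <;> ring
    rw [this, mul_zero]
  · rw [if_neg hr]
    unfold resP at hr
    push Not at hr
    have h1 := h.ne hr.1
    have h2 := h.ne hr.2
    unfold m4 ph3 m3 m2 qq
    by_cases hb : S (k - p.1) = 0
    · rw [hb]; simp
    by_cases hb1 : S p.1 = 0
    · rw [hb1]; simp
    field_simp
    norm_num

end symbols

/-! ### Multilinear operators on `ℓ²` -/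

/-- Norm sequence. -/
abbrev nm (x : ℤ → ℂ) : ℤ → ℝ := fun k => ‖x k‖

theorem Bi_bd {μ : ℤ → ℂ} {x y : ℤ → ℂ} {X Y m : ℝ} (hm : 0 ≤ m) (hμ : ∀ j, ‖μ j‖ ≤ m)
    (hx : Bd (nm x) X) (hy : Bd (nm y) Y) (k : ℤ) :
    SB (fun j => ‖μ j * (x j * y (k - j))‖) (m * (X * Y)) := by
  refine ((hx.conv hy k).const_mul hm).mono (fun _ => norm_nonneg _) (fun j => ?_) le_rfl
  rw [norm_mul, norm_mul]
  exact mul_le_mul_of_nonneg_right (hμ j) (by positivity)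

theorem Bi_sub {μ : ℤ → ℂ} {x y x' y' : ℤ → ℂ} {X Y X' Y' m : ℝ} (hm : 0 ≤ m)
    (hμ : ∀ j, ‖μ j‖ ≤ m) (hx : Bd (nm x) X) (hy : Bd (nm y) Y)
    (hx' : Bd (nm x') X') (hy' : Bd (nm y') Y') (k : ℤ) :
    Bi μ x y k - Bi μ x' y' k =
      Bi μ (fun j => x j - x' j) y k + Bi μ x' (fun j => y j - y' j) k := by
  have s1 := ((Bi_bd hm hμ hx hy k).norm_tsum fun _ => le_rfl).1
  have s2 := ((Bi_bd hm hμ hx' hy' k).norm_tsum fun _ => le_rfl).1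
  have s3 := ((Bi_bd hm hμ hx' hy k).norm_tsum fun _ => le_rfl).1
  unfold Bi
  rw [← s1.tsum_sub s2, ← Summable.tsum_add]
  · exact tsum_congr fun j => by ring
  · refine (s1.sub s3).congr fun j => by ring
  · refine (s3.sub s2).congr fun j => by ring

theorem e2_norm (S : ℤ → ℝ) (σ t : ℝ) (k j : ℤ) : ‖e2 S σ t k j‖ = 1 := eI_norm _

theorem e3_norm (S : ℤ → ℝ) (σ t : ℝ) (k : ℤ) (p : ℤ × ℤ) : ‖e3 S σ t k p‖ = 1 := eI_norm _

theorem GG_le {S : ℤ → ℝ} {σ t : ℝ} {x : ℤ → ℂ} {X : ℝ} (hx : Bd (nm x) X) (k : ℤ) :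
    ‖GG S σ t x k‖ ≤ X * X := by
  have := (Bi_bd zero_le_one (fun j => (e2_norm S σ t k j).le) hx hx k).norm_tsum fun _ => le_rfl
  simpa [GG, Bi] using this.2

theorem GG_sp {S : ℤ → ℝ} {σ t : ℝ} {x : ℤ → ℂ} {X : ℝ} (hx : Bd (nm x) X) :
    Sp (nm (GG S σ t x)) (X * X) :=
  ⟨mul_nonneg hx.1 hx.1, fun _ => norm_nonneg _, GG_le hx⟩

section solution

variable {S c : ℤ → ℝ} {D : Set ℤ} {σ T : ℝ} {X : ℝ → ℤ → ℂ}

theorem Sol.cont_coord (h : Sol S c D σ T X) (k : ℤ) :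
    ContinuousOn (fun t => X t k) (Set.Icc 0 T) := by
  intro t₀ ht₀
  rw [Metric.continuousWithinAt_iff]
  intro ε hε
  obtain ⟨δ, hδ, hc⟩ := h.cont t₀ ht₀ (ε / 2) (by linarith)
  refine ⟨δ, hδ, fun t ht hd => ?_⟩
  have := (hc t ht (by rwa [Real.dist_eq] at hd)).sp.2.2 k
  rw [dist_eq_norm]
  linarith

theorem Sol.cont_GG (h : Sol S c D σ T X) (k : ℤ) :
    ContinuousOn (fun t => GG S σ t (X t) k) (Set.Icc 0 T) := by
  intro t₀ ht₀
  obtain ⟨B, hB⟩ := h.bdd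
  have hB0 := (hB t₀ ht₀).1
  -- With the sequence frozen at time `t₀` only the phases move, and these are dominated.
  have hfix : Continuous fun t => GG S σ t (X t₀) k := by
    have hs := (hB t₀ ht₀).conv (hB t₀ ht₀) k
    unfold GG Bi
    refine continuous_tsum (fun j => ?_) hs.summable fun j t => ?_
    · exact (eI_continuous _).mul continuous_const
    · rw [norm_mul, e2_norm, one_mul, norm_mul]
  rw [Metric.continuousWithinAt_iff]
  intro ε hε
  obtain ⟨δ₁, hδ₁, h1⟩ := Metric.continuous_iff.1 hfix t₀ (ε / 2) (by linarith)
  obtain ⟨δ₂, hδ₂, h2⟩ := h.cont t₀ ht₀ (ε / (8 * (B + 1))) (by positivity)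
  refine ⟨min δ₁ δ₂, lt_min hδ₁ hδ₂, fun t ht hd => ?_⟩
  have hd1 := h1 t (lt_of_lt_of_le hd (min_le_left _ _))
  have hd2 := h2 t ht (by rw [← Real.dist_eq]; exact lt_of_lt_of_le hd (min_le_right _ _))
  have hμ : ∀ j, ‖e2 S σ t k j‖ ≤ 1 := fun j => (e2_norm S σ t k j).le
  have hsub := Bi_sub zero_le_one hμ (hB t ht) (hB t ht) (hB t₀ ht₀) (hB t₀ ht₀) k
  have n1 := ((Bi_bd zero_le_one hμ hd2 (hB t ht) k).norm_tsum fun _ => le_rfl).2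
  have n2 := ((Bi_bd zero_le_one hμ (hB t₀ ht₀) hd2 k).norm_tsum fun _ => le_rfl).2
  have hsm : ε / (8 * (B + 1)) * B ≤ ε / 8 := by
    rw [div_mul_eq_mul_div, div_le_div_iff₀ (by positivity) (by norm_num)]
    nlinarith
  have e1 : GG S σ t (X t) k - GG S σ t (X t₀) k = _ := hsub
  have : ‖GG S σ t (X t) k - GG S σ t (X t₀) k‖ ≤ ε / 4 := by
    rw [e1]
    refine (norm_add_le _ _).trans ?_
    have := add_le_add n1 n2
    unfold Bi
    linarith
  rw [dist_eq_norm] at hd1 ⊢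
  calc ‖GG S σ t (X t) k - GG S σ t₀ (X t₀) k‖
      ≤ ‖GG S σ t (X t) k - GG S σ t (X t₀) k‖ + ‖GG S σ t (X t₀) k - GG S σ t₀ (X t₀) k‖ :=
        norm_sub_le_norm_sub_add_norm_sub _ _ _
    _ < ε := by linarith

/-- Time derivative of the solution. -/
def XD (S c : ℤ → ℝ) (σ t : ℝ) (x : ℤ → ℂ) (k : ℤ) : ℂ :=
  -(Complex.I * σ * qq S c k * GG S σ t x k)

theorem Sol.hasDeriv (h : Sol S c D σ T X) {t : ℝ} (ht : t ∈ Set.Ioo 0 T) (k : ℤ) :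
    HasDerivAt (fun t => X t k) (XD S c σ t (X t) k) t := by
  have hcG := h.cont_GG k
  have hT : Set.Icc 0 t ⊆ Set.Icc 0 T := Set.Icc_subset_Icc_right ht.2.le
  have hint : IntervalIntegrable (fun τ => GG S σ τ (X τ) k) volume 0 t :=
    ContinuousOn.intervalIntegrable (by rw [Set.uIcc_of_le ht.1.le]; exact hcG.mono hT)
  have hcI : ContinuousOn (fun τ => GG S σ τ (X τ) k) (Set.Ioo 0 T) :=
    hcG.mono Set.Ioo_subset_Icc_self
  have hd := intervalIntegral.integral_hasDerivAt_right hint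
    (hcI.stronglyMeasurableAtFilter isOpen_Ioo t ht) (hcI.continuousAt (isOpen_Ioo.mem_nhds ht))
  have hd2 := (hd.const_mul (Complex.I * σ * qq S c k)).const_sub (X 0 k)
  refine hd2.congr_of_eventuallyEq ?_
  filter_upwards [isOpen_Ioo.mem_nhds ht] with τ hτ
  exact h.eq τ (Set.Ioo_subset_Icc_self hτ) k

theorem Sol.increment (h : Sol S c D σ T X) {t0 t1 : ℝ} (h0 : 0 ≤ t0) (h01 : t0 ≤ t1)
    (h1 : t1 ≤ T) (k : ℤ) :
    X t1 k - X t0 k = -(Complex.I * σ * qq S c k * ∫ τ in t0..t1, GG S σ τ (X τ) k) := by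
  have hint : ∀ a b : ℝ, 0 ≤ a → a ≤ b → b ≤ T →
      IntervalIntegrable (fun τ => GG S σ τ (X τ) k) volume a b := fun a b ha hab hb =>
    ContinuousOn.intervalIntegrable (by
      rw [Set.uIcc_of_le hab]; exact (h.cont_GG k).mono (Set.Icc_subset_Icc ha hb))
  rw [h.eq t1 ⟨h0.trans h01, h1⟩ k, h.eq t0 ⟨h0, h01.trans h1⟩ k,
    ← intervalIntegral.integral_add_adjacent_intervals
      (hint 0 t0 le_rfl h0 (h01.trans h1)) (hint t0 t1 h0 h01 h1)]
  ring

/-- Cubic nonlinearity produced by the first normal form step. -/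
def H3 (S c : ℤ → ℝ) (σ t : ℝ) (x : ℤ → ℂ) (k : ℤ) : ℂ :=
  Tr (fun p => (m3 S c k p : ℂ) * e3 S σ t k p) x x x k

theorem Jx_SB {x : ℤ → ℝ} {B : ℝ} (hx : Bd x B) :
    SB (fun j => (J j)⁻¹ * x j) (Real.sqrt Cg * B) :=
  SB.cs (fun j => (Jinv_pos j).le) hx.2.1 (Real.sqrt_nonneg _) hx.1
    (by simpa only [Jinv_sq, Real.sq_sqrt Cg_nonneg] using gw_SB) hx.2.2

/-- Phase addition: the two quadratic resonance functions add up to the cubic one wherever the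
trilinear symbol and the product of the frequencies do not vanish. -/
theorem Sol.phase (h : Sol S c D σ T X) {t : ℝ} (ht : t ∈ Set.Icc 0 T) (k : ℤ) (p : ℤ × ℤ) :
    (m3 S c k p : ℂ) * (e2 S σ t k p.1 * e2 S σ t (k - p.1) p.2) * trip k (X t) (X t) (X t) p =
      (m3 S c k p : ℂ) * e3 S σ t k p * trip k (X t) (X t) (X t) p := by
  by_cases hk : c k = 0
  · have : m3 S c k p = 0 := by unfold m3 m2; rw [hk]; simp
    rw [this]; simp
  by_cases h1 : p.1 ∈ D
  swap
  · unfold trip; rw [h.off t ht _ h1]; simp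
  by_cases h2 : p.2 ∈ D
  swap
  · unfold trip; rw [h.off t ht _ h2]; simp
  by_cases h3 : k - p.1 - p.2 ∈ D
  swap
  · unfold trip; rw [h.off t ht _ h3]; simp
  have hid := h.symb.idt p.1 h1 p.2 h2 (k - p.1 - p.2) h3 (by
    rwa [show p.1 + p.2 + (k - p.1 - p.2) = k by ring])
  rw [show p.1 + p.2 + (k - p.1 - p.2) = k by ring,
    show p.1 + (k - p.1 - p.2) = k - p.2 by ring] at hid
  have : e2 S σ t k p.1 * e2 S σ t (k - p.1) p.2 = e3 S σ t k p := by
    unfold e2 e3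
    rw [← eI_add]
    congr 1
    unfold ph2 ph3
    rw [show p.1 + (k - p.1) = k by ring, show p.2 + (k - p.1 - p.2) = k - p.1 by ring]
    linear_combination (-(1/8) * t * σ * S (k - p.1)) * hid
  rw [this]

/-- First normal form step (differentiation by parts in time). -/
theorem Sol.nf1 (h : Sol S c D σ T X) {t0 t1 : ℝ} (h0 : 0 ≤ t0) (h01 : t0 ≤ t1)
    (h1 : t1 ≤ T) (k : ℤ) :
    IntervalIntegrable (fun t => H3 S c σ t (X t) k) volume t0 t1 ∧
    X t1 k - X t0 k = B2 S c σ t1 (X t1) k - B2 S c σ t0 (X t0) k +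
      Complex.I * σ * ∫ t in t0..t1, H3 S c σ t (X t) k := by
  obtain ⟨B, hB⟩ := h.bdd
  have hsub : Set.Icc t0 t1 ⊆ Set.Icc 0 T := Set.Icc_subset_Icc h0 h1
  have hsubo : Set.Ioo t0 t1 ⊆ Set.Ioo 0 T := Set.Ioo_subset_Ioo h0 h1
  have hB0 : 0 ≤ B := (hB t0 (hsub ⟨le_rfl, h01⟩)).1
  set f : ℤ → ℝ → ℂ := fun j t => (m2 S c k j : ℂ) * e2 S σ t k j * (X t j * X t (k - j)) with hf
  set f' : ℤ → ℝ → ℂ := fun j t =>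
    (m2 S c k j : ℂ) * (Complex.I * (σ * ph2 S j (k - j) : ℝ) * e2 S σ t k j) *
      (X t j * X t (k - j)) + (m2 S c k j : ℂ) * e2 S σ t k j *
      (XD S c σ t (X t) j * X t (k - j) + X t j * XD S c σ t (X t) (k - j)) with hf'
  have hcX : ∀ j, ContinuousOn (fun t => X t j) (Set.Icc t0 t1) :=
    fun j => (h.cont_coord j).mono hsub
  have hcXD : ∀ j, ContinuousOn (fun t => XD S c σ t (X t) j) (Set.Icc t0 t1) := fun j =>
    (continuousOn_const.mul ((h.cont_GG j).mono hsub)).neg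
  have hce : ∀ j, ContinuousOn (fun t => e2 S σ t k j) (Set.Icc t0 t1) :=
    fun j => (eI_continuous _).continuousOn
  have hms : ∀ j, |m2 S c k j * qq S c j| ≤ 2 * (J (k - j))⁻¹ := fun j => by
    have := h.symb.m2q_le k (k - j)
    rw [show k - (k - j) = j by ring] at this
    rwa [show m2 S c k j = m2 S c k (k - j) by
      unfold m2; rw [show k - (k - j) = j by ring, mul_comm (S j)]]
  -- The symbol cancels the phase derivative; mean zero removes the degenerate frequencies.
  have hm0 : ∀ t ∈ Set.Icc t0 t1, ∀ j, ((m2 S c k j : ℂ) * (ph2 S j (k - j) : ℝ)) *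
      (X t j * X t (k - j)) = -(qq S c k : ℂ) * (X t j * X t (k - j)) := fun t ht j => by
    by_cases hj : j = 0
    · subst hj; rw [h.zero t (hsub ht)]; ring
    by_cases hkj : k - j = 0
    · rw [hkj, h.zero t (hsub ht)]; ring
    rw [← Complex.ofReal_mul, h.symb.m2_ph2 hj hkj]; push_cast; ring
  have hf'1 : ∀ t ∈ Set.Icc t0 t1, ∀ j, f' j t =
      -(Complex.I * σ * qq S c k) * (e2 S σ t k j * (X t j * X t (k - j))) -
      Complex.I * σ * (((m2 S c k j * qq S c j : ℝ) : ℂ) * e2 S σ t k j *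
        (GG S σ t (X t) j * X t (k - j))) -
      Complex.I * σ * (((m2 S c k j * qq S c (k - j) : ℝ) : ℂ) * e2 S σ t k j *
        (X t j * GG S σ t (X t) (k - j))) := fun t ht j => by
    have := hm0 t ht j
    simp only [hf', XD]
    push_cast at this ⊢
    linear_combination (Complex.I * σ * e2 S σ t k j) * this
  have hG : ∀ t ∈ Set.Icc t0 t1, Sp (nm (GG S σ t (X t))) (B * B) := fun t ht =>
    GG_sp (hB t (hsub ht))
  have b1 : ∀ t ∈ Set.Icc t0 t1, SB (fun j => ‖e2 S σ t k j * (X t j * X t (k - j))‖)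
      (1 * (B * B)) := fun t ht =>
    Bi_bd zero_le_one (fun j => (e2_norm S σ t k j).le) (hB t (hsub ht)) (hB t (hsub ht)) k
  have b2 : ∀ t ∈ Set.Icc t0 t1, SB (fun j => ‖((m2 S c k j * qq S c j : ℝ) : ℂ) *
      e2 S σ t k j * (GG S σ t (X t) j * X t (k - j))‖)
      (2 * (B * B) * (Real.sqrt Cg * B)) := fun t ht => by
    refine (((Jx_SB (hB t (hsub ht))).comp_inj (inj_sub_left k)).const_mul
      (show 0 ≤ 2 * (B * B) by positivity)).mono (fun _ => norm_nonneg _) (fun j => ?_) le_rfl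
    rw [norm_mul, norm_mul, norm_mul, e2_norm, Complex.norm_real, Real.norm_eq_abs]
    have h2 := (hG t ht).2.2 j
    have := Jinv_pos (k - j)
    calc _ ≤ 2 * (J (k - j))⁻¹ * 1 * ((B * B) * ‖X t (k - j)‖) := by
          gcongr; exact hms j
      _ = _ := by ring
  have b3 : ∀ t ∈ Set.Icc t0 t1, SB (fun j => ‖((m2 S c k j * qq S c (k - j) : ℝ) : ℂ) *
      e2 S σ t k j * (X t j * GG S σ t (X t) (k - j))‖)
      (2 * (B * B) * (Real.sqrt Cg * B)) := fun t ht => by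
    refine ((Jx_SB (hB t (hsub ht))).const_mul
      (show 0 ≤ 2 * (B * B) by positivity)).mono (fun _ => norm_nonneg _) (fun j => ?_) le_rfl
    rw [norm_mul, norm_mul, norm_mul, e2_norm, Complex.norm_real, Real.norm_eq_abs]
    have h2 := (hG t ht).2.2 (k - j)
    have := Jinv_pos j
    calc _ ≤ 2 * (J j)⁻¹ * 1 * (‖X t j‖ * (B * B)) := by
          gcongr; exact h.symb.m2q_le k j
      _ = _ := by ring
  have hIσ : ‖Complex.I * (σ : ℂ)‖ = 1 := by
    rw [norm_mul, Complex.norm_I, Complex.norm_real, Real.norm_eq_abs, h.sg, one_mul]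
  have hbd : ∀ t ∈ Set.Icc t0 t1, SB (fun j => ‖f' j t‖)
      (|qq S c k| * (1 * (B * B)) + 2 * (B * B) * (Real.sqrt Cg * B) +
        2 * (B * B) * (Real.sqrt Cg * B)) := fun t ht => by
    refine ((((b1 t ht).const_mul (abs_nonneg (qq S c k))).add (b2 t ht)).add (b3 t ht)).mono
      (fun _ => norm_nonneg _) (fun j => ?_) le_rfl
    rw [hf'1 t ht j]
    refine (norm_sub_le _ _).trans (add_le_add ((norm_sub_le _ _).trans (add_le_add ?_ ?_)) ?_)
    · rw [norm_mul, norm_neg, norm_mul, hIσ, Complex.norm_real, Real.norm_eq_abs, one_mul]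
    · rw [norm_mul, hIσ, one_mul]
    · rw [norm_mul, hIσ, one_mul]
  have hfs : ∀ t ∈ Set.Icc t0 t1, Summable fun j => f j t := fun t ht => by
    refine ((Bi_bd (m := 32) (by norm_num) (fun j => ?_) (hB t (hsub ht)) (hB t (hsub ht))
      k).norm_tsum fun j => le_rfl).1
    rw [norm_mul, e2_norm, Complex.norm_real, Real.norm_eq_abs, mul_one]
    have : (J k)⁻¹ ≤ 1 := inv_le_one_of_one_le₀ (J_ge _)
    linarith [h.symb.m2_le k j]
  obtain ⟨hint, hftc⟩ := ftc_tsum (f := f) (f' := f') h01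
    (fun j => (continuousOn_const.mul (hce j)).mul ((hcX j).mul (hcX _)))
    (fun j t ht => by
      have hd := h.hasDeriv (hsubo ht)
      exact ((eI_hasDerivAt (σ * ph2 S j (k - j)) t).const_mul (m2 S c k j : ℂ)).mul
        ((hd j).mul (hd (k - j))))
    (fun j => ((continuousOn_const.mul (continuousOn_const.mul (hce j))).mul
      ((hcX j).mul (hcX _))).add ((continuousOn_const.mul (hce j)).mul
        (((hcXD j).mul (hcX _)).add ((hcX j).mul (hcXD _)))))
    hbd (hfs t0 ⟨le_rfl, h01⟩) (hfs t1 ⟨h01, le_rfl⟩)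
  have hsumf' : ∀ t ∈ Set.Icc t0 t1, ∑' j, f' j t =
      -(Complex.I * σ * qq S c k) * GG S σ t (X t) k -
        Complex.I * σ * H3 S c σ t (X t) k := fun t ht => by
    have s1 := ((b1 t ht).norm_tsum fun _ => le_rfl).1
    have s2 := ((b2 t ht).norm_tsum fun _ => le_rfl).1
    have s3 := ((b3 t ht).norm_tsum fun _ => le_rfl).1
    have e23 : ∑' j, ((m2 S c k j * qq S c j : ℝ) : ℂ) * e2 S σ t k j *
        (GG S σ t (X t) j * X t (k - j)) = ∑' j, ((m2 S c k j * qq S c (k - j) : ℝ) : ℂ) *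
        e2 S σ t k j * (X t j * GG S σ t (X t) (k - j)) := by
      rw [← (Equiv.subLeft k).tsum_eq]
      refine tsum_congr fun j => ?_
      simp only [Equiv.subLeft_apply, sub_sub_cancel]
      have a1 : m2 S c k (k - j) = m2 S c k j := by
        unfold m2; rw [sub_sub_cancel, mul_comm (S j)]
      have a2 : e2 S σ t k (k - j) = e2 S σ t k j := by
        unfold e2 ph2; congr 2; rw [sub_sub_cancel]
        rw [show k - j + j = k by ring, show j + (k - j) = k by ring]; ring
      rw [a1, a2]; ring
    have e3' : H3 S c σ t (X t) k = 2 * ∑' j, ((m2 S c k j * qq S c (k - j) : ℝ) : ℂ) *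
        e2 S σ t k j * (X t j * GG S σ t (X t) (k - j)) := by
      have hx := hB t (hsub ht)
      have hs : Summable fun p : ℤ × ℤ => (m3 S c k p : ℂ) *
          (e2 S σ t k p.1 * e2 S σ t (k - p.1) p.2) * trip k (X t) (X t) (X t) p := by
        refine (((pr_Jinv hx hx hx k).const_mul (show (0 : ℝ) ≤ 4 by norm_num)).norm_tsum
          fun p => ?_).1
        rw [norm_mul, norm_mul, norm_mul, e2_norm, e2_norm, Complex.norm_real,
          Real.norm_eq_abs]
        unfold trip pr
        rw [norm_mul, norm_mul]
        have := h.symb.m3_le k p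
        calc _ ≤ 4 * (J p.1)⁻¹ * (1 * 1) *
            (‖X t p.1‖ * ‖X t p.2‖ * ‖X t (k - p.1 - p.2)‖) := by gcongr
          _ = _ := by ring
      unfold H3 Tr
      rw [tsum_congr fun p => (h.phase (hsub ht) k p).symm, hs.tsum_prod, ← tsum_mul_left]
      refine tsum_congr fun j => ?_
      unfold GG Bi
      rw [← tsum_mul_left, ← tsum_mul_left, ← tsum_mul_left]
      refine tsum_congr fun l => ?_
      unfold m3 trip
      push_cast; ring
    rw [tsum_congr fun j => hf'1 t ht j, Summable.tsum_sub, Summable.tsum_sub, tsum_mul_left,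
      tsum_mul_left, tsum_mul_left, e23, e3']
    · unfold GG Bi; ring
    · exact s1.mul_left _
    · exact s2.mul_left _
    · exact (s1.mul_left _).sub (s2.mul_left _)
    · exact s3.mul_left _
  have hIG : IntervalIntegrable (fun t => GG S σ t (X t) k) volume t0 t1 :=
    ContinuousOn.intervalIntegrable (by
      rw [Set.uIcc_of_le h01]; exact (h.cont_GG k).mono hsub)
  have hσ0 : (Complex.I * (σ : ℂ)) ≠ 0 := by rw [← norm_ne_zero_iff, hIσ]; norm_num
  have hH : ∀ t ∈ Set.Icc t0 t1, H3 S c σ t (X t) k =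
      (Complex.I * σ)⁻¹ * (-(Complex.I * σ * qq S c k) * GG S σ t (X t) k - ∑' j, f' j t) :=
    fun t ht => by rw [hsumf' t ht, sub_sub_cancel, ← mul_assoc, inv_mul_cancel₀ hσ0, one_mul]
  have hIH : IntervalIntegrable (fun t => H3 S c σ t (X t) k) volume t0 t1 := by
    refine (((hIG.const_mul (-(Complex.I * σ * qq S c k))).sub hint).const_mul
      (Complex.I * σ)⁻¹).congr ?_
    intro t ht
    rw [Set.uIoc_of_le h01] at ht
    exact (hH t (Set.Ioc_subset_Icc_self ht)).symm
  refine ⟨hIH, ?_⟩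
  have hI2 : ∫ t in t0..t1, ∑' j, f' j t = -(Complex.I * σ * qq S c k) *
      (∫ t in t0..t1, GG S σ t (X t) k) - Complex.I * σ * ∫ t in t0..t1, H3 S c σ t (X t) k := by
    rw [← intervalIntegral.integral_const_mul, ← intervalIntegral.integral_const_mul,
      ← intervalIntegral.integral_sub (hIG.const_mul _) (hIH.const_mul _)]
    refine intervalIntegral.integral_congr fun t ht => ?_
    rw [Set.uIcc_of_le h01] at ht
    exact hsumf' t ht
  rw [h.increment h0 h01 h1 k]
  have hb : ∀ t, B2 S c σ t (X t) k = ∑' j, f j t := fun t => rfl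
  rw [hb, hb, hftc, hI2]
  ring

end solution

/-! ### Second normal form step -/

theorem trip_norm (k : ℤ) (x y z : ℤ → ℂ) (p : ℤ × ℤ) :
    ‖trip k x y z p‖ = pr k (nm x) (nm y) (nm z) p := by
  unfold trip pr; rw [norm_mul, norm_mul]

theorem Tr_bd {μ : ℤ × ℤ → ℂ} {x y z : ℤ → ℂ} {m P : ℝ} {k : ℤ} (hm : 0 ≤ m)
    (hμ : ∀ p, ‖μ p‖ ≤ m * wt k p) (hP : 0 ≤ P)
    (h : SB (fun p => pr k (nm x) (nm y) (nm z) p ^ 2) (P ^ 2)) :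
    SB (fun p => ‖μ p * trip k x y z p‖) (m * (Cw * (J k)⁻¹ * P)) := by
  refine ((wt_pr (fun _ => norm_nonneg _) (fun _ => norm_nonneg _) (fun _ => norm_nonneg _) hP
    h).const_mul hm).mono (fun _ => norm_nonneg _) (fun p => ?_) le_rfl
  rw [norm_mul, trip_norm, ← mul_assoc]
  exact mul_le_mul_of_nonneg_right (hμ p) (by unfold pr; positivity)

theorem norm_real_phase (r a : ℝ) : ‖(r : ℂ) * eI a‖ = |r| := by
  rw [norm_mul, eI_norm, Complex.norm_real, Real.norm_eq_abs, mul_one]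

section solution

variable {S c : ℤ → ℝ} {D : Set ℤ} {σ T : ℝ} {X : ℝ → ℤ → ℂ}

open Classical in
theorem RR_bd {x : ℤ → ℂ} {B : ℝ} (h : Symb S c D) (hx : Bd (nm x) B) (k : ℤ) :
    SB (fun p => ‖((if resP k p then m3 S c k p else 0 : ℝ) : ℂ) * trip k x x x p‖)
      (4 * (B * B * ‖x k‖ + B * B * ‖x k‖)) := by
  refine ((pr_res hx hx hx k).const_mul (show (0 : ℝ) ≤ 4 by norm_num)).mono
    (fun _ => norm_nonneg _) (fun p => ?_) le_rfl
  rw [norm_mul, trip, norm_mul, norm_mul, Complex.norm_real, Real.norm_eq_abs]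
  split_ifs with hr
  · have h1 := h.m3_le k p
    have h2 : (J p.1)⁻¹ ≤ 1 := inv_le_one_of_one_le₀ (J_ge _)
    unfold pr
    exact mul_le_mul_of_nonneg_right (by linarith) (by positivity)
  · simp

open Classical in
/-- The normal form identity: two differentiations by parts in time convert the quadratic
nonlinearity into boundary terms, resonant cubic terms and quartic terms. -/
theorem Sol.nf (h : Sol S c D σ T X) {t0 t1 : ℝ} (h0 : 0 ≤ t0) (h01 : t0 ≤ t1)
    (h1 : t1 ≤ T) (k : ℤ) :
    IntervalIntegrable (fun t => RR S c (X t) k + QQ S c σ t (X t) k) volume t0 t1 ∧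
    X t1 k - X t0 k =
      (B2 S c σ t1 (X t1) k + B3 S c σ t1 (X t1) k) -
      (B2 S c σ t0 (X t0) k + B3 S c σ t0 (X t0) k) +
      Complex.I * σ * ∫ t in t0..t1, (RR S c (X t) k + QQ S c σ t (X t) k) := by
  obtain ⟨hIH, hnf1⟩ := h.nf1 h0 h01 h1 k
  obtain ⟨B, hB⟩ := h.bdd
  have hsub : Set.Icc t0 t1 ⊆ Set.Icc 0 T := Set.Icc_subset_Icc h0 h1
  have hsubo : Set.Ioo t0 t1 ⊆ Set.Ioo 0 T := Set.Ioo_subset_Ioo h0 h1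
  have hB0 : 0 ≤ B := (hB t0 (hsub ⟨le_rfl, h01⟩)).1
  have hS := h.symb
  set f : ℤ × ℤ → ℝ → ℂ := fun p t =>
    (m4 S c k p : ℂ) * e3 S σ t k p * (X t p.1 * X t p.2 * X t (k - p.1 - p.2)) with hf
  set f' : ℤ × ℤ → ℝ → ℂ := fun p t =>
    (m4 S c k p : ℂ) * (Complex.I * (σ * ph3 S k p : ℝ) * e3 S σ t k p) *
      (X t p.1 * X t p.2 * X t (k - p.1 - p.2)) + (m4 S c k p : ℂ) * e3 S σ t k p *
      ((XD S c σ t (X t) p.1 * X t p.2 + X t p.1 * XD S c σ t (X t) p.2) *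
        X t (k - p.1 - p.2) + X t p.1 * X t p.2 * XD S c σ t (X t) (k - p.1 - p.2)) with hf'
  have hcX : ∀ j, ContinuousOn (fun t => X t j) (Set.Icc t0 t1) :=
    fun j => (h.cont_coord j).mono hsub
  have hcXD : ∀ j, ContinuousOn (fun t => XD S c σ t (X t) j) (Set.Icc t0 t1) := fun j =>
    (continuousOn_const.mul ((h.cont_GG j).mono hsub)).neg
  have hce : ∀ p, ContinuousOn (fun t => e3 S σ t k p) (Set.Icc t0 t1) :=
    fun p => (eI_continuous _).continuousOn
  -- non-resonant part of the cubic nonlinearity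
  set g0 : ℤ × ℤ → ℝ → ℂ := fun p t => ((if resP k p then 0 else m3 S c k p : ℝ) : ℂ) *
    e3 S σ t k p * trip k (X t) (X t) (X t) p with hg0
  set g1 : ℤ × ℤ → ℝ → ℂ := fun p t => ((m4 S c k p * qq S c p.1 : ℝ) : ℂ) * e3 S σ t k p *
    trip k (GG S σ t (X t)) (X t) (X t) p with hg1
  set g2 : ℤ × ℤ → ℝ → ℂ := fun p t => ((m4 S c k p * qq S c p.2 : ℝ) : ℂ) * e3 S σ t k p *
    trip k (X t) (GG S σ t (X t)) (X t) p with hg2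
  set g3 : ℤ × ℤ → ℝ → ℂ := fun p t => ((m4 S c k p * qq S c (k - p.1 - p.2) : ℝ) : ℂ) *
    e3 S σ t k p * trip k (X t) (X t) (GG S σ t (X t)) p with hg3
  have hf'1 : ∀ t p, f' p t = Complex.I * σ * g0 p t - Complex.I * σ * g1 p t -
      Complex.I * σ * g2 p t - Complex.I * σ * g3 p t := fun t p => by
    simp only [hf', hg0, hg1, hg2, hg3, XD, trip]
    rw [← hS.m4_ph3 k p]
    push_cast
    ring
  have hG : ∀ t ∈ Set.Icc t0 t1, Sp (nm (GG S σ t (X t))) (B * B) := fun t ht =>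
    GG_sp (hB t (hsub ht))
  have b0 : ∀ t ∈ Set.Icc t0 t1, SB (fun p => ‖g0 p t‖) (4 * (Real.sqrt Cg * B * (B * B))) :=
    fun t ht => by
      have hx := hB t (hsub ht)
      refine ((pr_Jinv hx hx hx k).const_mul (show (0 : ℝ) ≤ 4 by norm_num)).mono
        (fun _ => norm_nonneg _) (fun p => ?_) le_rfl
      simp only [hg0]
      rw [norm_mul, e3, norm_real_phase, trip_norm, ← mul_assoc]
      refine mul_le_mul_of_nonneg_right ?_ (by unfold pr; positivity)
      split_ifs
      · rw [abs_zero]; have := Jinv_pos p.1; positivity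
      · exact hS.m3_le k p
  have b1 : ∀ t ∈ Set.Icc t0 t1, SB (fun p => ‖g1 p t‖)
      (2048 * (Cw * (J k)⁻¹ * (B * B * B * B))) := fun t ht => by
    have hx := hB t (hsub ht)
    refine Tr_bd (by norm_num) (fun p => ?_) (by positivity) (pr_sq1 (hG t ht) hx hx k)
    rw [e3, norm_real_phase]; exact hS.m4q1_le k p
  have b2 : ∀ t ∈ Set.Icc t0 t1, SB (fun p => ‖g2 p t‖)
      (2048 * (Cw * (J k)⁻¹ * (B * (B * B) * B))) := fun t ht => by
    have hx := hB t (hsub ht)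
    refine Tr_bd (by norm_num) (fun p => ?_) (by positivity) (pr_sq2 hx (hG t ht) hx k)
    rw [e3, norm_real_phase]; exact hS.m4q3_le k p
  have b3 : ∀ t ∈ Set.Icc t0 t1, SB (fun p => ‖g3 p t‖)
      (2048 * (Cw * (J k)⁻¹ * (B * B * (B * B)))) := fun t ht => by
    have hx := hB t (hsub ht)
    refine Tr_bd (by norm_num) (fun p => ?_) (by positivity) (pr_sq3 hx hx (hG t ht) k)
    rw [e3, norm_real_phase]; exact hS.m4q4_le k p
  have hIσ : ‖Complex.I * (σ : ℂ)‖ = 1 := by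
    rw [norm_mul, Complex.norm_I, Complex.norm_real, Real.norm_eq_abs, h.sg, one_mul]
  have hσ0 : (Complex.I * (σ : ℂ)) ≠ 0 := by rw [← norm_ne_zero_iff, hIσ]; norm_num
  have hbd : ∀ t ∈ Set.Icc t0 t1, SB (fun p => ‖f' p t‖) _ := fun t ht =>
    ((((b0 t ht).add (b1 t ht)).add (b2 t ht)).add (b3 t ht)).mono
      (fun _ => norm_nonneg _) (fun p => by
        rw [hf'1 t p]
        refine (norm_sub_le _ _).trans (add_le_add ((norm_sub_le _ _).trans (add_le_add
          ((norm_sub_le _ _).trans (add_le_add ?_ ?_)) ?_)) ?_) <;>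
        rw [norm_mul, hIσ, one_mul]) le_rfl
  have hfs : ∀ t ∈ Set.Icc t0 t1, Summable fun p => f p t := fun t ht => by
    have hx := hB t (hsub ht)
    refine ((Tr_bd (m := 2048) (μ := fun p => (m4 S c k p : ℂ) * e3 S σ t k p) (by norm_num)
      (fun p => ?_) (by positivity) (pr_sq1 hx.sp hx hx k)).norm_tsum fun j => le_rfl).1
    rw [e3, norm_real_phase]; exact hS.m4_le k p
  obtain ⟨hint, hftc⟩ := ftc_tsum (f := f) (f' := f') h01
    (fun p => (continuousOn_const.mul (hce p)).mul (((hcX p.1).mul (hcX p.2)).mul (hcX _)))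
    (fun p t ht => by
      have hd := h.hasDeriv (hsubo ht)
      exact ((eI_hasDerivAt (σ * ph3 S k p) t).const_mul (m4 S c k p : ℂ)).mul
        (((hd p.1).mul (hd p.2)).mul (hd (k - p.1 - p.2))))
    (fun p => ((continuousOn_const.mul (continuousOn_const.mul (hce p))).mul
      (((hcX p.1).mul (hcX p.2)).mul (hcX _))).add ((continuousOn_const.mul (hce p)).mul
        (((((hcXD p.1).mul (hcX p.2)).add ((hcX p.1).mul (hcXD p.2))).mul (hcX _)).add
          (((hcX p.1).mul (hcX p.2)).mul (hcXD _)))))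
    hbd (hfs t0 ⟨le_rfl, h01⟩) (hfs t1 ⟨h01, le_rfl⟩)
  have hsumf' : ∀ t ∈ Set.Icc t0 t1, ∑' p, f' p t =
      Complex.I * σ * (H3 S c σ t (X t) k - (RR S c (X t) k + QQ S c σ t (X t) k)) :=
    fun t ht => by
      have s0 := ((b0 t ht).norm_tsum fun _ => le_rfl).1
      have s1 := ((b1 t ht).norm_tsum fun _ => le_rfl).1
      have s2 := ((b2 t ht).norm_tsum fun _ => le_rfl).1
      have s3 := ((b3 t ht).norm_tsum fun _ => le_rfl).1
      have sR := ((RR_bd hS (hB t (hsub ht)) k).norm_tsum fun _ => le_rfl).1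
      have hH : H3 S c σ t (X t) k = ∑' p, g0 p t + RR S c (X t) k := by
        unfold H3 RR Tr
        rw [← s0.tsum_add sR]
        refine tsum_congr fun p => ?_
        simp only [hg0]
        by_cases hr : resP k p
        · have : e3 S σ t k p = 1 := by
            have h0 : ph3 S k p = 0 := by
              unfold ph3
              rcases hr with hr | hr <;> rw [hr, hS.zero] <;> ring
            unfold e3; rw [h0, mul_zero, mul_zero, eI_zero]
          rw [this, if_pos hr, if_pos hr]; push_cast; ring
        · rw [if_neg hr, if_neg hr]; push_cast; ring
      have hQ : QQ S c σ t (X t) k = ∑' p, g1 p t + ∑' p, g2 p t + ∑' p, g3 p t := rfl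
      rw [tsum_congr fun p => hf'1 t p, Summable.tsum_sub, Summable.tsum_sub,
        Summable.tsum_sub, tsum_mul_left, tsum_mul_left, tsum_mul_left, tsum_mul_left, hH, hQ]
      · ring
      · exact s0.mul_left _
      · exact s1.mul_left _
      · exact (s0.mul_left _).sub (s1.mul_left _)
      · exact s2.mul_left _
      · exact ((s0.mul_left _).sub (s1.mul_left _)).sub (s2.mul_left _)
      · exact s3.mul_left _
  have hE : ∀ t ∈ Set.Icc t0 t1, RR S c (X t) k + QQ S c σ t (X t) k =
      H3 S c σ t (X t) k - (Complex.I * σ)⁻¹ * ∑' p, f' p t := fun t ht => by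
    rw [hsumf' t ht, ← mul_assoc, inv_mul_cancel₀ hσ0, one_mul]; ring
  have hIR : IntervalIntegrable (fun t => RR S c (X t) k + QQ S c σ t (X t) k) volume t0 t1 := by
    refine (hIH.sub (hint.const_mul (Complex.I * σ)⁻¹)).congr ?_
    intro t ht
    rw [Set.uIoc_of_le h01] at ht
    exact (hE t (Set.Ioc_subset_Icc_self ht)).symm
  refine ⟨hIR, ?_⟩
  have hI2 : ∫ t in t0..t1, ∑' p, f' p t = Complex.I * σ * ((∫ t in t0..t1,
      H3 S c σ t (X t) k) - ∫ t in t0..t1, (RR S c (X t) k + QQ S c σ t (X t) k)) := by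
    rw [← intervalIntegral.integral_sub hIH hIR, ← intervalIntegral.integral_const_mul]
    refine intervalIntegral.integral_congr fun t ht => ?_
    rw [Set.uIcc_of_le h01] at ht
    exact hsumf' t ht
  have hb : ∀ t, B3 S c σ t (X t) k = ∑' p, f p t := fun t => rfl
  rw [hnf1, hb, hb]
  linear_combination -hftc - hI2

end solution

/-! ### Comparison of symbols -/

/-- `r` is bounded by `K` and `Kδ`-close to `1`. -/
def near (δ K r : ℝ) : Prop := |r| ≤ K ∧ |r - 1| ≤ K * δ

theorem near.mono {δ δ' K K' r : ℝ} (h : near δ K r) (hδ0 : 0 ≤ δ) (hδ : δ ≤ δ') (hK : K ≤ K') :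
    near δ' K' r :=
  ⟨h.1.trans hK, h.2.trans (mul_le_mul hK hδ hδ0 ((abs_nonneg r).trans (h.1.trans hK)))⟩

theorem near.mul {δ K L r r' : ℝ} (hδ : 0 ≤ δ) (h : near δ K r) (h' : near δ L r') :
    near δ (K * L + K) (r * r') := by
  have hK := (abs_nonneg r).trans h.1
  refine ⟨?_, ?_⟩
  · rw [abs_mul]
    have := mul_le_mul h.1 h'.1 (abs_nonneg _) hK
    linarith
  · rw [show r * r' - 1 = r * (r' - 1) + (r - 1) by ring]
    refine (abs_add_le _ _).trans ?_
    rw [abs_mul]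
    have := mul_le_mul h.1 h'.2 (abs_nonneg _) hK
    linarith [h.2]

theorem near.mul2 {δ K r r' : ℝ} (hδ : 0 ≤ δ) (h : near δ K r) (h' : near δ 2 r') :
    near δ (3 * K) (r * r') := by
  have := h.mul hδ h'
  rwa [show K * 2 + K = 3 * K by ring] at this

/-- The symbols `S`, `c` approximate the KdV symbols `n`, `1` at scale `h`. -/
structure Near (S c : ℤ → ℝ) (h : ℝ) : Prop where
  S1 : ∀ n : ℤ, |S n - n| ≤ h * (n : ℝ) ^ 2
  S2 : ∀ n : ℤ, |S n - n| ≤ h ^ 2 * |(n : ℝ)| ^ 3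
  c1 : ∀ n : ℤ, |c n - 1| ≤ h * |(n : ℝ)|

/-- The KdV counterpart of `(4/h) sin(hn/4)`. -/
abbrev SK : ℤ → ℝ := fun n => (n : ℝ)

/-- The KdV counterpart of `cos(hn/4)`. -/
abbrev cK : ℤ → ℝ := fun _ => 1

theorem symbK : Symb SK cK Set.univ where
  lo n := by have := abs_nonneg (n : ℝ); simp only [SK]; linarith
  hi n := le_rfl
  c1 n := by simp
  idt a _ b _ d _ _ := by simp only [SK]; push_cast; ring

/-- The ratio `n / S n` of the reciprocals of `S n` and `n`, set to `1` at `n = 0`. -/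
def rI (S : ℤ → ℝ) (n : ℤ) : ℝ := if n = 0 then 1 else n * (S n)⁻¹

/-- The ratio `S n / n`, set to `1` at `n = 0`. -/
def rS (S : ℤ → ℝ) (n : ℤ) : ℝ := if n = 0 then 1 else S n * (n : ℝ)⁻¹

section

variable {S c : ℤ → ℝ} {D : Set ℤ} {h : ℝ}

theorem rI_eq (hS : Symb S c D) (n : ℤ) : (S n)⁻¹ = rI S n * ((n : ℝ))⁻¹ := by
  unfold rI
  by_cases hn : n = 0
  · subst hn; simp [hS.zero]
  · rw [if_neg hn]
    have : (n : ℝ) ≠ 0 := by exact_mod_cast hn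
    field_simp

theorem rS_eq (hS : Symb S c D) (n : ℤ) : S n = rS S n * (n : ℝ) := by
  unfold rS
  by_cases hn : n = 0
  · subst hn; simp [hS.zero]
  · rw [if_neg hn]
    have : (n : ℝ) ≠ 0 := by exact_mod_cast hn
    field_simp

theorem near_one {δ : ℝ} (hδ : 0 ≤ δ) : near δ 2 1 := ⟨by norm_num, by simpa using hδ⟩

theorem rI_near (hS : Symb S c D) (hN : Near S c h) (h0 : 0 ≤ h) (n : ℤ) {R : ℝ} (hR : J n ≤ R) :
    near (h * R) 2 (rI S n) := by
  have hR0 : 0 ≤ h * R := mul_nonneg h0 ((J_pos n).le.trans hR)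
  unfold rI
  by_cases hn : n = 0
  · rw [if_pos hn]; exact near_one hR0
  · rw [if_neg hn]
    have hn1 : (0 : ℝ) < |(n : ℝ)| := abs_pos.2 (by exact_mod_cast hn)
    have hlo := hS.lo n
    have hSp : 0 < |S n| := by linarith
    have hS0 : S n ≠ 0 := hS.ne hn
    refine ⟨?_, ?_⟩
    · rw [abs_mul, abs_inv, ← div_eq_mul_inv, div_le_iff₀ hSp]; linarith
    · rw [show (n : ℝ) * (S n)⁻¹ - 1 = -(S n - n) * (S n)⁻¹ by field_simp; ring, abs_mul,
        abs_neg, abs_inv, ← div_eq_mul_inv, div_le_iff₀ hSp]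
      refine (hN.S1 n).trans ?_
      have h1 : |(n : ℝ)| ≤ R := (abs_le_J n).trans hR
      rw [← sq_abs]
      have h2 : |(n : ℝ)| * |(n : ℝ)| ≤ R * (2 * |S n|) :=
        mul_le_mul h1 (by linarith) hn1.le (by linarith)
      have := mul_le_mul_of_nonneg_left h2 h0
      nlinarith

theorem rS_near (hS : Symb S c D) (hN : Near S c h) (h0 : 0 ≤ h) (n : ℤ) {R : ℝ} (hR : J n ≤ R) :
    near (h * R) 2 (rS S n) := by
  have hR0 : 0 ≤ h * R := mul_nonneg h0 ((J_pos n).le.trans hR)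
  unfold rS
  by_cases hn : n = 0
  · rw [if_pos hn]; exact near_one hR0
  · rw [if_neg hn]
    have hn1 : (0 : ℝ) < |(n : ℝ)| := abs_pos.2 (by exact_mod_cast hn)
    have hn0 : (n : ℝ) ≠ 0 := by exact_mod_cast hn
    have hhi := hS.hi n
    refine ⟨?_, ?_⟩
    · rw [abs_mul, abs_inv, ← div_eq_mul_inv, div_le_iff₀ hn1]; linarith
    · rw [show S n * (n : ℝ)⁻¹ - 1 = (S n - n) * (n : ℝ)⁻¹ by field_simp, abs_mul,
        abs_inv, ← div_eq_mul_inv, div_le_iff₀ hn1]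
      refine (hN.S1 n).trans ?_
      have h1 : |(n : ℝ)| ≤ R := (abs_le_J n).trans hR
      rw [← sq_abs]
      have h2 : |(n : ℝ)| * |(n : ℝ)| ≤ R * |(n : ℝ)| :=
        mul_le_mul_of_nonneg_right h1 hn1.le
      have := mul_le_mul_of_nonneg_left h2 h0
      nlinarith

theorem c_near (hS : Symb S c D) (hN : Near S c h) (h0 : 0 ≤ h) (n : ℤ) {R : ℝ} (hR : J n ≤ R) :
    near (h * R) 2 (c n) := by
  have h1 : |(n : ℝ)| ≤ R := (abs_le_J n).trans hR
  refine ⟨(hS.c1 n).trans (by norm_num), (hN.c1 n).trans ?_⟩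
  have := mul_le_mul_of_nonneg_left h1 h0
  have := mul_nonneg h0 (abs_nonneg (n : ℝ))
  linarith

/-- The quadratic boundary symbol, multiplied by `p`, is the KdV one times a ratio `ρ` close to `1`,
as long as all frequencies involved are at most `R`. -/
theorem m2_ratio (hS : Symb S c D) (hN : Near S c h) (h0 : 0 ≤ h) (k j : ℤ) {R p : ℝ}
    (hk : J k ≤ R) (hj : J j ≤ R) (hkj : J (k - j) ≤ R) (hp : near (h * R) 1 p) :
    ∃ ρ, near (h * R) 6561 ρ ∧ p * m2 S c k j = ρ * m2 SK cK k j := by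
  have hR0 : 0 ≤ h * R := mul_nonneg h0 ((J_pos k).le.trans hk)
  refine ⟨p * c k * rI S j * rI S (k - j), ?_, ?_⟩
  · refine near.mono (((hp.mul2 hR0 (c_near hS hN h0 k hk)).mul2 hR0
      (rI_near hS hN h0 j hj)).mul2 hR0 (rI_near hS hN h0 _ hkj)) hR0 le_rfl (by norm_num)
  · rw [m2_eq, m2_eq, rI_eq hS j, rI_eq hS (k - j)]; simp only [SK, cK]; ring

theorem qq_eq (hS : Symb S c D) (n : ℤ) : qq S c n = rS S n * c n * qq SK cK n := by
  unfold qq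
  conv_lhs => rw [rS_eq hS n]
  simp only [SK, cK]; ring

theorem m3_ratio (hS : Symb S c D) (hN : Near S c h) (h0 : 0 ≤ h) (k : ℤ) (i : ℤ × ℤ) {R p : ℝ}
    (hk : J k ≤ R) (hj : J i.1 ≤ R) (hkj : J (k - i.1) ≤ R) (hp : near (h * R) 1 p) :
    ∃ ρ, near (h * R) 6561 ρ ∧ p * m3 S c k i = ρ * m3 SK cK k i := by
  have hR0 : 0 ≤ h * R := mul_nonneg h0 ((J_pos k).le.trans hk)
  refine ⟨p * c k * rI S i.1 * rI S (k - i.1) * rS S (k - i.1) * c (k - i.1), ?_, ?_⟩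
  · refine near.mono (((((hp.mul2 hR0 (c_near hS hN h0 k hk)).mul2 hR0
      (rI_near hS hN h0 _ hj)).mul2 hR0 (rI_near hS hN h0 _ hkj)).mul2 hR0
      (rS_near hS hN h0 _ hkj)).mul2 hR0 (c_near hS hN h0 _ hkj)) hR0 le_rfl (by norm_num)
  · unfold m3
    rw [qq_eq hS, m2_eq, m2_eq, rI_eq hS i.1, rI_eq hS (k - i.1)]; simp only [SK, cK]; ring

theorem m4_ratio (hS : Symb S c D) (hN : Near S c h) (h0 : 0 ≤ h) (k : ℤ) (i : ℤ × ℤ) {R p : ℝ}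
    (hk : J k ≤ R) (hj : J i.1 ≤ R) (hb : J (k - i.1) ≤ R) (ha : J (i.1 + i.2) ≤ R)
    (hc : J (k - i.2) ≤ R) (hp : near (h * R) 1 p) :
    ∃ ρ, near (h * R) 729 ρ ∧ p * m4 S c k i = ρ * m4 SK cK k i := by
  have hR0 : 0 ≤ h * R := mul_nonneg h0 ((J_pos k).le.trans hk)
  refine ⟨p * c k * c (k - i.1) * rI S i.1 * rI S (i.1 + i.2) * rI S (k - i.1) *
    rI S (k - i.2), ?_, ?_⟩
  · have := ((((((hp.mul2 hR0 (c_near hS hN h0 k hk)).mul2 hR0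
      (c_near hS hN h0 _ hb)).mul2 hR0 (rI_near hS hN h0 _ hj)).mul2 hR0
      (rI_near hS hN h0 _ ha)).mul2 hR0 (rI_near hS hN h0 _ hb)).mul2 hR0
      (rI_near hS hN h0 _ hc))
    norm_num at this
    exact this
  · rw [m4_eq, m4_eq, rI_eq hS i.1, rI_eq hS (k - i.1), rI_eq hS (i.1 + i.2),
      rI_eq hS (k - i.2)]
    simp only [SK, cK]; ring

theorem m4q_ratio (hS : Symb S c D) (hN : Near S c h) (h0 : 0 ≤ h) (k : ℤ) (i : ℤ × ℤ) (n : ℤ)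
    {R p : ℝ} (hk : J k ≤ R) (hj : J i.1 ≤ R) (hb : J (k - i.1) ≤ R) (ha : J (i.1 + i.2) ≤ R)
    (hc : J (k - i.2) ≤ R) (hn : J n ≤ R) (hp : near (h * R) 1 p) :
    ∃ ρ, near (h * R) 6561 ρ ∧
      p * (m4 S c k i * qq S c n) = ρ * (m4 SK cK k i * qq SK cK n) := by
  have hR0 : 0 ≤ h * R := mul_nonneg h0 ((J_pos k).le.trans hk)
  obtain ⟨ρ, hρ, he⟩ := m4_ratio hS hN h0 k i hk hj hb ha hc hp
  refine ⟨ρ * rS S n * c n, ?_, ?_⟩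
  · have := (hρ.mul2 hR0 (rS_near hS hN h0 n hn)).mul2 hR0 (c_near hS hN h0 n hn)
    norm_num at this
    exact this
  · rw [← mul_assoc, he, qq_eq hS]; ring

/-- Product of three symbols against the product of the integers. -/
theorem prod3_close (hS : Symb S c D) (hN : Near S c h) (h0 : 0 ≤ h) (a b d : ℤ) {R : ℝ}
    (ha : J a ≤ R) (hb : J b ≤ R) (hd : J d ≤ R) (hP : J a * J b * J d ≤ R ^ 2) :
    |-(1/8) * (S a * S b * S d) - -(1/8) * (SK a * SK b * SK d)| ≤ h ^ 2 * R ^ 4 := by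
  have A := abs_nonneg (a : ℝ)
  have B := abs_nonneg (b : ℝ)
  have E := abs_nonneg (d : ℝ)
  have hP' : |(a : ℝ)| * |(b : ℝ)| * |(d : ℝ)| ≤ R ^ 2 := by
    refine le_trans ?_ hP
    have := J_pos a; have := J_pos b
    gcongr <;> exact abs_le_J _
  have key : ∀ n : ℤ, J n ≤ R → |S n - n| ≤ h ^ 2 * R ^ 2 * |(n : ℝ)| := fun n hn => by
    refine (hN.S2 n).trans ?_
    have : |(n : ℝ)| ^ 2 ≤ R ^ 2 := pow_le_pow_left₀ (abs_nonneg _) ((abs_le_J n).trans hn) 2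
    calc h ^ 2 * |(n : ℝ)| ^ 3 = h ^ 2 * |(n : ℝ)| ^ 2 * |(n : ℝ)| := by ring
      _ ≤ _ := by gcongr
  have e : -(1/8) * (S a * S b * S d) - -(1/8) * (SK a * SK b * SK d) =
      -(1/8) * ((S a - a) * S b * S d + a * (S b - b) * S d + a * b * (S d - d)) := by
    simp only [SK]; ring
  rw [e, abs_mul]
  have t1 : |(S a - a) * S b * S d| ≤ h ^ 2 * R ^ 2 * |(a : ℝ)| * |(b : ℝ)| * |(d : ℝ)| := by
    rw [abs_mul, abs_mul]
    exact mul_le_mul (mul_le_mul (key a ha) (hS.hi b) (abs_nonneg _) (by positivity)) (hS.hi d)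
      (abs_nonneg _) (by positivity)
  have t2 : |a * (S b - b) * S d| ≤ |(a : ℝ)| * (h ^ 2 * R ^ 2 * |(b : ℝ)|) * |(d : ℝ)| := by
    rw [abs_mul, abs_mul]
    exact mul_le_mul (mul_le_mul_of_nonneg_left (key b hb) A) (hS.hi d) (abs_nonneg _)
      (by positivity)
  have t3 : |a * b * (S d - d)| ≤ |(a : ℝ)| * |(b : ℝ)| * (h ^ 2 * R ^ 2 * |(d : ℝ)|) := by
    rw [abs_mul, abs_mul]
    have := key d hd
    gcongr
  have t := (abs_add_le ((S a - a) * S b * S d + a * (S b - b) * S d) (a * b * (S d - d))).trans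
    (add_le_add ((abs_add_le _ _).trans (add_le_add t1 t2)) t3)
  have hf : h ^ 2 * R ^ 2 * (|(a : ℝ)| * |(b : ℝ)| * |(d : ℝ)|) ≤ h ^ 2 * R ^ 2 * R ^ 2 := by
    gcongr
  have : |(-(1/8 : ℝ))| = 1/8 := by norm_num
  rw [this]
  nlinarith [show 0 ≤ h ^ 2 * R ^ 2 * R ^ 2 by positivity]

end

theorem eI_sub_le (x y : ℝ) : ‖eI x - eI y‖ ≤ |x - y| := by
  have : eI x - eI y = eI y * (Complex.exp (Complex.I * ((x - y : ℝ) : ℂ)) - 1) := by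
    rw [mul_sub, mul_one]; congr 1
    rw [show Complex.exp (Complex.I * ((x - y : ℝ) : ℂ)) = eI (x - y) from rfl, ← eI_add]
    congr 1; ring
  rw [this, norm_mul, eI_norm, one_mul]
  exact Real.norm_exp_I_mul_ofReal_sub_one_le

/-- The error factor `h^{s/2} (1+t)^{s/2}`. -/
def Ef (s h t : ℝ) : ℝ := h ^ (s / 2) * (1 + t) ^ (s / 2)

theorem Ef_nonneg {s h t : ℝ} (h0 : 0 ≤ h) (ht : 0 ≤ t) : 0 ≤ Ef s h t :=
  mul_nonneg (Real.rpow_nonneg h0 _) (Real.rpow_nonneg (by linarith) _)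

theorem le_rpow_of_min {x v θ : ℝ} (hx : 0 ≤ x) (h0 : 0 ≤ θ) (h1 : θ ≤ 1) (hv : v ≤ 1)
    (hvx : v ≤ x) : v ≤ x ^ θ := by
  by_cases h : x ≤ 1
  · by_cases hx0 : x = 0
    · exact hvx.trans ((by rw [hx0] : x = 0).le.trans (Real.rpow_nonneg hx _))
    · refine hvx.trans ?_
      have := Real.rpow_le_rpow_of_exponent_ge (lt_of_le_of_ne hx (Ne.symm hx0)) h h1
      rwa [Real.rpow_one] at this
  · exact hv.trans (Real.one_le_rpow (by linarith) h0)

/-- Interpolating between the trivial bound and the first order bound turns closeness of symbols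
and phases into a gain of `h^{s/2}` at the cost of `s` derivatives. -/
theorem sym_close {s h t R ρ K : ℝ} {e e' : ℂ} (hs0 : 0 ≤ s) (hs1 : s ≤ 1) (h0 : 0 ≤ h)
    (ht : 0 ≤ t) (hR : 1 ≤ R) (hρ : near (h * R) K ρ) (he : ‖e‖ = 1) (he' : ‖e'‖ = 1)
    (hd : ‖e - e'‖ ≤ t * (h ^ 2 * R ^ 4)) :
    ‖(ρ : ℂ) * e - e'‖ ≤ (K + 3) * (Ef s h t * R ^ s) := by
  have hK : 0 ≤ K := (abs_nonneg ρ).trans hρ.1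
  have hR0 : 0 ≤ R := by linarith
  have hEf := Ef_nonneg (s := s) h0 ht
  have hRs : 0 ≤ R ^ s := Real.rpow_nonneg hR0 _
  have h1t : 1 ≤ (1 + t) ^ (s / 2) := Real.one_le_rpow (by linarith) (by linarith)
  have a1 : |ρ - 1| ≤ (K + 1) * (Ef s h t * R ^ s) := by
    have hlt : |ρ - 1| ≤ K + 1 := by
      refine (abs_sub _ _).trans ?_
      rw [abs_one]; linarith [hρ.1]
    have : |ρ - 1| / (K + 1) ≤ (h * R) ^ (s / 2) := by
      refine le_rpow_of_min (by positivity) (by linarith) (by linarith) ?_ ?_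
      · rw [div_le_one (by linarith)]; exact hlt
      · rw [div_le_iff₀ (by linarith)]
        have := hρ.2
        have : 0 ≤ h * R := by positivity
        linarith
    rw [div_le_iff₀ (by linarith)] at this
    refine this.trans ?_
    rw [mul_comm, Real.mul_rpow h0 hR0]
    refine mul_le_mul_of_nonneg_left ?_ (by linarith)
    unfold Ef
    refine mul_le_mul ?_ (Real.rpow_le_rpow_of_exponent_le hR (by linarith))
      (Real.rpow_nonneg hR0 _) hEf
    exact le_mul_of_one_le_right (Real.rpow_nonneg h0 _) h1t
  have a2 : ‖e - e'‖ ≤ 2 * (Ef s h t * R ^ s) := by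
    have hlt : ‖e - e'‖ ≤ 2 := by
      refine (norm_sub_le _ _).trans ?_
      rw [he, he']; norm_num
    have : ‖e - e'‖ / 2 ≤ (t * (h ^ 2 * R ^ 4)) ^ (s / 4) := by
      refine le_rpow_of_min (by positivity) (by linarith) (by linarith) (by linarith) ?_
      have := norm_nonneg (e - e')
      linarith
    have e1 : (t * (h ^ 2 * R ^ 4)) ^ (s / 4) = t ^ (s / 4) * (h ^ (s / 2) * R ^ s) := by
      rw [Real.mul_rpow ht (by positivity), Real.mul_rpow (by positivity) (by positivity),
        ← Real.rpow_natCast h 2, ← Real.rpow_natCast R 4, ← Real.rpow_mul h0, ← Real.rpow_mul hR0]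
      norm_num
      left
      congr 2 <;> ring
    rw [e1] at this
    have e2 : t ^ (s / 4) ≤ (1 + t) ^ (s / 2) :=
      (Real.rpow_le_rpow ht (by linarith) (by linarith)).trans
        (Real.rpow_le_rpow_of_exponent_le (by linarith) (by linarith))
    have e3 : t ^ (s / 4) * (h ^ (s / 2) * R ^ s) ≤ (1 + t) ^ (s / 2) * (h ^ (s / 2) * R ^ s) :=
      mul_le_mul_of_nonneg_right e2 (mul_nonneg (Real.rpow_nonneg h0 _) hRs)
    unfold Ef
    nlinarith
  calc ‖(ρ : ℂ) * e - e'‖ = ‖((ρ - 1 : ℝ) : ℂ) * e + (e - e')‖ := by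
        congr 1; push_cast; ring
    _ ≤ |ρ - 1| + ‖e - e'‖ := by
        refine (norm_add_le _ _).trans ?_
        rw [norm_mul, he, mul_one, Complex.norm_real, Real.norm_eq_abs]
    _ ≤ _ := by linarith

/-! ### Comparison of the multilinear operators -/

/-- Sequence of `H^s` amplitudes. -/
def Js (s : ℝ) (x : ℤ → ℂ) : ℤ → ℝ := fun k => J k ^ s * ‖x k‖

theorem Js_nonneg (s : ℝ) (x : ℤ → ℂ) (k : ℤ) : 0 ≤ Js s x k :=
  mul_nonneg (Real.rpow_nonneg (J_pos k).le _) (norm_nonneg _)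

theorem nm_le_Js {s : ℝ} (hs : 0 ≤ s) (x : ℤ → ℂ) (k : ℤ) : ‖x k‖ ≤ Js s x k :=
  le_mul_of_one_le_left (norm_nonneg _) (Real.one_le_rpow (J_ge k) hs)

/-- Difference sequence. -/
abbrev df (x y : ℤ → ℂ) : ℤ → ℂ := fun k => x k - y k

/-- Data for comparing the multilinear operators of two systems: `x` is bounded by `v` in `H^s`,
`x'` by `n` in `ℓ²`, and `x - x'` by `d` in `ℓ²`. -/
structure Cmp (s h t σ : ℝ) (S c : ℤ → ℝ) (D : Set ℤ) (x x' : ℤ → ℂ) (v n d : ℝ) : Prop where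
  s0 : 0 ≤ s
  s1 : s ≤ 1
  h0 : 0 ≤ h
  t0 : 0 ≤ t
  sg : |σ| = 1
  symb : Symb S c D
  near : Near S c h
  bv : Bd (Js s x) v
  bn : Bd (nm x') n
  bd : Bd (nm (df x x')) d

theorem J_le_mul (k j : ℤ) : J k ≤ J j * J (k - j) := by
  have := J_add_le_mul j (k - j); simpa using this

theorem cmp_tsum {ι : Type*} {f f' : ι → ℂ} {g : ι → ℝ} {G : ℝ} (hs : Summable f')
    (hg : SB g G) (h : ∀ i, ‖f i - f' i‖ ≤ g i) : ‖∑' i, f i - ∑' i, f' i‖ ≤ G := by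
  obtain ⟨h1, h2⟩ := hg.norm_tsum h
  have hf : Summable f := (h1.add hs).congr fun i => by ring
  rwa [← hf.tsum_sub hs]

theorem eI_phase_sub {t σ a b δ : ℝ} (ht : 0 ≤ t) (hσ : |σ| = 1) (h : |a - b| ≤ δ) :
    ‖eI (t * (σ * a)) - eI (t * (σ * b))‖ ≤ t * δ := by
  refine (eI_sub_le _ _).trans ?_
  rw [show t * (σ * a) - t * (σ * b) = t * (σ * (a - b)) by ring, abs_mul, abs_mul, hσ,
    abs_of_nonneg ht, one_mul]
  exact mul_le_mul_of_nonneg_left h ht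

theorem mul_sub_split {A B T T' : ℂ} : ‖A * T - B * T'‖ ≤ ‖A - B‖ * ‖T‖ + ‖B‖ * ‖T - T'‖ := by
  rw [show A * T - B * T' = (A - B) * T + B * (T - T') by ring, ← norm_mul, ← norm_mul]
  exact norm_add_le _ _

section

variable {s h t σ : ℝ} {S c : ℤ → ℝ} {D : Set ℤ} {x x' : ℤ → ℂ} {v n d : ℝ}

theorem Cmp.bx (H : Cmp s h t σ S c D x x' v n d) : Bd (nm x) v :=
  H.bv.mono (fun _ => norm_nonneg _) (nm_le_Js H.s0 x) le_rfl

theorem Cmp.E0 (H : Cmp s h t σ S c D x x' v n d) : 0 ≤ Ef s h t := Ef_nonneg H.h0 H.t0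

/-- Pointwise symbol comparison. -/
theorem Cmp.close (H : Cmp s h t σ S c D x x' v n d) {pk a b ρ K a' R : ℝ} {e e' : ℂ}
    (hR : 1 ≤ R) (hρ : FPU.near (h * R) K ρ) (hρ' : pk * a = ρ * b) (hb : |b| ≤ a')
    (he : ‖e‖ = 1) (he' : ‖e'‖ = 1) (hd : ‖e - e'‖ ≤ t * (h ^ 2 * R ^ 4)) :
    ‖(pk : ℂ) * ((a : ℂ) * e) - (b : ℂ) * e'‖ ≤ a' * ((K + 3) * (Ef s h t * R ^ s)) := by
  have e1 : (pk : ℂ) * ((a : ℂ) * e) - (b : ℂ) * e' = (b : ℂ) * ((ρ : ℂ) * e - e') := by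
    have : (pk : ℂ) * (a : ℂ) = (ρ : ℂ) * (b : ℂ) := by exact_mod_cast hρ'
    linear_combination e * this
  rw [e1, norm_mul, Complex.norm_real, Real.norm_eq_abs]
  exact mul_le_mul hb (sym_close H.s0 H.s1 H.h0 H.t0 hR hρ he he' hd) (norm_nonneg _)
    ((abs_nonneg _).trans hb)

theorem Bi_cmp (H : Cmp s h t σ S c D x x' v n d) {A B : ℤ → ℂ} {k : ℤ} {ε m : ℝ}
    (hε : 0 ≤ ε) (hm : 0 ≤ m)
    (hA : ∀ j, ‖A j - B j‖ ≤ ε * (J j * J (k - j)) ^ s) (hB : ∀ j, ‖B j‖ ≤ m) :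
    ‖Bi A x x k - Bi B x' x' k‖ ≤ ε * (v * v) + m * (d * v + n * d) := by
  have g := ((H.bv.conv H.bv k).const_mul hε).add
    (((H.bd.conv H.bx k).add (H.bn.conv H.bd k)).const_mul hm)
  refine cmp_tsum ((Bi_bd hm hB H.bn H.bn k).norm_tsum fun _ => le_rfl).1 g fun j => ?_
  refine mul_sub_split.trans (add_le_add ?_ ?_)
  · refine (mul_le_mul_of_nonneg_right (hA j) (norm_nonneg _)).trans (le_of_eq ?_)
    rw [norm_mul, Real.mul_rpow (J_pos _).le (J_pos _).le]; unfold Js; ring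
  · refine mul_le_mul (hB j) ?_ (norm_nonneg _) hm
    rw [show x j * x (k - j) - x' j * x' (k - j) =
      (x j - x' j) * x (k - j) + x' j * (x (k - j) - x' (k - j)) by ring, ← norm_mul, ← norm_mul]
    exact norm_add_le _ _

/-- The quadratic phases differ by `O(t h² R⁴)` with `R = ⟨j⟩⟨k-j⟩`, because `S n - n` is of second
order in `h`. -/
theorem Cmp.e2_sub (H : Cmp s h t σ S c D x x' v n d) (k j : ℤ) :
    ‖e2 S σ t k j - e2 SK σ t k j‖ ≤ t * (h ^ 2 * (J j * J (k - j)) ^ 4) := by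
  refine eI_phase_sub H.t0 H.sg ?_
  have h1 := J_ge j
  have h2 := J_ge (k - j)
  have h3 := J_le_mul k j
  refine prod3_close H.symb H.near H.h0 _ _ _ ?_ ?_ ?_ ?_
  · rwa [show j + (k - j) = k by ring]
  · nlinarith
  · nlinarith
  · rw [show j + (k - j) = k by ring, sq, mul_assoc]
    exact mul_le_mul_of_nonneg_right h3 (by positivity)

theorem Cmp.GG_sub (H : Cmp s h t σ S c D x x' v n d) (k : ℤ) :
    ‖GG S σ t x k - GG SK σ t x' k‖ ≤ 4 * (Ef s h t * (v * v) + d * (v + n)) := by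
  have h0 := H.E0
  have := Bi_cmp H (A := e2 S σ t k) (B := e2 SK σ t k) (k := k) (ε := 4 * Ef s h t) (m := 1)
    (by positivity) zero_le_one (fun j => ?_) (fun j => (e2_norm _ _ _ _ _).le)
  · have hd := H.bd.1; have hv := H.bv.1; have hn := H.bn.1
    refine this.trans ?_
    nlinarith [mul_nonneg hd hv, mul_nonneg hd hn]
  · have hR : 1 ≤ J j * J (k - j) := one_le_mul_of_one_le_of_one_le (J_ge _) (J_ge _)
    have := H.close (pk := 1) (a := 1) (b := 1) (ρ := 1) (K := 1) (a' := 1) hR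
      ⟨by norm_num, by simpa using mul_nonneg H.h0 (by linarith)⟩ rfl (by norm_num)
      (e2_norm S σ t k j) (e2_norm SK σ t k j) (H.e2_sub k j)
    norm_num at this
    rwa [← mul_assoc] at this

/-- The nonlinearity of an `H^s` sequence is bounded pointwise by `⟨k⟩^(-s)`. -/
theorem Cmp.GG_Js (H : Cmp s h t σ S c D x x' v n d) : Sp (Js s (GG S σ t x)) (v * v) := by
  refine ⟨mul_nonneg H.bv.1 H.bv.1, Js_nonneg _ _, fun k => ?_⟩
  have g := H.bv.conv H.bv k
  have h1 := (Bi_bd zero_le_one (fun j => (e2_norm S σ t k j).le) H.bx H.bx k).norm_tsum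
    fun _ => le_rfl
  have hk : 0 < J k ^ s := Real.rpow_pos_of_pos (J_pos k) _
  have g' : SB (fun j => ‖e2 S σ t k j * (x j * x (k - j))‖) ((J k ^ s)⁻¹ * (v * v)) := by
    refine (g.const_mul (inv_pos.2 hk).le).mono (fun _ => norm_nonneg _) (fun j => ?_) le_rfl
    rw [norm_mul, e2_norm, one_mul, norm_mul, inv_mul_eq_div, le_div_iff₀ hk]
    have : J k ^ s ≤ J j ^ s * J (k - j) ^ s := by
      rw [← Real.mul_rpow (J_pos _).le (J_pos _).le]
      exact Real.rpow_le_rpow (J_pos k).le (J_le_mul k j) H.s0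
    calc ‖x j‖ * ‖x (k - j)‖ * J k ^ s ≤ ‖x j‖ * ‖x (k - j)‖ * (J j ^ s * J (k - j) ^ s) := by
          gcongr
      _ = _ := by unfold Js; ring
  have h2 := (g'.norm_tsum fun _ => le_rfl).2
  rw [inv_mul_eq_div, le_div_iff₀ hk] at h2
  unfold Js GG Bi
  linarith

/-- The factor `pk`, later specialised to `sinc²` or to `0`, is absorbed in the comparison of
symbols. -/
theorem Cmp.B2_sub (H : Cmp s h t σ S c D x x' v n d) {k : ℤ} {pk : ℝ}
    (hp : FPU.near (h * J k) 1 pk) :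
    ‖(pk : ℂ) * B2 S c σ t x k - B2 SK cK σ t x' k‖ ≤
      300000 * (J k)⁻¹ * (Ef s h t * (v * v) + d * (v + n)) := by
  have h0 := H.E0
  have hJ := Jinv_pos k
  have e : (pk : ℂ) * B2 S c σ t x k =
      Bi (fun j => (pk : ℂ) * ((m2 S c k j : ℂ) * e2 S σ t k j)) x x k := by
    unfold B2 Bi
    rw [← tsum_mul_left]; exact tsum_congr fun j => by ring
  rw [e]
  have := Bi_cmp H (A := fun j => (pk : ℂ) * ((m2 S c k j : ℂ) * e2 S σ t k j))
    (B := fun j => ((m2 SK cK k j : ℂ) * e2 SK σ t k j)) (k := k)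
    (ε := 32 * (J k)⁻¹ * (6564 * Ef s h t)) (m := 32 * (J k)⁻¹)
    (by positivity) (by positivity) (fun j => ?_)
    (fun j => by rw [e2, norm_real_phase]; exact symbK.m2_le k j)
  · have hd := H.bd.1; have hv := H.bv.1; have hn := H.bn.1
    refine this.trans ?_
    have : 0 ≤ (J k)⁻¹ * (d * v) := by positivity
    have : 0 ≤ (J k)⁻¹ * (d * n) := by positivity
    have : 0 ≤ (J k)⁻¹ * (Ef s h t * (v * v)) := by positivity
    nlinarith
  · have a1 := J_ge j
    have a2 := J_ge (k - j)
    have a3 := J_le_mul k j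
    have hR : 1 ≤ J j * J (k - j) := one_le_mul_of_one_le_of_one_le a1 a2
    have hp' : FPU.near (h * (J j * J (k - j))) 1 pk :=
      hp.mono (mul_nonneg H.h0 (J_pos _).le) (mul_le_mul_of_nonneg_left a3 H.h0) le_rfl
    obtain ⟨ρ, hρ, hρ'⟩ := m2_ratio H.symb H.near H.h0 k j a3 (by nlinarith) (by nlinarith) hp'
    refine (H.close hR hρ hρ' (symbK.m2_le k j) (e2_norm S σ t k j) (e2_norm SK σ t k j)
      (H.e2_sub k j)).trans (le_of_eq ?_)
    norm_num; ring

/-- Frequency product at the trilinear level. -/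
def RJ (k : ℤ) (p : ℤ × ℤ) : ℝ := J p.1 * J p.2 * J (k - p.1 - p.2)

theorem RJ_facts (k : ℤ) (p : ℤ × ℤ) : 1 ≤ RJ k p ∧ J k ≤ RJ k p ∧ J p.1 ≤ RJ k p ∧
    J p.2 ≤ RJ k p ∧ J (k - p.1 - p.2) ≤ RJ k p ∧ J (p.1 + p.2) ≤ RJ k p ∧
    J (k - p.1) ≤ RJ k p ∧ J (k - p.2) ≤ RJ k p ∧
    J (p.1 + p.2) * J (k - p.1) * J (k - p.2) ≤ RJ k p ^ 2 := by
  have a1 := J_ge p.1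
  have a2 := J_ge p.2
  have a3 := J_ge (k - p.1 - p.2)
  have b1 := J_add_le_mul p.1 p.2
  have b2 := J_le_mul (k - p.1) p.2
  have b3 := J_le_mul (k - p.2) p.1
  rw [show k - p.2 - p.1 = k - p.1 - p.2 by ring] at b3
  have b4 := J_le_mul k p.1
  unfold RJ
  generalize J p.1 = a at *
  generalize J p.2 = b at *
  generalize J (k - p.1 - p.2) = e at *
  have ab : 1 ≤ a * b := one_le_mul_of_one_le_of_one_le a1 a2
  have be : 1 ≤ b * e := one_le_mul_of_one_le_of_one_le a2 a3
  have ae : 1 ≤ a * e := one_le_mul_of_one_le_of_one_le a1 a3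
  have q1 := J_pos (p.1 + p.2)
  have q2 := J_pos (k - p.1)
  have q3 := J_pos (k - p.2)
  refine ⟨by nlinarith, ?_, by nlinarith, by nlinarith, by nlinarith, by nlinarith,
    by nlinarith, by nlinarith, ?_⟩
  · rw [mul_assoc]
    exact b4.trans (mul_le_mul_of_nonneg_left b2 (by linarith))
  · calc J (p.1 + p.2) * J (k - p.1) * J (k - p.2) ≤ (a * b) * (b * e) * (a * e) := by gcongr
      _ = _ := by ring

theorem Cmp.e3_sub (H : Cmp s h t σ S c D x x' v n d) (k : ℤ) (p : ℤ × ℤ) :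
    ‖e3 S σ t k p - e3 SK σ t k p‖ ≤ t * (h ^ 2 * RJ k p ^ 4) := by
  obtain ⟨-, -, -, -, -, h1, h2, h3, h4⟩ := RJ_facts k p
  exact eI_phase_sub H.t0 H.sg (prod3_close H.symb H.near H.h0 _ _ _ h1 h2 h3 h4)

theorem RJ_pr (s : ℝ) (k : ℤ) (p : ℤ × ℤ) (x y z : ℤ → ℂ) :
    RJ k p ^ s * ‖trip k x y z p‖ = pr k (Js s x) (Js s y) (Js s z) p := by
  have := J_pos p.1; have := J_pos p.2; have := J_pos (k - p.1 - p.2)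
  rw [trip_norm]; unfold RJ pr Js
  rw [Real.mul_rpow (by positivity) (by positivity), Real.mul_rpow (by positivity) (by positivity)]
  ring

/-- Comparison of trilinear operators. -/
theorem Tr_cmp {A B : ℤ × ℤ → ℂ} {y z y' z' : ℤ → ℂ} {k : ℤ} {ε m P0 P1 P2 P3 P' : ℝ}
    {q1 q2 q3 : ℤ × ℤ → ℝ}
    (hε : 0 ≤ ε) (hm : 0 ≤ m) (hP0 : 0 ≤ P0) (hP1 : 0 ≤ P1) (hP2 : 0 ≤ P2) (hP3 : 0 ≤ P3)
    (hP' : 0 ≤ P')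
    (hA : ∀ p, ‖A p - B p‖ ≤ ε * wt k p * RJ k p ^ s) (hB : ∀ p, ‖B p‖ ≤ m * wt k p)
    (h' : SB (fun p => pr k (nm x') (nm y') (nm z') p ^ 2) (P' ^ 2))
    (h0 : SB (fun p => pr k (Js s x) (Js s y) (Js s z) p ^ 2) (P0 ^ 2))
    (hq : ∀ p, ‖trip k x y z p - trip k x' y' z' p‖ ≤ q1 p + q2 p + q3 p)
    (hq1 : ∀ p, 0 ≤ q1 p) (hq2 : ∀ p, 0 ≤ q2 p) (hq3 : ∀ p, 0 ≤ q3 p)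
    (h1 : SB (fun p => q1 p ^ 2) (P1 ^ 2)) (h2 : SB (fun p => q2 p ^ 2) (P2 ^ 2))
    (h3 : SB (fun p => q3 p ^ 2) (P3 ^ 2)) :
    ‖Tr A x y z k - Tr B x' y' z' k‖ ≤ Cw * (J k)⁻¹ * (ε * P0 + m * (P1 + P2 + P3)) := by
  have hw : ∀ {q : ℤ × ℤ → ℝ} {P : ℝ}, (∀ p, 0 ≤ q p) → 0 ≤ P → SB (fun p => q p ^ 2) (P ^ 2) →
      SB (fun p => wt k p * q p) (Cw * (J k)⁻¹ * P) := fun hq hP h =>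
    SB.cs (fun p => (wt_pos k p).le) hq (mul_nonneg Cw_nonneg (Jinv_pos k).le) hP (wt_sq k) h
  have hpr : ∀ p, 0 ≤ pr k (Js s x) (Js s y) (Js s z) p := fun p =>
    mul_nonneg (mul_nonneg (Js_nonneg _ _ _) (Js_nonneg _ _ _)) (Js_nonneg _ _ _)
  have g := ((hw hpr hP0 h0).const_mul hε).add
    ((((hw hq1 hP1 h1).add (hw hq2 hP2 h2)).add (hw hq3 hP3 h3)).const_mul hm)
  refine (cmp_tsum ((Tr_bd hm hB hP' h').norm_tsum fun _ => le_rfl).1 g fun p => ?_).trans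
    (le_of_eq (by ring))
  refine mul_sub_split.trans (add_le_add ?_ ?_)
  · refine (mul_le_mul_of_nonneg_right (hA p) (norm_nonneg _)).trans (le_of_eq ?_)
    rw [← RJ_pr]; ring
  · refine (mul_le_mul (hB p) (hq p) (norm_nonneg _)
      (mul_nonneg hm (wt_pos k p).le)).trans (le_of_eq ?_)
    ring

theorem trip_sub (k : ℤ) (x y z x' y' z' : ℤ → ℂ) (p : ℤ × ℤ) :
    ‖trip k x y z p - trip k x' y' z' p‖ ≤ pr k (nm (df x x')) (nm y) (nm z) p +
      pr k (nm x') (nm (df y y')) (nm z) p + pr k (nm x') (nm y') (nm (df z z')) p := by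
  rw [show trip k x y z p - trip k x' y' z' p = trip k (df x x') y z p +
    trip k x' (df y y') z p + trip k x' y' (df z z') p by unfold trip df; ring,
    ← trip_norm, ← trip_norm, ← trip_norm]
  exact norm_add₃_le

/-- Telescoping in which the second slot is exchanged first. -/
theorem trip_sub2 (k : ℤ) (x y z x' y' z' : ℤ → ℂ) (p : ℤ × ℤ) :
    ‖trip k x y z p - trip k x' y' z' p‖ ≤ pr k (nm x) (nm (df y y')) (nm z) p +
      pr k (nm (df x x')) (nm y') (nm z) p + pr k (nm x') (nm y') (nm (df z z')) p := by
  rw [show trip k x y z p - trip k x' y' z' p = trip k x (df y y') z p +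
    trip k (df x x') y' z p + trip k x' y' (df z z') p by unfold trip df; ring,
    ← trip_norm, ← trip_norm, ← trip_norm]
  exact norm_add₃_le

/-- Telescoping in which the third slot is exchanged first. -/
theorem trip_sub3 (k : ℤ) (x y z x' y' z' : ℤ → ℂ) (p : ℤ × ℤ) :
    ‖trip k x y z p - trip k x' y' z' p‖ ≤ pr k (nm x) (nm y) (nm (df z z')) p +
      pr k (nm (df x x')) (nm y) (nm z') p + pr k (nm x') (nm (df y y')) (nm z') p := by
  rw [show trip k x y z p - trip k x' y' z' p = trip k x y (df z z') p +
    trip k (df x x') y z' p + trip k x' (df y y') z' p by unfold trip df; ring,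
    ← trip_norm, ← trip_norm, ← trip_norm]
  exact norm_add₃_le

theorem pr_nonneg' {x y z : ℤ → ℝ} (hx : ∀ k, 0 ≤ x k) (hy : ∀ k, 0 ≤ y k) (hz : ∀ k, 0 ≤ z k)
    (k : ℤ) (p : ℤ × ℤ) : 0 ≤ pr k x y z p := mul_nonneg (mul_nonneg (hx _) (hy _)) (hz _)

theorem pr_nm_nonneg (k : ℤ) (x y z : ℤ → ℂ) (p : ℤ × ℤ) : 0 ≤ pr k (nm x) (nm y) (nm z) p :=
  pr_nonneg' (fun _ => norm_nonneg _) (fun _ => norm_nonneg _) (fun _ => norm_nonneg _) k p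

theorem Tr_smul (a : ℂ) (μ : ℤ × ℤ → ℂ) (x y z : ℤ → ℂ) (k : ℤ) :
    a * Tr μ x y z k = Tr (fun p => a * μ p) x y z k := by
  unfold Tr
  rw [← tsum_mul_left]; exact tsum_congr fun j => by ring

/-- Symbol comparison in the trilinear case. -/
theorem Cmp.close3 (H : Cmp s h t σ S c D x x' v n d) {k : ℤ} {p : ℤ × ℤ} {pk a b ρ K : ℝ}
    (hK : K ≤ 6561) (hρ : FPU.near (h * RJ k p) K ρ) (hρ' : pk * a = ρ * b)
    (hb : |b| ≤ 2048 * wt k p) :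
    ‖(pk : ℂ) * ((a : ℂ) * e3 S σ t k p) - (b : ℂ) * e3 SK σ t k p‖ ≤
      13443072 * Ef s h t * wt k p * RJ k p ^ s := by
  have h1 := (RJ_facts k p).1
  refine (H.close h1 (hρ.mono (mul_nonneg H.h0 (by linarith)) le_rfl hK) hρ' hb
    (e3_norm S σ t k p) (e3_norm SK σ t k p) (H.e3_sub k p)).trans (le_of_eq ?_)
  ring

theorem Cmp.near_RJ (H : Cmp s h t σ S c D x x' v n d) {k : ℤ} {pk : ℝ}
    (hp : FPU.near (h * J k) 1 pk) (p : ℤ × ℤ) : FPU.near (h * RJ k p) 1 pk :=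
  hp.mono (mul_nonneg H.h0 (J_pos _).le)
    (mul_le_mul_of_nonneg_left (RJ_facts k p).2.1 H.h0) le_rfl

theorem Cmp.B3_sub (H : Cmp s h t σ S c D x x' v n d) {k : ℤ} {pk : ℝ}
    (hp : FPU.near (h * J k) 1 pk) :
    ‖(pk : ℂ) * B3 S c σ t x k - B3 SK cK σ t x' k‖ ≤
      13443072 * Cw * (J k)⁻¹ * (Ef s h t * v ^ 3 + d * (v + n) ^ 2) := by
  have hE := H.E0
  have hd := H.bd.1; have hv := H.bv.1; have hn := H.bn.1
  unfold B3
  rw [Tr_smul]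
  have key := Tr_cmp (s := s) (k := k) (x := x) (y := x) (z := x) (x' := x') (y' := x') (z' := x')
    (A := fun p => (pk : ℂ) * ((m4 S c k p : ℂ) * e3 S σ t k p))
    (B := fun p => (m4 SK cK k p : ℂ) * e3 SK σ t k p)
    (ε := 13443072 * Ef s h t) (m := 2048) (P0 := v * v * v) (P1 := d * v * v) (P2 := n * d * v)
    (P3 := n * n * d) (P' := n * n * n)
    (by positivity) (by positivity) (by positivity) (by positivity) (by positivity)
    (by positivity) (by positivity) (fun p => ?_)
    (fun p => by rw [e3, norm_real_phase]; exact symbK.m4_le k p)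
    (pr_sq1 H.bn.sp H.bn H.bn k) (pr_sq1 H.bv.sp H.bv H.bv k) (trip_sub k x x x x' x' x')
    (pr_nm_nonneg k _ _ _) (pr_nm_nonneg k _ _ _) (pr_nm_nonneg k _ _ _)
    (pr_sq1 H.bd.sp H.bx H.bx k) (pr_sq1 H.bn.sp H.bd H.bx k) (pr_sq1 H.bn.sp H.bn H.bd k)
  · refine key.trans ?_
    have := Jinv_pos k
    have := Cw_nonneg
    rw [show 13443072 * Cw * (J k)⁻¹ * (Ef s h t * v ^ 3 + d * (v + n) ^ 2) = Cw * (J k)⁻¹ *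
      (13443072 * (Ef s h t * v ^ 3 + d * (v + n) ^ 2)) by ring]
    refine mul_le_mul_of_nonneg_left ?_ (by positivity)
    have : 0 ≤ d * (v * v) := by positivity
    have : 0 ≤ d * (v * n) := by positivity
    have : 0 ≤ d * (n * n) := by positivity
    nlinarith
  · obtain ⟨-, h1, h2, h3, h4, h5, h6, h7, -⟩ := RJ_facts k p
    obtain ⟨ρ, hρ, hρ'⟩ := m4_ratio H.symb H.near H.h0 k p h1 h2 h6 h5 h7 (H.near_RJ hp p)
    exact H.close3 (by norm_num) hρ hρ' (symbK.m4_le k p)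

theorem poly4_le {E v n d g : ℝ} (hE : 0 ≤ E) (hv : 0 ≤ v) (hn : 0 ≤ n)
    (hd : 0 ≤ d) (hg : g = 4 * (E * (v * v) + d * (v + n))) :
    13443072 * E * v ^ 4 + 2048 * (g * v * v + d * (n * n) * v + n * (n * n) * d) ≤
      13460000 * (E * v ^ 4 + d * (v + n) ^ 3) := by
  subst hg
  have : 0 ≤ d * v ^ 3 := by positivity
  have : 0 ≤ d * (v ^ 2 * n) := by positivity
  have : 0 ≤ d * (v * n ^ 2) := by positivity
  have : 0 ≤ d * n ^ 3 := by positivity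
  have : 0 ≤ E * v ^ 4 := by positivity
  nlinarith

theorem Cmp.QQ_sub (H : Cmp s h t σ S c D x x' v n d) {k : ℤ} {pk : ℝ}
    (hp : FPU.near (h * J k) 1 pk) :
    ‖(pk : ℂ) * QQ S c σ t x k - QQ SK cK σ t x' k‖ ≤
      40380000 * Cw * (J k)⁻¹ * (Ef s h t * v ^ 4 + d * (v + n) ^ 3) := by
  have hE := H.E0
  have hd := H.bd.1; have hv := H.bv.1; have hn := H.bn.1
  set G := GG S σ t x with hG
  set G' := GG SK σ t x' with hG'
  set g := 4 * (Ef s h t * (v * v) + d * (v + n)) with hg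
  have hg0 : 0 ≤ g := by positivity
  have sG : Sp (Js s G) (v * v) := H.GG_Js
  have sG' : Sp (nm G') (n * n) := GG_sp H.bn
  have sD : Sp (nm (df G G')) g := ⟨hg0, fun _ => norm_nonneg _, H.GG_sub⟩
  have hJ := Jinv_pos k
  have hC := Cw_nonneg
  have fin : ∀ {T : ℝ}, T ≤ Cw * (J k)⁻¹ * (13443072 * Ef s h t * (v * v * (v * v)) +
      2048 * (g * v * v + d * (n * n) * v + n * (n * n) * d)) →
      T ≤ 13460000 * Cw * (J k)⁻¹ * (Ef s h t * v ^ 4 + d * (v + n) ^ 3) := fun hT => by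
    refine hT.trans ?_
    rw [show 13460000 * Cw * (J k)⁻¹ * (Ef s h t * v ^ 4 + d * (v + n) ^ 3) = Cw * (J k)⁻¹ *
      (13460000 * (Ef s h t * v ^ 4 + d * (v + n) ^ 3)) by ring]
    refine mul_le_mul_of_nonneg_left (le_trans (le_of_eq ?_) (poly4_le hE hv hn hd hg))
      (by positivity)
    ring
  have T1 := Tr_cmp (s := s) (k := k) (x := G) (y := x) (z := x) (x' := G') (y' := x') (z' := x')
    (A := fun p => (pk : ℂ) * (((m4 S c k p * qq S c p.1 : ℝ) : ℂ) * e3 S σ t k p))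
    (B := fun p => ((m4 SK cK k p * qq SK cK p.1 : ℝ) : ℂ) * e3 SK σ t k p)
    (ε := 13443072 * Ef s h t) (m := 2048) (P0 := v * v * v * v) (P1 := g * v * v)
    (P2 := n * n * d * v) (P3 := n * n * n * d) (P' := n * n * n * n)
    (by positivity) (by positivity) (by positivity) (by positivity) (by positivity)
    (by positivity) (by positivity) (fun p => ?_)
    (fun p => by rw [e3, norm_real_phase]; exact symbK.m4q1_le k p)
    (pr_sq1 sG' H.bn H.bn k) (pr_sq1 sG H.bv H.bv k) (trip_sub k G x x G' x' x')
    (pr_nm_nonneg k _ _ _) (pr_nm_nonneg k _ _ _) (pr_nm_nonneg k _ _ _)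
    (pr_sq1 sD H.bx H.bx k) (pr_sq1 sG' H.bd H.bx k) (pr_sq1 sG' H.bn H.bd k)
  have T2 := Tr_cmp (s := s) (k := k) (x := x) (y := G) (z := x) (x' := x') (y' := G') (z' := x')
    (A := fun p => (pk : ℂ) * (((m4 S c k p * qq S c p.2 : ℝ) : ℂ) * e3 S σ t k p))
    (B := fun p => ((m4 SK cK k p * qq SK cK p.2 : ℝ) : ℂ) * e3 SK σ t k p)
    (ε := 13443072 * Ef s h t) (m := 2048) (P0 := v * (v * v) * v) (P1 := v * g * v)
    (P2 := d * (n * n) * v) (P3 := n * (n * n) * d) (P' := n * (n * n) * n)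
    (by positivity) (by positivity) (by positivity) (by positivity) (by positivity)
    (by positivity) (by positivity) (fun p => ?_)
    (fun p => by rw [e3, norm_real_phase]; exact symbK.m4q3_le k p)
    (pr_sq2 H.bn sG' H.bn k) (pr_sq2 H.bv sG H.bv k) (trip_sub2 k x G x x' G' x')
    (pr_nm_nonneg k _ _ _) (pr_nm_nonneg k _ _ _) (pr_nm_nonneg k _ _ _)
    (pr_sq2 H.bx sD H.bx k) (pr_sq2 H.bd sG' H.bx k) (pr_sq2 H.bn sG' H.bd k)
  have T3 := Tr_cmp (s := s) (k := k) (x := x) (y := x) (z := G) (x' := x') (y' := x') (z' := G')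
    (A := fun p => (pk : ℂ) * (((m4 S c k p * qq S c (k - p.1 - p.2) : ℝ) : ℂ) * e3 S σ t k p))
    (B := fun p => ((m4 SK cK k p * qq SK cK (k - p.1 - p.2) : ℝ) : ℂ) * e3 SK σ t k p)
    (ε := 13443072 * Ef s h t) (m := 2048) (P0 := v * v * (v * v)) (P1 := v * v * g)
    (P2 := d * v * (n * n)) (P3 := n * d * (n * n)) (P' := n * n * (n * n))
    (by positivity) (by positivity) (by positivity) (by positivity) (by positivity)
    (by positivity) (by positivity) (fun p => ?_)
    (fun p => by rw [e3, norm_real_phase]; exact symbK.m4q4_le k p)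
    (pr_sq3 H.bn H.bn sG' k) (pr_sq3 H.bv H.bv sG k) (trip_sub3 k x x G x' x' G')
    (pr_nm_nonneg k _ _ _) (pr_nm_nonneg k _ _ _) (pr_nm_nonneg k _ _ _)
    (pr_sq3 H.bx H.bx sD k) (pr_sq3 H.bd H.bx sG' k) (pr_sq3 H.bn H.bd sG' k)
  rotate_left
  · obtain ⟨-, h1, h2, h3, h4, h5, h6, h7, -⟩ := RJ_facts k p
    obtain ⟨ρ, hρ, hρ'⟩ := m4q_ratio H.symb H.near H.h0 k p _ h1 h2 h6 h5 h7 h4 (H.near_RJ hp p)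
    exact H.close3 (by norm_num) hρ hρ' (symbK.m4q4_le k p)
  · obtain ⟨-, h1, h2, h3, h4, h5, h6, h7, -⟩ := RJ_facts k p
    obtain ⟨ρ, hρ, hρ'⟩ := m4q_ratio H.symb H.near H.h0 k p _ h1 h2 h6 h5 h7 h3 (H.near_RJ hp p)
    exact H.close3 (by norm_num) hρ hρ' (symbK.m4q3_le k p)
  · obtain ⟨-, h1, h2, h3, h4, h5, h6, h7, -⟩ := RJ_facts k p
    obtain ⟨ρ, hρ, hρ'⟩ := m4q_ratio H.symb H.near H.h0 k p _ h1 h2 h6 h5 h7 h2 (H.near_RJ hp p)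
    exact H.close3 (by norm_num) hρ hρ' (symbK.m4q1_le k p)
  have T1' := fin (T1.trans (le_of_eq (by ring)))
  have T2' := fin (T2.trans (le_of_eq (by ring)))
  have T3' := fin (T3.trans (le_of_eq (by ring)))
  rw [← Tr_smul] at T1' T2' T3'
  refine le_trans (le_of_eq (congrArg norm ?_))
    ((norm_add₃_le).trans (add_le_add (add_le_add T1' T2') T3')) |>.trans ?_
  · unfold QQ
    rw [hG, hG']
    ring
  · have : 0 ≤ Cw * (J k)⁻¹ * (Ef s h t * v ^ 4 + d * (v + n) ^ 3) := by positivity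
    linarith

/-- Majorant of the difference of the resonant terms. -/
def rhoR (E v n d : ℝ) (α β γ : ℤ → ℝ) : ℤ → ℝ := fun k =>
  26256 * (E * (v * v) * 2) * α k + 4 * (2 * (d * v) * α k + (n * d) * α k + (n * v) * γ k +
    ((n * n) * γ k + (n * d) * β k))

theorem rhoR_bd {E v n d : ℝ} {α β γ : ℤ → ℝ} (hE : 0 ≤ E) (hα : Bd α v) (hβ : Bd β n)
    (hγ : Bd γ d) :
    Bd (rhoR E v n d α β γ) (60000 * (E * v ^ 3 + d * (v + n) ^ 2)) := by
  have hd := hγ.1; have hv := hα.1; have hn := hβ.1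
  have b := (hα.const_mul (show 0 ≤ 26256 * (E * (v * v) * 2) by positivity)).add
    (((((hα.const_mul (show 0 ≤ 2 * (d * v) by positivity)).add
      (hα.const_mul (show 0 ≤ n * d by positivity))).add
      (hγ.const_mul (show 0 ≤ n * v by positivity))).add
      ((hγ.const_mul (show 0 ≤ n * n by positivity)).add
      (hβ.const_mul (show 0 ≤ n * d by positivity)))).const_mul (show (0:ℝ) ≤ 4 by norm_num))
  refine b.mono b.2.1 (fun k => le_rfl) ?_
  have : 0 ≤ d * (v * v) := by positivity
  have : 0 ≤ d * (v * n) := by positivity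
  have : 0 ≤ d * (n * n) := by positivity
  have : 0 ≤ E * v ^ 3 := by positivity
  nlinarith

open Classical in
/-- The resonant terms carry no oscillating factor and gain no power of `⟨k⟩`; their difference is
bounded by an `ℓ²` sequence. -/
theorem Cmp.RR_sub (H : Cmp s h t σ S c D x x' v n d) {k : ℤ} {pk : ℝ}
    (hp : FPU.near (h * J k) 1 pk) :
    ‖(pk : ℂ) * RR S c x k - RR SK cK x' k‖ ≤
      rhoR (Ef s h t) v n d (Js s x) (nm x') (nm (df x x')) k := by
  have hE := H.E0
  have hd := H.bd.1; have hv := H.bv.1; have hn := H.bn.1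
  unfold RR
  rw [Tr_smul]
  have g := ((pr_res H.bv H.bv H.bv k).const_mul (show 0 ≤ 26256 * Ef s h t by positivity)).add
    ((((pr_res H.bd H.bx H.bx k).add (pr_res H.bn H.bd H.bx k)).add
      (pr_res H.bn H.bn H.bd k)).const_mul (show (0:ℝ) ≤ 4 by norm_num))
  have key := cmp_tsum (f := fun p => (pk : ℂ) * ((if resP k p then m3 S c k p else 0 : ℝ) : ℂ) *
      trip k x x x p)
    (f' := fun p => ((if resP k p then m3 SK cK k p else 0 : ℝ) : ℂ) * trip k x' x' x' p)
    ((RR_bd symbK H.bn k).norm_tsum fun _ => le_rfl).1 g fun p => ?_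
  · refine key.trans ?_
    unfold rhoR
    have h1 := nm_le_Js H.s0 x k
    have : 0 ≤ d * v := by positivity
    have : 0 ≤ n * d := by positivity
    have := mul_le_mul_of_nonneg_left h1 (mul_nonneg hd hv)
    have := mul_le_mul_of_nonneg_left h1 (mul_nonneg hn hd)
    simp only [nm] at *
    nlinarith
  · by_cases hr : resP k p
    · simp only [if_pos hr]
      refine mul_sub_split.trans (add_le_add ?_ ?_)
      · have hR := (RJ_facts k p).1
        obtain ⟨-, h1, h2, h3, h4, h5, h6, h7, -⟩ := RJ_facts k p
        obtain ⟨ρ, hρ, hρ'⟩ := m3_ratio H.symb H.near H.h0 k p h1 h2 h6 (H.near_RJ hp p)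
        have hm : |m3 SK cK k p| ≤ 4 := (symbK.m3_le k p).trans (by
          have : (J p.1)⁻¹ ≤ 1 := inv_le_one_of_one_le₀ (J_ge _)
          linarith)
        have hc := H.close hR hρ hρ' hm (e := 1) (e' := 1) (by simp) (by simp) (by
          have := H.t0; have := H.h0; simp; positivity)
        rw [mul_one, mul_one] at hc
        refine (mul_le_mul_of_nonneg_right hc (norm_nonneg _)).trans (le_of_eq ?_)
        rw [← RJ_pr]; ring
      · have hm : |m3 SK cK k p| ≤ 4 := (symbK.m3_le k p).trans (by
          have : (J p.1)⁻¹ ≤ 1 := inv_le_one_of_one_le₀ (J_ge _)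
          linarith)
        refine mul_le_mul ?_ (trip_sub k x x x x' x' x' p) (norm_nonneg _) (by norm_num)
        rw [Complex.norm_real, Real.norm_eq_abs]; exact hm
    · simp [if_neg hr]

end

/-! ### Comparison of the two flows over a time interval -/

/-- Restriction of a sequence to a finite set of frequencies. -/
def ind (K : Finset ℤ) (x : ℤ → ℝ) : ℤ → ℝ := fun k => if k ∈ K then x k else 0

theorem ind_nonneg {K : Finset ℤ} {x : ℤ → ℝ} (h : ∀ k ∈ K, 0 ≤ x k) (k : ℤ) : 0 ≤ ind K x k := by
  unfold ind; split_ifs with hk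
  · exact h k hk
  · exact le_rfl

theorem Bd.of_ind {K : Finset ℤ} {x : ℤ → ℝ} {X : ℝ} (h0 : ∀ k ∈ K, 0 ≤ x k) (hX : 0 ≤ X)
    (h : ∑ k ∈ K, x k ^ 2 ≤ X ^ 2) : Bd (ind K x) X := by
  refine ⟨hX, ind_nonneg h0, fun _ => sq_nonneg _, fun F => ?_⟩
  refine le_trans ?_ h
  have : ∀ k, (ind K x k) ^ 2 = if k ∈ K then x k ^ 2 else 0 := fun k => by
    unfold ind; split_ifs <;> simp
  simp only [this]
  rw [← Finset.sum_filter]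
  refine Finset.sum_le_sum_of_subset_of_nonneg (fun k hk => (Finset.mem_filter.1 hk).2)
    fun k _ _ => sq_nonneg _

theorem Bd.ind_le {K : Finset ℤ} {x y : ℤ → ℝ} {X : ℝ} (h : Bd y X) (h0 : ∀ k ∈ K, 0 ≤ x k)
    (hxy : ∀ k ∈ K, x k ≤ y k) : Bd (ind K x) X := by
  refine h.mono (ind_nonneg h0) (fun k => ?_) le_rfl
  unfold ind; split_ifs with hk
  · exact hxy k hk
  · exact h.2.1 k

/-- Minkowski's integral inequality in `ℓ²`, proved by duality. -/
theorem minkowski {K : Finset ℤ} {t0 t1 : ℝ} (h01 : t0 ≤ t1) {F : ℤ → ℝ → ℂ} {ρ : ℝ → ℤ → ℝ}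
    {g : ℝ → ℝ} (hF : ∀ k ∈ K, IntervalIntegrable (F k) volume t0 t1)
    (hρ : ∀ τ ∈ Set.Ioc t0 t1, Bd (ρ τ) (g τ))
    (hle : ∀ τ ∈ Set.Ioc t0 t1, ∀ k ∈ K, ‖F k τ‖ ≤ ρ τ k)
    (hg : IntervalIntegrable g volume t0 t1) :
    Bd (ind K fun k => ‖∫ τ in t0..t1, F k τ‖) (∫ τ in t0..t1, g τ) := by
  have hg0 : 0 ≤ ∫ τ in t0..t1, g τ := by
    rw [intervalIntegral.integral_of_le h01]
    exact setIntegral_nonneg measurableSet_Ioc fun τ hτ => (hρ τ hτ).1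
  refine Bd.of_ind (fun k _ => norm_nonneg _) hg0 ?_
  set a : ℤ → ℂ := fun k => ∫ τ in t0..t1, F k τ with ha
  set A := ∑ k ∈ K, ‖a k‖ ^ 2 with hA
  have hA0 : 0 ≤ A := Finset.sum_nonneg fun _ _ => sq_nonneg _
  have h1 : (A : ℂ) = ∫ τ in t0..t1, ∑ k ∈ K, (starRingEnd ℂ) (a k) * F k τ := by
    rw [intervalIntegral.integral_finsetSum fun k hk => (hF k hk).const_mul _, hA]
    push_cast
    refine Finset.sum_congr rfl fun k _ => ?_
    rw [intervalIntegral.integral_const_mul, ← Complex.normSq_eq_conj_mul_self,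
      Complex.normSq_eq_norm_sq]
    push_cast; rfl
  have h2 : A ≤ ∫ τ in t0..t1, Real.sqrt A * g τ := by
    have hn : A = ‖(A : ℂ)‖ := by rw [Complex.norm_real, Real.norm_of_nonneg hA0]
    refine hn.le.trans ?_
    rw [h1]
    refine intervalIntegral.norm_integral_le_of_norm_le h01 ?_ (hg.const_mul _)
    refine Filter.Eventually.of_forall fun τ hτ => ?_
    have hb := hρ τ hτ
    calc ‖∑ k ∈ K, (starRingEnd ℂ) (a k) * F k τ‖ ≤ ∑ k ∈ K, ‖a k‖ * ρ τ k := by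
          refine (norm_sum_le _ _).trans (Finset.sum_le_sum fun k hk => ?_)
          rw [norm_mul, RCLike.norm_conj]
          exact mul_le_mul_of_nonneg_left (hle τ hτ k hk) (norm_nonneg _)
      _ ≤ Real.sqrt (∑ k ∈ K, ‖a k‖ ^ 2) * Real.sqrt (∑ k ∈ K, ρ τ k ^ 2) :=
          Real.sum_mul_le_sqrt_mul_sqrt _ _ _
      _ ≤ Real.sqrt A * g τ := by
          refine mul_le_mul_of_nonneg_left ?_ (Real.sqrt_nonneg _)
          rw [Real.sqrt_le_left hb.1]
          exact hb.2.2.2 K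
  rw [intervalIntegral.integral_const_mul] at h2
  set I := ∫ τ in t0..t1, g τ
  have h3 : Real.sqrt A * Real.sqrt A = A := Real.mul_self_sqrt hA0
  rcases eq_or_lt_of_le (Real.sqrt_nonneg A) with h | h
  · have : A = 0 := by rw [← h3, ← h]; simp
    rw [this]; positivity
  · have : Real.sqrt A ≤ I := by
      by_contra hc
      push Not at hc
      nlinarith
    calc A = Real.sqrt A * Real.sqrt A := h3.symm
      _ ≤ I * I := mul_le_mul this this h.le hg0
      _ = I ^ 2 := by ring

/-- `∑_{|k| ≥ M} ⟨k⟩⁻² ≲ M⁻¹`. -/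
theorem tail_bd {K : Finset ℤ} {M : ℝ} (hM : 0 < M) (hK : ∀ k ∈ K, M ≤ |(k : ℝ)|) :
    Bd (ind K fun k => (J k)⁻¹) (2 * M ^ (-(1 : ℝ) / 2)) := by
  have hsq : (2 * M ^ (-(1 : ℝ) / 2)) ^ 2 = 4 * M⁻¹ := by
    rw [mul_pow, ← Real.rpow_natCast (M ^ _), ← Real.rpow_mul hM.le]
    norm_num [Real.rpow_neg_one]
  refine Bd.of_ind (fun k _ => (Jinv_pos k).le) (by positivity) ?_
  rw [hsq]
  set m : ℕ := ⌈M⌉₊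
  have hm : 0 < m := Nat.ceil_pos.2 hM
  -- each value of `|k|` is attained at most twice
  set R : ℕ := ∑ k ∈ K, k.natAbs
  have hmem : ∀ k ∈ K, k.natAbs ∈ Finset.Ioo (m - 1) (R + 1) := fun k hk => by
    have h1 : m ≤ k.natAbs := Nat.ceil_le.2 (by
      have := hK k hk; rwa [Nat.cast_natAbs, Int.cast_abs])
    have h2 : k.natAbs ≤ R := Finset.single_le_sum (f := fun k : ℤ => k.natAbs)
      (fun _ _ => Nat.zero_le _) hk
    rw [Finset.mem_Ioo]; omega
  have hfib := Finset.sum_fiberwise_of_maps_to hmem (fun k : ℤ => ((J k)⁻¹) ^ 2)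
  rw [← hfib]
  have h3 : ∀ i ∈ Finset.Ioo (m - 1) (R + 1),
      ∑ k ∈ K with k.natAbs = i, ((J k)⁻¹) ^ 2 ≤ 2 * ((((i + 1 : ℕ) : ℝ)) ^ 2)⁻¹ := fun i _ => by
    have hc : (K.filter fun k => k.natAbs = i).card ≤ 2 := by
      refine (Finset.card_le_card (t := {(i : ℤ), -(i : ℤ)}) fun k hk => ?_).trans
        Finset.card_le_two
      have := (Finset.mem_filter.1 hk).2
      simp only [Finset.mem_insert, Finset.mem_singleton]; omega
    refine (Finset.sum_le_card_nsmul _ _ ((((i + 1 : ℕ) : ℝ)) ^ 2)⁻¹ fun k hk => ?_).trans ?_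
    · have := (Finset.mem_filter.1 hk).2
      refine le_of_eq ?_
      rw [inv_pow, J, ← Int.cast_abs, ← Nat.cast_natAbs, this]
      push_cast; rw [add_comm]
    · rw [nsmul_eq_mul]
      refine mul_le_mul_of_nonneg_right (by exact_mod_cast hc) (by positivity)
  refine (Finset.sum_le_sum h3).trans ?_
  rw [← Finset.mul_sum]
  have h4 : ∑ i ∈ Finset.Ioo (m - 1) (R + 1), ((((i + 1 : ℕ) : ℝ)) ^ 2)⁻¹ ≤ 2 / (m + 1 : ℝ) := by
    have := sum_Ioo_inv_sq_le (α := ℝ) m (R + 2)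
    refine le_trans (le_of_eq ?_) this
    refine Finset.sum_bij (fun i _ => i + 1) (fun i hi => ?_) (fun i _ j _ h => by simpa using h)
      (fun j hj => ⟨j - 1, ?_, ?_⟩) (fun i _ => rfl)
    · rw [Finset.mem_Ioo] at *; omega
    · rw [Finset.mem_Ioo] at *; omega
    · rw [Finset.mem_Ioo] at hj; omega
  have h5 : (2 : ℝ) / (m + 1) ≤ 2 * M⁻¹ := by
    rw [div_eq_mul_inv]
    have : M ≤ m := Nat.le_ceil M
    gcongr; linarith
  linarith

/-- The bound for the difference of the boundary terms. -/
def bdry (E v n d : ℝ) : ℝ := E * v ^ 2 + d * (v + n) + (E * v ^ 3 + d * (v + n) ^ 2)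

/-- The bound for the difference of the time integrands. -/
def bulk (E v n d : ℝ) : ℝ := E * v ^ 3 + d * (v + n) ^ 2 + (E * v ^ 4 + d * (v + n) ^ 3)

/-- Absolute constant in the comparison of boundary terms. -/
def K0 : ℝ := 14000000 + 14000000 * Cw

/-- Absolute constant in the comparison of time integrands. -/
def K1 : ℝ := 60000 + 40380000 * Cw * (Cg + 1)

theorem K0_nonneg : 0 ≤ K0 := by have := Cw_nonneg; unfold K0; positivity

theorem K1_nonneg : 0 ≤ K1 := by have := Cw_nonneg; have := Cg_nonneg; unfold K1; positivity

theorem Jinv_Bd : Bd (fun k => (J k)⁻¹) (Cg + 1) := by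
  have := Cg_nonneg
  refine ⟨by positivity, fun k => (Jinv_pos k).le, ?_⟩
  simp only [Jinv_sq]
  exact gw_SB.mono (fun k => (gw_pos k).le) (fun _ => le_rfl) (by nlinarith)

section

variable {s h σ : ℝ} {S c : ℤ → ℝ} {D : Set ℤ}

/-- The boundary terms differ pointwise by `O(⟨k⟩⁻¹)`, which gives the factor `M^(-1/2)` after
summation over `|k| ≥ M`. -/
theorem Cmp.bdry_sub {t : ℝ} {x x' : ℤ → ℂ} {v n d : ℝ}
    (H : Cmp s h t σ S c D x x' v n d) {k : ℤ} {pk : ℝ} (hp : FPU.near (h * J k) 1 pk) :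
    ‖(pk : ℂ) * (B2 S c σ t x k + B3 S c σ t x k) - (B2 SK cK σ t x' k + B3 SK cK σ t x' k)‖ ≤
      K0 * bdry (Ef s h t) v n d * (J k)⁻¹ := by
  have h2 := H.B2_sub hp
  have h3 := H.B3_sub hp
  have hE := H.E0
  have hd := H.bd.1; have hv := H.bv.1; have hn := H.bn.1
  have hC := Cw_nonneg
  have hJ := Jinv_pos k
  rw [show (pk : ℂ) * (B2 S c σ t x k + B3 S c σ t x k) -
    (B2 SK cK σ t x' k + B3 SK cK σ t x' k) = ((pk : ℂ) * B2 S c σ t x k - B2 SK cK σ t x' k) +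
    ((pk : ℂ) * B3 S c σ t x k - B3 SK cK σ t x' k) by ring]
  refine (norm_add_le _ _).trans ((add_le_add h2 h3).trans ?_)
  have e1 : 0 ≤ (J k)⁻¹ * (Ef s h t * (v * v) + d * (v + n)) := by positivity
  have e2 : 0 ≤ (J k)⁻¹ * (Ef s h t * v ^ 3 + d * (v + n) ^ 2) := by positivity
  have e3 := mul_nonneg hC e1
  have e4 := mul_nonneg hC e2
  unfold K0 bdry
  linarith

/-- The time integrands differ by an `ℓ²` sequence that does not depend on the multiplier `pk`. -/
theorem Cmp.bulk_sub {t : ℝ} {x x' : ℤ → ℂ} {v n d : ℝ}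
    (H : Cmp s h t σ S c D x x' v n d) : ∃ ρ : ℤ → ℝ, Bd ρ (K1 * bulk (Ef s h t) v n d) ∧
    ∀ (k : ℤ) (pk : ℝ), FPU.near (h * J k) 1 pk →
    ‖(pk : ℂ) * (RR S c x k + QQ S c σ t x k) - (RR SK cK x' k + QQ SK cK σ t x' k)‖ ≤ ρ k := by
  have hE := H.E0
  have hd := H.bd.1; have hv := H.bv.1; have hn := H.bn.1
  have hC := Cw_nonneg
  have hg := Cg_nonneg
  refine ⟨fun k => rhoR (Ef s h t) v n d (Js s x) (nm x') (nm (df x x')) k +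
    40380000 * Cw * (Ef s h t * v ^ 4 + d * (v + n) ^ 3) * (J k)⁻¹, ?_, fun k pk hp => ?_⟩
  · have b := (rhoR_bd hE H.bv H.bn H.bd).add (Jinv_Bd.const_mul
      (show 0 ≤ 40380000 * Cw * (Ef s h t * v ^ 4 + d * (v + n) ^ 3) by positivity))
    refine b.mono b.2.1 (fun _ => le_rfl) ?_
    have e1 : 0 ≤ Ef s h t * v ^ 3 + d * (v + n) ^ 2 := by positivity
    have e2 : 0 ≤ Ef s h t * v ^ 4 + d * (v + n) ^ 3 := by positivity
    have e3 : 0 ≤ Cw * (Cg + 1) := by positivity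
    have e4 := mul_nonneg e3 e1
    unfold K1 bulk
    linarith
  · rw [show (pk : ℂ) * (RR S c x k + QQ S c σ t x k) - (RR SK cK x' k + QQ SK cK σ t x' k) =
      ((pk : ℂ) * RR S c x k - RR SK cK x' k) + ((pk : ℂ) * QQ S c σ t x k - QQ SK cK σ t x' k)
      by ring]
    refine (norm_add_le _ _).trans ((add_le_add (H.RR_sub hp) (H.QQ_sub hp)).trans (le_of_eq ?_))
    ring

/-- Bound for the difference of the increments of the two flows over `[t0,t1]`, at frequencies
`|k| ≥ M`. The first flow is multiplied by `p`, an admissible perturbation of `1`. -/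
theorem state_cmp {T : ℝ} {U W : ℝ → ℤ → ℂ} (hU : Sol S c D σ T U)
    (hW : Sol SK cK Set.univ σ T W) {t0 t1 : ℝ} (h0 : 0 ≤ t0) (h01 : t0 ≤ t1) (h1 : t1 ≤ T)
    {v n d g : ℝ → ℝ}
    (H : ∀ τ ∈ Set.Icc t0 t1, Cmp s h τ σ S c D (U τ) (W τ) (v τ) (n τ) (d τ))
    (hg : IntervalIntegrable g volume t0 t1)
    (hle : ∀ τ ∈ Set.Ioc t0 t1, K1 * bulk (Ef s h τ) (v τ) (n τ) (d τ) ≤ g τ)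
    {K : Finset ℤ} {M : ℝ} (hM : 0 < M) (hK : ∀ k ∈ K, M ≤ |(k : ℝ)|)
    {p : ℤ → ℝ} (hp : ∀ k ∈ K, near (h * J k) 1 (p k)) :
    Bd (ind K fun k => ‖(p k : ℂ) * (U t1 k - U t0 k) - (W t1 k - W t0 k)‖)
      (2 * K0 * M ^ (-(1 : ℝ) / 2) * (bdry (Ef s h t1) (v t1) (n t1) (d t1) +
        bdry (Ef s h t0) (v t0) (n t0) (d t0)) + ∫ τ in t0..t1, g τ) := by
  have H1 := H t1 ⟨h01, le_rfl⟩
  have H0 := H t0 ⟨le_rfl, h01⟩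
  set b1 := bdry (Ef s h t1) (v t1) (n t1) (d t1)
  set b0 := bdry (Ef s h t0) (v t0) (n t0) (d t0)
  have hb1 : 0 ≤ b1 := by
    have := H1.E0; have := H1.bd.1; have := H1.bv.1; have := H1.bn.1
    simp only [b1, bdry]; positivity
  have hb0 : 0 ≤ b0 := by
    have := H0.E0; have := H0.bd.1; have := H0.bv.1; have := H0.bn.1
    simp only [b0, bdry]; positivity
  have hK0 := K0_nonneg
  set F : ℤ → ℝ → ℂ := fun k τ => (p k : ℂ) * (RR S c (U τ) k + QQ S c σ τ (U τ) k) -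
    (RR SK cK (W τ) k + QQ SK cK σ τ (W τ) k) with hF
  have hFi : ∀ k, IntervalIntegrable (F k) volume t0 t1 := fun k =>
    ((hU.nf h0 h01 h1 k).1.const_mul _).sub (hW.nf h0 h01 h1 k).1
  have mk := minkowski (K := K) h01 (F := F)
    (ρ := fun τ => if hτ : τ ∈ Set.Icc t0 t1 then (H τ hτ).bulk_sub.choose else 0) (g := g)
    (fun k _ => hFi k)
    (fun τ hτ => by
      rw [dif_pos (Set.Ioc_subset_Icc_self hτ)]
      have := (H τ (Set.Ioc_subset_Icc_self hτ)).bulk_sub.choose_spec.1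
      exact this.mono this.2.1 (fun _ => le_rfl) (hle τ hτ))
    (fun τ hτ k hk => by
      rw [dif_pos (Set.Ioc_subset_Icc_self hτ)]
      exact (H τ (Set.Ioc_subset_Icc_self hτ)).bulk_sub.choose_spec.2 k (p k) (hp k hk)) hg
  have tl := (tail_bd hM hK).const_mul (show 0 ≤ K0 * (b1 + b0) by positivity)
  have tot := tl.add mk
  refine (tot.mono (ind_nonneg fun _ _ => norm_nonneg _) (fun k => ?_) le_rfl).mono
    (ind_nonneg fun _ _ => norm_nonneg _) (fun _ => le_rfl) (le_of_eq (by ring))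
  unfold ind
  by_cases hk : k ∈ K
  swap
  · simp [hk]
  simp only [if_pos hk]
  have hpk := hp k hk
  have e : (p k : ℂ) * (U t1 k - U t0 k) - (W t1 k - W t0 k) =
      ((p k : ℂ) * (B2 S c σ t1 (U t1) k + B3 S c σ t1 (U t1) k) -
        (B2 SK cK σ t1 (W t1) k + B3 SK cK σ t1 (W t1) k)) +
      -((p k : ℂ) * (B2 S c σ t0 (U t0) k + B3 S c σ t0 (U t0) k) -
        (B2 SK cK σ t0 (W t0) k + B3 SK cK σ t0 (W t0) k)) +
      Complex.I * σ * ∫ τ in t0..t1, F k τ := by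
    rw [(hU.nf h0 h01 h1 k).2, (hW.nf h0 h01 h1 k).2, hF,
      intervalIntegral.integral_sub ((hU.nf h0 h01 h1 k).1.const_mul _) (hW.nf h0 h01 h1 k).1,
      intervalIntegral.integral_const_mul]
    ring
  rw [e]
  refine norm_add₃_le.trans ?_
  have i1 := H1.bdry_sub hpk
  have i0 := H0.bdry_sub hpk
  rw [norm_neg]
  have i2 : ‖Complex.I * σ * ∫ τ in t0..t1, F k τ‖ = ‖∫ τ in t0..t1, F k τ‖ := by
    rw [norm_mul, norm_mul, Complex.norm_I, Complex.norm_real, Real.norm_eq_abs, hU.sg]; simp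
  rw [i2]
  linarith

end

set_option linter.unusedSectionVars false

/-! ### Fourier coefficients of the linear interpolation -/

/-- Ratio `sinc² (hk/2)` between the Fourier coefficients of `𝓛_h f` and of `f`. -/
def psn (N : ℕ) (k : ℤ) : ℝ :=
  if k = 0 then 1 else (2 - 2 * Real.cos (msh N * k)) / (msh N * k) ^ 2

/-- Periodic extension of a coefficient sequence on the dual lattice, multiplied by `sinc²`. -/
def al (N : ℕ) (y : ℤ → ℂ) (k : ℤ) : ℂ := (psn N k : ℂ) * y (red N k)

section

variable {N : ℕ} (hN : 1 ≤ N)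
include hN

theorem msh_pos : 0 < msh N := div_pos Real.pi_pos (by exact_mod_cast hN)

theorem msh_mul : msh N * N = Real.pi := by
  unfold msh; exact div_mul_cancel₀ _ (by positivity)

theorem red_mem (m : ℤ) : red N m ∈ dual N := by
  have h1 := Int.emod_nonneg (m + N) (b := 2 * N) (by omega)
  have h2 := Int.emod_lt_of_pos (m + N) (b := 2 * N) (by omega)
  rw [dual, Finset.mem_Icc]; unfold red; omega

theorem red_of_mem {m : ℤ} (hm : m ∈ dual N) : red N m = m := by
  rw [dual, Finset.mem_Icc] at hm
  unfold red
  rw [Int.emod_eq_of_lt (by omega) (by omega)]; omega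

theorem red_add (m : ℤ) : red N m + 2 * N * ((m + N) / (2 * N)) = m := by
  have := Int.emod_add_mul_ediv (m + N) (2 * N)
  unfold red; omega

theorem red_red_add (m i : ℤ) : red N (red N m + i) = red N (m + i) := by
  have h := red_add hN m
  set q := (m + N) / (2 * (N : ℤ))
  have : red N m + i + N = (m + i + N) + 2 * N * (-q) := by linarith
  conv_lhs => rw [red]
  conv_rhs => rw [red]
  rw [this, Int.add_mul_emod_self_left]

theorem eI_red (m k : ℤ) : eI (-(msh N * red N m * k)) = eI (-(msh N * m * k)) := by
  have h := red_add hN m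
  set q := (m + N) / (2 * (N : ℤ))
  have h2 : (red N m : ℝ) = m - 2 * N * q := by
    have : red N m = m - 2 * N * q := by linarith
    rw [this]; push_cast; ring
  rw [h2]
  have e : -(msh N * (m - 2 * N * q) * k) = -(msh N * m * k) + (q * k : ℤ) * (2 * Real.pi) := by
    rw [← msh_mul hN]; push_cast; ring
  rw [e, eI_add]
  have : eI ((q * k : ℤ) * (2 * Real.pi)) = 1 := by
    unfold eI
    rw [← Complex.exp_int_mul_two_pi_mul_I (q * k)]
    push_cast; ring_nf
  rw [this, mul_one]

theorem dF_red (f : ℤ → ℂ) (k : ℤ) : dF N f (red N k) = dF N f k := by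
  unfold dF
  congr 1
  refine Finset.sum_congr rfl fun n _ => ?_
  have := eI_red hN k n
  rw [show msh N * (n : ℝ) * (red N k : ℝ) = msh N * (red N k) * n by ring, this]
  ring_nf

theorem sum_shift (f : ℤ → ℂ) (k : ℤ) :
    ∑ n ∈ dual N, f (red N (n + 1)) * eI (-(msh N * n * k)) =
      eI (msh N * k) * ∑ n ∈ dual N, f n * eI (-(msh N * n * k)) := by
  rw [Finset.mul_sum]
  refine Finset.sum_bij' (fun n _ => red N (n + 1)) (fun n _ => red N (n - 1))
    (fun n _ => red_mem hN _) (fun n _ => red_mem hN _) (fun n hn => ?_) (fun n hn => ?_)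
    (fun n hn => ?_)
  · rw [sub_eq_add_neg, red_red_add hN]; simpa using red_of_mem hN hn
  · rw [red_red_add hN]; simpa using red_of_mem hN hn
  · rw [eI_red hN, show -(msh N * ((n + 1 : ℤ) : ℝ) * k) = -(msh N * n * k) + -(msh N * k) by
      push_cast; ring, eI_add]
    have : eI (msh N * k) * eI (-(msh N * k)) = 1 := by rw [← eI_add]; simp [eI_zero]
    linear_combination (-(f (red N (n + 1)) * eI (-(msh N * n * k)))) * this

/-- The Fourier transform of the hat function. -/
theorem hat_integral (k : ℤ) :
    (∫ y in (0:ℝ)..msh N, ((1 - y / msh N : ℝ) : ℂ) * eI (y * (-k))) +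
      eI (msh N * k) * (∫ y in (0:ℝ)..msh N, ((y / msh N : ℝ) : ℂ) * eI (y * (-k))) =
      (msh N : ℂ) * psn N k := by
  have hh := msh_pos hN
  unfold psn
  generalize msh N = h at *
  have hC : (h : ℂ) ≠ 0 := by exact_mod_cast hh.ne'
  split_ifs with hk
  · subst hk
    have e1 : ∫ y in (0:ℝ)..h, ((1 - y / h : ℝ) : ℂ) = ((h / 2 : ℝ) : ℂ) := by
      rw [intervalIntegral.integral_ofReal]
      congr 1
      rw [intervalIntegral.integral_sub (by simp) (by
        exact (continuous_id.div_const _).intervalIntegrable _ _)]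
      simp [intervalIntegral.integral_div]; field_simp; ring
    have e2 : ∫ y in (0:ℝ)..h, ((y / h : ℝ) : ℂ) = ((h / 2 : ℝ) : ℂ) := by
      rw [intervalIntegral.integral_ofReal]
      congr 1
      simp [intervalIntegral.integral_div]; field_simp
    simp only [Int.cast_zero, neg_zero, mul_zero, eI_zero, mul_one, one_mul]
    rw [e1, e2]; push_cast; ring
  · have hkr : (k : ℂ) ≠ 0 := by exact_mod_cast hk
    have key : ∀ (A B : ℂ), ∀ y : ℝ, HasDerivAt (fun y : ℝ => (A * (Complex.I / k) +
        B * (Complex.I * y / k + 1 / (k : ℂ) ^ 2)) * eI (y * (-k)))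
        ((A + B * y) * eI (y * (-k))) y := fun A B y => by
      have d1 := eI_hasDerivAt (-k) y
      have d2 : HasDerivAt (fun y : ℝ => A * (Complex.I / k) +
        B * (Complex.I * y / k + 1 / (k : ℂ) ^ 2)) (B * (Complex.I / k)) y := by
        have := (((((hasDerivAt_id y).ofReal_comp).const_mul Complex.I).div_const (k : ℂ)).add_const
          (1 / (k : ℂ) ^ 2)).const_mul B |>.const_add (A * (Complex.I / k))
        simpa using this
      have := d2.mul d1
      refine this.congr_deriv ?_
      push_cast
      field_simp
      ring_nf
      simp only [Complex.I_sq]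
      ring
    have hcont : ∀ A B : ℂ, Continuous fun y : ℝ => (A + B * y) * eI (y * (-k)) := fun A B =>
      (continuous_const.add (continuous_const.mul Complex.continuous_ofReal)).mul (eI_continuous _)
    have I := fun A B => intervalIntegral.integral_eq_sub_of_hasDerivAt (a := 0) (b := h)
      (fun y _ => key A B y) ((hcont A B).intervalIntegrable _ _)
    have i1 := I 1 (-(1 / h))
    have i2 := I 0 (1 / h)
    have c1 : ∫ y in (0:ℝ)..h, ((1 - y / h : ℝ) : ℂ) * eI (y * (-k)) =
        ∫ y in (0:ℝ)..h, (1 + -(1 / (h : ℂ)) * y) * eI (y * (-k)) := by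
      congr 1; ext y; push_cast; ring
    have c2 : ∫ y in (0:ℝ)..h, ((y / h : ℝ) : ℂ) * eI (y * (-k)) =
        ∫ y in (0:ℝ)..h, (0 + (1 / (h : ℂ)) * y) * eI (y * (-k)) := by
      congr 1; ext y; push_cast; ring
    rw [c1, c2, i1, i2]
    have hz : eI (h * k) * eI (h * -k) = 1 := by rw [← eI_add]; simp [eI_zero]
    have hcos : Complex.cos (h * k) = (eI (h * k) + eI (h * -k)) / 2 := by
      rw [Complex.cos, eI, eI]; push_cast; ring_nf
    push_cast
    rw [hcos]
    simp only [zero_mul, eI_zero]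
    generalize eI (h * k) = z at *
    generalize eI (h * -k) = w at *
    field_simp
    linear_combination (Complex.I * k * h + 1) * hz

theorem interp_eq (f : ℤ → ℂ) {n : ℤ} (hn : n ∈ dual N) {x : ℝ} (h1 : msh N * n ≤ x)
    (h2 : x < msh N * (n + 1)) : interp N f x =
      f n + (f (red N (n + 1)) - f n) * (((x - msh N * n) / msh N : ℝ) : ℂ) := by
  have hh := msh_pos hN
  have : ⌊x / msh N⌋ = n := by
    rw [Int.floor_eq_iff]
    exact ⟨by rw [le_div_iff₀ hh]; linarith, by rw [div_lt_iff₀ hh]; linarith⟩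
  unfold interp
  rw [this, red_of_mem hN hn]

/-- Contribution of one mesh cell to a Fourier coefficient of the interpolation. -/
theorem cell_integral (f : ℤ → ℂ) (k : ℤ) {n : ℤ} (hn : n ∈ dual N) :
    IntervalIntegrable (fun x => interp N f x * eI (-(x * k))) volume (msh N * n)
      (msh N * (n + 1)) ∧
    ∫ x in (msh N * n)..(msh N * (n + 1)), interp N f x * eI (-(x * k)) =
      eI (-(msh N * n * k)) *
        (f n * (∫ y in (0:ℝ)..msh N, ((1 - y / msh N : ℝ) : ℂ) * eI (y * (-k))) +
        f (red N (n + 1)) * ∫ y in (0:ℝ)..msh N, ((y / msh N : ℝ) : ℂ) * eI (y * (-k))) := by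
  have hh := msh_pos hN
  have hlt : msh N * n ≤ msh N * (n + 1) := by nlinarith
  set F : ℝ → ℂ := fun x => (f n + (f (red N (n + 1)) - f n) *
    (((x - msh N * n) / msh N : ℝ) : ℂ)) * eI (x * (-k)) with hF
  have hEq : (Set.Ioo (msh N * n) (msh N * (n + 1))).EqOn F
      (fun x => interp N f x * eI (-(x * k))) := fun x hx => by
    simp only [hF]
    rw [interp_eq hN f hn hx.1.le hx.2, mul_neg]
  have hcont : ∀ g : ℝ → ℝ, Continuous g → Continuous fun y : ℝ => (g y : ℂ) * eI (y * (-k)) :=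
    fun g hg => (Complex.continuous_ofReal.comp hg).mul (eI_continuous _)
  have hFc : Continuous F := by
    refine Continuous.mul ?_ (eI_continuous _)
    exact continuous_const.add (continuous_const.mul
      (Complex.continuous_ofReal.comp ((continuous_id.sub continuous_const).div_const _)))
  refine ⟨(hFc.intervalIntegrable _ _).congr_uIoo (by rwa [Set.uIoo_of_le hlt]), ?_⟩
  rw [← intervalIntegral.integral_congr_Ioo_of_le hlt hEq]
  have hsub : ∫ x in (msh N * n)..(msh N * (n + 1)), F x =
      ∫ y in (0:ℝ)..msh N, F (y + msh N * n) := by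
    rw [intervalIntegral.integral_comp_add_right F (msh N * n)]
    congr 1 <;> ring
  rw [hsub, ← intervalIntegral.integral_const_mul, ← intervalIntegral.integral_const_mul,
    ← intervalIntegral.integral_add, ← intervalIntegral.integral_const_mul]
  · congr 1
    ext y
    simp only [hF, add_sub_cancel_right]
    rw [show (y + msh N * n) * -(k : ℝ) = -(msh N * n * k) + y * -k by ring, eI_add]
    push_cast; ring
  · exact ((hcont _ (by fun_prop)).const_smul (f n)).intervalIntegrable _ _
  · exact ((hcont _ (by fun_prop)).const_smul (f (red N (n + 1)))).intervalIntegrable _ _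

/-- Linear interpolation is the convolution of a Dirac comb with a hat function, hence acts as `sinc²`
times the periodic extension of the discrete Fourier coefficients. -/
theorem tF_interp (f : ℤ → ℂ) (k : ℤ) : tF (interp N f) k = al N (dF N f) k := by
  have hh := msh_pos hN
  set a : ℕ → ℝ := fun i => msh N * ((i : ℤ) - (N : ℤ) : ℤ) with ha
  have ha1 : ∀ i, a (i + 1) = msh N * (((i : ℤ) - (N : ℤ) : ℤ) + 1) := fun i => by
    simp only [ha]; push_cast; ring
  have hmem : ∀ i < 2 * N, ((i : ℤ) - (N : ℤ)) ∈ dual N := fun i hi => by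
    rw [dual, Finset.mem_Icc]; omega
  have hsum := intervalIntegral.sum_integral_adjacent_intervals (μ := volume) (a := a) (n := 2 * N)
    (f := fun x => interp N f x * eI (-(x * k)))
    (fun i hi => by rw [ha1]; exact (cell_integral hN f k (hmem i hi)).1)
  have e0 : a 0 = -Real.pi := by simp only [ha]; rw [← msh_mul hN]; push_cast; ring
  have e1 : a (2 * N) = Real.pi := by simp only [ha]; rw [← msh_mul hN]; push_cast; ring
  rw [e0, e1] at hsum
  unfold tF al
  rw [dF_red hN, ← hsum]
  have hs2 : ∑ i ∈ Finset.range (2 * N),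
      ∫ x in a i..a (i + 1), interp N f x * eI (-(x * k)) =
      ∑ n ∈ dual N, ∫ x in (msh N * n)..(msh N * (n + 1)), interp N f x * eI (-(x * k)) := by
    refine Finset.sum_bij (fun i _ => (i : ℤ) - N) (fun i hi => hmem i (Finset.mem_range.1 hi))
      (fun i _ j _ h => by simpa using h) (fun n hn => ?_) (fun i _ => by rw [ha1])
    rw [dual, Finset.mem_Icc] at hn
    exact ⟨(n + N).toNat, Finset.mem_range.2 (by omega), by omega⟩
  rw [hs2, Finset.sum_congr rfl fun n hn => (cell_integral hN f k hn).2]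
  set α := ∫ y in (0:ℝ)..msh N, ((1 - y / msh N : ℝ) : ℂ) * eI (y * (-k))
  set β := ∫ y in (0:ℝ)..msh N, ((y / msh N : ℝ) : ℂ) * eI (y * (-k))
  have hat : α + eI (msh N * k) * β = (msh N : ℂ) * psn N k := hat_integral hN k
  have sh := sum_shift hN f k
  set Sm := ∑ n ∈ dual N, f n * eI (-(msh N * n * k)) with hSm
  have : ∑ n ∈ dual N, eI (-(msh N * n * k)) * (f n * α + f (red N (n + 1)) * β) =
      Sm * α + (eI (msh N * k) * Sm) * β := by
    rw [← sh, hSm, Finset.sum_mul, Finset.sum_mul, ← Finset.sum_add_distrib]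
    exact Finset.sum_congr rfl fun n _ => by ring
  rw [this]
  unfold dF
  rw [← hSm]
  push_cast
  linear_combination (1 / (Real.sqrt (2 * Real.pi) : ℂ)) * Sm * hat

end

/-! ### Interpolation error -/

section

variable {N : ℕ} (hN : 1 ≤ N)

theorem psn_nonneg (N : ℕ) (k : ℤ) : 0 ≤ psn N k := by
  unfold psn; split_ifs
  · exact zero_le_one
  · exact div_nonneg (by linarith [Real.cos_le_one (msh N * k)]) (sq_nonneg _)

theorem psn_le_one (N : ℕ) (k : ℤ) : psn N k ≤ 1 := by
  unfold psn; split_ifs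
  · exact le_rfl
  · exact div_le_one_of_le₀ (by linarith [Real.one_sub_sq_div_two_le_cos (x := msh N * k)])
      (sq_nonneg _)

include hN in
theorem psn_sub_one_le (k : ℤ) : |psn N k - 1| ≤ msh N * |(k : ℝ)| := by
  have hh := msh_pos hN
  have h0 := psn_nonneg N k
  have h1 := psn_le_one N k
  have hx : msh N * |(k : ℝ)| = |msh N * k| := by rw [abs_mul, abs_of_pos hh]
  rw [hx]
  rcases lt_or_ge 1 |msh N * (k : ℝ)| with h | h
  · rw [abs_le]; constructor <;> linarith
  · unfold psn
    split_ifs with hk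
    · simp [hk]
    · have hne : msh N * (k : ℝ) ≠ 0 := mul_ne_zero hh.ne' (by exact_mod_cast hk)
      have hb := Real.cos_bound h
      generalize msh N * (k : ℝ) = x at *
      have hx2 : 0 < x ^ 2 := by positivity
      rw [show (2 - 2 * Real.cos x) / x ^ 2 - 1 = -2 * (Real.cos x - (1 - x ^ 2 / 2)) / x ^ 2 by
        field_simp; ring, abs_div, abs_of_pos hx2, div_le_iff₀ hx2, abs_mul]
      have e : |x| * x ^ 2 = |x| ^ 3 := by rw [← sq_abs x]; ring
      rw [e]
      have h3 : |x| ^ 4 ≤ |x| ^ 3 := pow_le_pow_of_le_one (abs_nonneg _) h (by norm_num)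
      norm_num
      nlinarith [pow_nonneg (abs_nonneg x) 3]

include hN in
theorem psn_near (k : ℤ) : near (msh N * J k) 1 (psn N k) := by
  refine ⟨by rw [abs_of_nonneg (psn_nonneg N k)]; exact psn_le_one N k, ?_⟩
  rw [one_mul]
  exact (psn_sub_one_le hN k).trans (mul_le_mul_of_nonneg_left (abs_le_J k) (msh_pos hN).le)

theorem rpow_half_J {h s : ℝ} (hh : 0 ≤ h) (hs : 0 ≤ s) (k : ℤ) :
    (h * |(k : ℝ)|) ^ (s / 2) ≤ h ^ (s / 2) * J k ^ s := by
  rw [Real.mul_rpow hh (abs_nonneg _)]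
  refine mul_le_mul_of_nonneg_left ?_ (Real.rpow_nonneg hh _)
  exact (Real.rpow_le_rpow (abs_nonneg _) (abs_le_J k) (by linarith)).trans
    (Real.rpow_le_rpow_of_exponent_le (J_ge k) (by linarith))

include hN in
/-- Off the dual lattice the `sinc²` factor decays like the inverse square of the index of the
aliasing band, and gains `(h |r|)^(s/2)` from the reduced frequency `r`. -/
theorem psn_alias {s : ℝ} (hs0 : 0 ≤ s) (hs1 : s ≤ 1) {k : ℤ} (hk : k ∉ dual N) :
    psn N k ≤ msh N ^ (s / 2) * J (red N k) ^ s * (4 * gw ((k + N) / (2 * N))) := by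
  have hh := msh_pos hN
  have hr := red_mem hN k
  have hadd := red_add hN k
  set r := red N k
  set j := (k + N) / (2 * (N : ℤ))
  have hj : j ≠ 0 := fun h0 => hk (by
    rw [h0, mul_zero, add_zero] at hadd; rwa [← hadd])
  rw [dual, Finset.mem_Icc] at hr
  have hk0 : k ≠ 0 := fun h0 => hk (by rw [h0, dual, Finset.mem_Icc]; omega)
  have hrN : |(r : ℝ)| ≤ N := abs_le.2 ⟨by exact_mod_cast hr.1, by
    exact_mod_cast (show r ≤ (N : ℤ) by omega)⟩
  have hj1 : (1 : ℝ) ≤ |(j : ℝ)| := by exact_mod_cast Int.one_le_abs hj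
  have hkr : (k : ℝ) = r + 2 * N * j := by exact_mod_cast hadd.symm
  have hkj : N * |(j : ℝ)| ≤ |(k : ℝ)| := by
    have h1 : |2 * (N : ℝ) * j| ≤ |(k : ℝ)| + |(r : ℝ)| := by
      rw [show 2 * (N : ℝ) * j = k - r by rw [hkr]; ring]; exact abs_sub _ _
    rw [abs_mul, abs_of_nonneg (by positivity : (0:ℝ) ≤ 2 * N)] at h1
    have hN0 : (0 : ℝ) ≤ N := by positivity
    nlinarith
  have hcos : Real.cos (msh N * k) = Real.cos (msh N * r) := by
    rw [hkr, show msh N * (r + 2 * N * j) = msh N * r + j * (2 * Real.pi) by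
      rw [← msh_mul hN]; ring, Real.cos_add_int_mul_two_pi]
  have hx2 : (Real.pi * |(j : ℝ)|) ^ 2 ≤ (msh N * k) ^ 2 := by
    rw [← sq_abs (msh N * (k : ℝ)), abs_mul, abs_of_pos hh]
    refine pow_le_pow_left₀ (by positivity) ?_ 2
    rw [← msh_mul hN, mul_assoc]
    exact mul_le_mul_of_nonneg_left hkj hh.le
  have hnum : 2 - 2 * Real.cos (msh N * r) ≤ 4 * (msh N * |(r : ℝ)|) ^ (s / 2) := by
    have : (2 - 2 * Real.cos (msh N * r)) / 4 ≤ (msh N * |(r : ℝ)|) ^ (s / 2) := by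
      refine le_rpow_of_min (by positivity) (by linarith) (by linarith) ?_ ?_
      · linarith [Real.neg_one_le_cos (msh N * r)]
      · have h1 := Real.one_sub_sq_div_two_le_cos (x := msh N * r)
        have h2 := Real.neg_one_le_cos (msh N * r)
        rw [show msh N * |(r : ℝ)| = |msh N * r| by rw [abs_mul, abs_of_pos hh]]
        have h3 := abs_nonneg (msh N * (r : ℝ))
        rw [← sq_abs] at h1
        rcases le_total |msh N * (r : ℝ)| 1 with h | h <;> nlinarith
    linarith
  have hg : 1 ≤ |(j : ℝ)| ^ 2 * (4 * gw j) := by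
    unfold gw
    have h2 := J_le_two_abs hj
    have h3 : J j ^ 2 ≤ 4 * |(j : ℝ)| ^ 2 := by nlinarith [J_pos j]
    rw [show |(j : ℝ)| ^ 2 * (4 * (J j ^ 2)⁻¹) = 4 * |(j : ℝ)| ^ 2 / J j ^ 2 by ring,
      le_div_iff₀ (pow_pos (J_pos j) 2)]
    linarith
  have hpi : (4 : ℝ) ≤ Real.pi ^ 2 := by nlinarith [Real.pi_gt_three]
  have hrp := rpow_half_J hh.le hs0 r
  set Q := msh N ^ (s / 2) * J r ^ s
  have hQ : 0 ≤ Q := mul_nonneg (Real.rpow_nonneg hh.le _) (Real.rpow_nonneg (J_pos r).le _)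
  unfold psn
  rw [if_neg hk0, hcos]
  refine (div_le_div₀ (by positivity : (0:ℝ) ≤ 4 * Q) (by linarith) (by positivity) hx2).trans ?_
  rw [div_le_iff₀ (by positivity)]
  have e : Q * (4 * gw j) * (Real.pi * |(j : ℝ)|) ^ 2 =
    Q * Real.pi ^ 2 * (|(j : ℝ)| ^ 2 * (4 * gw j)) := by ring
  rw [e]
  have : Q * 4 ≤ Q * Real.pi ^ 2 := mul_le_mul_of_nonneg_left hpi hQ
  nlinarith [mul_le_mul_of_nonneg_left hg (mul_nonneg hQ (sq_nonneg Real.pi))]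

/-- Constant in the aliasing estimate. -/
def Ca : ℝ := 4 * Real.sqrt Cg

theorem Ca_nonneg : 0 ≤ Ca := by unfold Ca; positivity

include hN in
theorem al_sub_pointwise {s : ℝ} (hs0 : 0 ≤ s) (hs1 : s ≤ 1) {y : ℤ → ℂ}
    (hy : ∀ k ∉ dual N, y k = 0) (k : ℤ) :
    ‖al N y k - y k‖ ≤
      msh N ^ (s / 2) * (Js s y (red N k) * (4 * gw ((k + N) / (2 * N)))) := by
  have hh := msh_pos hN
  unfold al
  by_cases hk : k ∈ dual N
  · rw [red_of_mem hN hk]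
    have hj : (k + N) / (2 * (N : ℤ)) = 0 := by
      rw [dual, Finset.mem_Icc] at hk
      exact Int.ediv_eq_zero_of_lt (by omega) (by omega)
    rw [hj, show ((psn N k : ℝ) : ℂ) * y k - y k = ((psn N k - 1 : ℝ) : ℂ) * y k by push_cast; ring,
      norm_mul, Complex.norm_real, Real.norm_eq_abs]
    have h1 : |psn N k - 1| ≤ (msh N * |(k : ℝ)|) ^ (s / 2) := by
      refine le_rpow_of_min (by positivity) (by linarith) (by linarith) ?_ (psn_sub_one_le hN k)
      rw [abs_le]; constructor <;> linarith [psn_nonneg N k, psn_le_one N k]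
    have h2 := h1.trans (rpow_half_J hh.le hs0 k)
    have g0 : gw 0 = 1 := by simp [gw, J]
    rw [g0]
    have h3 := mul_le_mul_of_nonneg_right h2 (norm_nonneg (y k))
    have h4 : 0 ≤ msh N ^ (s / 2) * J k ^ s * ‖y k‖ := (mul_nonneg (abs_nonneg _) (norm_nonneg _)).trans h3
    unfold Js
    linarith
  · rw [hy k hk, sub_zero, norm_mul, Complex.norm_real, Real.norm_of_nonneg (psn_nonneg N k)]
    have := mul_le_mul_of_nonneg_right (psn_alias hN hs0 hs1 hk) (norm_nonneg (y (red N k)))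
    unfold Js
    linarith

include hN in
/-- The interpolation error, aliased frequencies included, is `O(h^(s/2))` in `ℓ²`: every integer
frequency is determined by its reduction and by the index of its aliasing band. -/
theorem al_sub_bd {s : ℝ} (hs0 : 0 ≤ s) (hs1 : s ≤ 1) {y : ℤ → ℂ} {v : ℝ}
    (hy : ∀ k ∉ dual N, y k = 0) (hv : Bd (Js s y) v) :
    Bd (nm (df (al N y) y)) (Ca * (msh N ^ (s / 2) * v)) := by
  have hh := msh_pos hN
  have hH : 0 ≤ msh N ^ (s / 2) := Real.rpow_nonneg hh.le _
  refine ⟨by have := hv.1; have := Ca_nonneg; positivity, fun _ => norm_nonneg _, ?_⟩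
  have hp := (hv.2.2.prod gw_SB).comp_inj
    (e := fun k : ℤ => (red N k, (k + N) / (2 * (N : ℤ)))) (fun a b hab => by
      simp only [Prod.mk.injEq] at hab
      rw [← red_add hN a, ← red_add hN b, hab.1, hab.2])
  have hC : (Ca * (msh N ^ (s / 2) * v)) ^ 2 = 16 * (msh N ^ (s / 2)) ^ 2 * (v ^ 2 * Cg) := by
    unfold Ca
    have := Real.sq_sqrt Cg_nonneg
    linear_combination 16 * (msh N ^ (s / 2)) ^ 2 * v ^ 2 * this
  rw [hC]
  refine (hp.const_mul (c := 16 * (msh N ^ (s / 2)) ^ 2) (by positivity)).mono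
    (fun _ => sq_nonneg _) (fun k => ?_) le_rfl
  have h1 := al_sub_pointwise hN hs0 hs1 hy k
  have h2 := pow_le_pow_left₀ (norm_nonneg _) h1 2
  refine h2.trans ?_
  set g := gw ((k + N) / (2 * N)) with hg
  have g0 : 0 ≤ g := (gw_pos _).le
  have g1 : g ≤ 1 := gw_le_one _
  have : g ^ 2 ≤ g := by nlinarith
  have e : (msh N ^ (s / 2) * (Js s y (red N k) * (4 * g))) ^ 2 =
    16 * (msh N ^ (s / 2)) ^ 2 * (Js s y (red N k) ^ 2 * g ^ 2) := by ring
  rw [e]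
  gcongr

theorem al_sub (N : ℕ) (y z : ℤ → ℂ) (k : ℤ) : al N (df y z) k = al N y k - al N z k := by
  unfold al df; ring

end

/-! ### The two profile equations as instances of one abstract equation -/

/-- The FPU symbol `(4/h) sin(hn/4)`, extended linearly outside the range of pair sums. -/
def SF (N : ℕ) (n : ℤ) : ℝ :=
  if |n| ≤ 2 * N then 4 / msh N * Real.sin (msh N * n / 4) else n

/-- The FPU symbol `cos(hn/4)`, cut off to the dual lattice. -/
def cF (N : ℕ) (n : ℤ) : ℝ := if n ∈ dual N then Real.cos (msh N * n / 4) else 0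

/-- Discrete Fourier coefficients, extended by zero outside the dual lattice. -/
def Uf (N : ℕ) (V : ℝ → ℤ → ℂ) (t : ℝ) (k : ℤ) : ℂ := if k ∈ dual N then dF N (V t) k else 0

theorem Uf_off (N : ℕ) (V : ℝ → ℤ → ℂ) (t : ℝ) : ∀ k ∉ dual N, Uf N V t k = 0 :=
  fun k hk => by unfold Uf; rw [if_neg hk]

theorem mem_dual {N : ℕ} {k : ℤ} : k ∈ dual N ↔ -(N : ℤ) ≤ k ∧ k ≤ N - 1 := by
  rw [dual, Finset.mem_Icc]

section

variable {N : ℕ} (hN : 1 ≤ N)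
include hN

omit hN in
theorem SF_eq {n : ℤ} (hn : |n| ≤ 2 * N) : SF N n = 4 / msh N * Real.sin (msh N * n / 4) := by
  unfold SF; rw [if_pos hn]

theorem SF_arg {n : ℤ} (hn : |n| ≤ 2 * N) : |msh N * n / 4| ≤ Real.pi / 2 := by
  have hh := msh_pos hN
  have : |(n : ℝ)| ≤ 2 * N := by exact_mod_cast hn
  rw [abs_div, abs_mul, abs_of_pos hh, abs_of_pos (by norm_num : (0:ℝ) < 4), ← msh_mul hN]
  nlinarith

theorem SF_sub (n : ℤ) (hn : |n| ≤ 2 * N) :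
    |SF N n - n| ≤ 4 / msh N * (|msh N * (n : ℝ) / 4| ^ 3 / 6) := by
  have hh := msh_pos hN
  have h2 := Real.abs_sub_sin_le (msh N * n / 4)
  rw [SF_eq hn]
  have e : 4 / msh N * Real.sin (msh N * n / 4) - n =
      -(4 / msh N * (msh N * n / 4 - Real.sin (msh N * n / 4))) := by field_simp; ring
  rw [e, abs_neg, abs_mul, abs_of_pos (by positivity : 0 < 4 / msh N)]
  exact mul_le_mul_of_nonneg_left h2 (by positivity)

theorem nearF : Near (SF N) (cF N) (msh N) where
  S1 n := by
    have hh := msh_pos hN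
    by_cases hn : |n| ≤ 2 * N
    · refine (SF_sub hN n hn).trans ?_
      have h1 := SF_arg hN hn
      have h3 : |msh N * (n : ℝ) / 4| ≤ 4 := h1.trans (by linarith [Real.pi_le_four])
      have h4 : |msh N * (n : ℝ) / 4| ^ 3 / 6 ≤ 4 * |msh N * (n : ℝ) / 4| ^ 2 / 6 := by
        nlinarith [sq_nonneg |msh N * (n : ℝ) / 4|]
      refine (mul_le_mul_of_nonneg_left h4 (by positivity)).trans ?_
      rw [sq_abs, show 4 / msh N * (4 * (msh N * (n : ℝ) / 4) ^ 2 / 6) =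
        msh N * (n : ℝ) ^ 2 / 6 by field_simp]
      have : 0 ≤ msh N * (n : ℝ) ^ 2 := by positivity
      linarith
    · unfold SF; rw [if_neg hn, sub_self, abs_zero]; positivity
  S2 n := by
    have hh := msh_pos hN
    by_cases hn : |n| ≤ 2 * N
    · refine (SF_sub hN n hn).trans ?_
      rw [abs_div, abs_mul, abs_of_pos hh, abs_of_pos (by norm_num : (0:ℝ) < 4),
        show 4 / msh N * ((msh N * |(n : ℝ)| / 4) ^ 3 / 6) = msh N ^ 2 * |(n : ℝ)| ^ 3 / 96 by
          field_simp; ring]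
      have : 0 ≤ msh N ^ 2 * |(n : ℝ)| ^ 3 := by positivity
      linarith
    · unfold SF; rw [if_neg hn, sub_self, abs_zero]; positivity
  c1 n := by
    have hh := msh_pos hN
    unfold cF
    split_ifs with hn
    · have hx : msh N * |(n : ℝ)| = 4 * |msh N * (n : ℝ) / 4| := by
        rw [abs_div, abs_mul, abs_of_pos hh, abs_of_pos (by norm_num : (0:ℝ) < 4)]; ring
      rw [hx]
      generalize msh N * (n : ℝ) / 4 = x
      have h1 := Real.one_sub_sq_div_two_le_cos (x := x)
      have h2 := Real.cos_le_one x
      have h3 := Real.neg_one_le_cos x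
      rw [abs_of_nonpos (by linarith)]
      rw [← sq_abs] at h1
      rcases le_total |x| 1 with h | h <;> nlinarith [abs_nonneg x]
    · have : (N : ℤ) ≤ |n| := by
        rw [mem_dual] at hn
        rcases le_or_gt 0 n with h | h
        · rw [abs_of_nonneg h]; omega
        · rw [abs_of_neg h]; omega
      have : (N : ℝ) ≤ |(n : ℝ)| := by exact_mod_cast this
      rw [zero_sub, abs_neg, abs_one]
      have h2 := mul_le_mul_of_nonneg_left this hh.le
      rw [msh_mul hN] at h2
      linarith [Real.pi_gt_three]

/-- The resonance function factorises by the identity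
`sin(x+y+z) sin x + sin y sin z = sin(x+y) sin(x+z)`. -/
theorem symbF : Symb (SF N) (cF N) (dual N : Set ℤ) where
  lo n := by
    have hh := msh_pos hN
    by_cases hn : |n| ≤ 2 * N
    · have h1 := Real.mul_abs_le_abs_sin (SF_arg hN hn)
      rw [SF_eq hn, abs_mul, abs_of_pos (by positivity : 0 < 4 / msh N)]
      refine le_trans ?_ (mul_le_mul_of_nonneg_left h1 (by positivity))
      rw [abs_div, abs_mul, abs_of_pos hh, abs_of_pos (by norm_num : (0:ℝ) < 4),
        show 4 / msh N * (2 / Real.pi * (msh N * |(n : ℝ)| / 4)) = 2 / Real.pi * |(n : ℝ)| by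
          field_simp]
      rw [div_eq_inv_mul]
      refine mul_le_mul_of_nonneg_right ?_ (abs_nonneg _)
      rw [le_div_iff₀ Real.pi_pos]
      linarith [Real.pi_le_four]
    · unfold SF; rw [if_neg hn]; linarith [abs_nonneg (n : ℝ)]
  hi n := by
    have hh := msh_pos hN
    by_cases hn : |n| ≤ 2 * N
    · rw [SF_eq hn, abs_mul, abs_of_pos (by positivity : 0 < 4 / msh N)]
      refine (mul_le_mul_of_nonneg_left Real.abs_sin_le_abs (by positivity)).trans (le_of_eq ?_)
      rw [abs_div, abs_mul, abs_of_pos hh, abs_of_pos (by norm_num : (0:ℝ) < 4)]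
      field_simp
    · unfold SF; rw [if_neg hn]
  c1 n := by
    unfold cF; split_ifs
    · exact Real.abs_cos_le_one _
    · simp
  idt a ha b hb d hd hc := by
    have hm : a + b + d ∈ dual N := by
      by_contra h; exact hc (by unfold cF; rw [if_neg h])
    rw [Finset.mem_coe, mem_dual] at ha hb hd
    rw [mem_dual] at hm
    rw [SF_eq (n := a + b + d) (by rw [abs_le]; constructor <;> omega),
      SF_eq (n := a) (by rw [abs_le]; constructor <;> omega),
      SF_eq (n := b) (by rw [abs_le]; constructor <;> omega),
      SF_eq (n := d) (by rw [abs_le]; constructor <;> omega),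
      SF_eq (n := a + b) (by rw [abs_le]; constructor <;> omega),
      SF_eq (n := a + d) (by rw [abs_le]; constructor <;> omega)]
    push_cast
    have key : ∀ x y z : ℝ, Real.sin (x + y + z) * Real.sin x + Real.sin y * Real.sin z =
        Real.sin (x + y) * Real.sin (x + z) := fun x y z => by
      rw [Real.sin_add (x + y), Real.cos_add, Real.sin_add, Real.sin_add x z]
      have := Real.sin_sq_add_cos_sq x
      linear_combination (- Real.sin y * Real.sin z) * this
    have := key (msh N * a / 4) (msh N * b / 4) (msh N * d / 4)
    rw [show msh N * ((a : ℝ) + b + d) / 4 = msh N * a / 4 + msh N * b / 4 + msh N * d / 4 by ring,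
      show msh N * ((a : ℝ) + b) / 4 = msh N * a / 4 + msh N * b / 4 by ring,
      show msh N * ((a : ℝ) + d) / 4 = msh N * a / 4 + msh N * d / 4 by ring]
    linear_combination (4 / msh N) ^ 2 * this

end

theorem Bd.of_finsupp {K : Finset ℤ} {x : ℤ → ℝ} (h0 : ∀ k, 0 ≤ x k) (h : ∀ k ∉ K, x k = 0) :
    Bd x (∑ k ∈ K, x k) := by
  have : ind K x = x := funext fun k => by
    unfold ind; split_ifs with hk
    · rfl
    · exact (h k hk).symm
  rw [← this]
  have h1 : Bd (ind K x) (∑ k ∈ K, x k) := Bd.of_ind (fun k _ => h0 k)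
    (Finset.sum_nonneg fun k _ => h0 k) (Finset.sum_sq_le_sq_sum_of_nonneg fun k _ => h0 k)
  rwa [this] at h1 ⊢

section

variable {N : ℕ} {σ T : ℝ} {V : ℝ → ℤ → ℂ}

theorem dF_continuousOn (hV : ∀ n : ℤ, ContinuousOn (fun t' => V t' n) (Set.Icc 0 T)) (k : ℤ) :
    ContinuousOn (fun t => dF N (V t) k) (Set.Icc 0 T) := by
  unfold dF
  exact continuousOn_const.mul (continuousOn_finsetSum _ fun n _ => (hV n).mul continuousOn_const)

theorem Uf_cont (hV : ∀ n : ℤ, ContinuousOn (fun t' => V t' n) (Set.Icc 0 T)) :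
    ∀ t₀ ∈ Set.Icc 0 T, ∀ ε > 0, ∃ δ > 0, ∀ t ∈ Set.Icc 0 T, |t - t₀| < δ →
    Bd (fun k => ‖Uf N V t k - Uf N V t₀ k‖) ε := by
  intro t₀ ht₀ ε hε
  have hc : ContinuousOn (fun t => ∑ k ∈ dual N, ‖dF N (V t) k - dF N (V t₀) k‖) (Set.Icc 0 T) :=
    continuousOn_finsetSum _ fun k _ => ((dF_continuousOn hV k).sub continuousOn_const).norm
  obtain ⟨δ, hδ, h⟩ := Metric.continuousOn_iff.1 hc t₀ ht₀ ε hε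
  refine ⟨δ, hδ, fun t ht htt => ?_⟩
  have h1 := h t ht (by rwa [Real.dist_eq])
  have hb : Bd (fun k => ‖Uf N V t k - Uf N V t₀ k‖) (∑ k ∈ dual N, ‖Uf N V t k - Uf N V t₀ k‖) :=
    Bd.of_finsupp (fun k => norm_nonneg _) fun k hk => by
      rw [Uf_off _ _ _ k hk, Uf_off _ _ _ k hk]; simp
  refine hb.mono (fun _ => norm_nonneg _) (fun _ => le_rfl) ?_
  have h2 : ∑ k ∈ dual N, ‖Uf N V t k - Uf N V t₀ k‖ =
      ∑ k ∈ dual N, ‖dF N (V t) k - dF N (V t₀) k‖ :=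
    Finset.sum_congr rfl fun k hk => by unfold Uf; rw [if_pos hk, if_pos hk]
  rw [h2]
  simp only [sub_self, norm_zero, Finset.sum_const_zero, Real.dist_eq, sub_zero] at h1
  exact (le_abs_self _).trans h1.le

theorem solF (hN : 1 ≤ N) (hT : 0 ≤ T) (hσ : σ = 1 ∨ σ = -1) {u0 : ℤ → ℂ}
    (hV : ∀ n : ℤ, ContinuousOn (fun t' => V t' n) (Set.Icc 0 T))
    (hE : fpuProfileEq N σ u0 V (Set.Icc 0 T))
    (hZ : ∀ t' ∈ Set.Icc (0:ℝ) T, dF N (V t') 0 = 0) :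
    Sol (SF N) (cF N) (dual N : Set ℤ) σ T (Uf N V) where
  symb := symbF hN
  sg := by rcases hσ with h | h <;> simp [h]
  zero t ht := by unfold Uf; split_ifs; exacts [hZ t ht, rfl]
  off t _ k hk := Uf_off _ _ _ k hk
  bdd := by
    have hc : ContinuousOn (fun t => ∑ k ∈ dual N, ‖dF N (V t) k‖) (Set.Icc 0 T) :=
      continuousOn_finsetSum _ fun k _ => (dF_continuousOn hV k).norm
    obtain ⟨B, hB⟩ := (isCompact_Icc.image_of_continuousOn hc).bddAbove
    refine ⟨B, fun t ht => ?_⟩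
    have hb : Bd (fun k => ‖Uf N V t k‖) (∑ k ∈ dual N, ‖Uf N V t k‖) :=
      Bd.of_finsupp (fun k => norm_nonneg _) fun k hk => by rw [Uf_off _ _ _ k hk]; simp
    refine hb.mono (fun _ => norm_nonneg _) (fun _ => le_rfl) ?_
    have h2 : ∑ k ∈ dual N, ‖Uf N V t k‖ = ∑ k ∈ dual N, ‖dF N (V t) k‖ :=
      Finset.sum_congr rfl fun k hk => by unfold Uf; rw [if_pos hk]
    rw [h2]
    exact hB ⟨t, ht, rfl⟩
  cont := Uf_cont hV
  eq t ht k := by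
    by_cases hk : k ∈ dual N
    · have h1 := hE t ht k hk
      have h0 := hE 0 ⟨le_rfl, hT⟩ k hk
      rw [intervalIntegral.integral_same, mul_zero, sub_zero] at h0
      have e1 : ∀ τ, Uf N V τ k = dF N (V τ) k := fun τ => by unfold Uf; rw [if_pos hk]
      rw [e1, e1, h1, h0]
      have hq : (qq (SF N) (cF N) k : ℂ) =
          1 / (2 * (msh N : ℂ)) * (Real.sin (msh N * k / 2) : ℂ) := by
        have hh := msh_pos hN
        have hkk := mem_dual.1 hk
        have : qq (SF N) (cF N) k = 1 / (2 * msh N) * Real.sin (msh N * k / 2) := by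
          unfold qq cF
          rw [if_pos hk, SF_eq (by rw [abs_le]; constructor <;> omega),
            show msh N * (k : ℝ) / 2 = 2 * (msh N * k / 4) by ring, Real.sin_two_mul]
          field_simp
        rw [this]; push_cast; ring
      rw [hq]
      have hint : ∀ τ ∈ Set.uIcc 0 t, (∑ k₁ ∈ dual N,
            (if k₁ ≠ 0 ∧ k - k₁ ≠ 0 ∧ k - k₁ ∈ dual N then
              eI (σ * τ * Phi2 (msh N) k k₁ (k - k₁)) * dF N (V τ) k₁ * dF N (V τ) (k - k₁)
            else 0)) = GG (SF N) σ τ (Uf N V τ) k := by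
        intro τ hτ
        rw [Set.uIcc_of_le ht.1] at hτ
        have hz := hZ τ ⟨hτ.1, hτ.2.trans ht.2⟩
        unfold GG Bi
        rw [tsum_eq_sum (s := dual N) (fun j hj => by rw [Uf_off _ _ _ j hj]; ring)]
        refine Finset.sum_congr rfl fun j hj => ?_
        by_cases hj0 : j = 0
        · rw [if_neg (by tauto), hj0]; unfold Uf; rw [hz]; simp
        by_cases hj1 : k - j = 0
        · rw [if_neg (by tauto), hj1]; unfold Uf; rw [hz]; simp
        by_cases hj2 : k - j ∈ dual N
        · rw [if_pos ⟨hj0, hj1, hj2⟩]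
          have hp : ph2 (SF N) j (k - j) = Phi2 (msh N) k j (k - j) := by
            have hh := msh_pos hN
            have hkk := mem_dual.1 hk
            have hjj := mem_dual.1 hj
            have hkj := mem_dual.1 hj2
            unfold ph2 Phi2
            rw [show j + (k - j) = k by ring,
              SF_eq (n := k) (by rw [abs_le]; constructor <;> omega),
              SF_eq (n := j) (by rw [abs_le]; constructor <;> omega),
              SF_eq (n := k - j) (by rw [abs_le]; constructor <;> omega)]
            field_simp; ring
          unfold e2 Uf
          rw [hp, if_pos hj, if_pos hj2]
          ring_nf
        · rw [if_neg (by tauto)]; unfold Uf; rw [if_neg hj2]; simp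
      rw [intervalIntegral.integral_congr hint]
      ring
    · rw [Uf_off _ _ _ k hk, Uf_off _ _ _ k hk]
      have : cF N k = 0 := by unfold cF; rw [if_neg hk]
      unfold qq; rw [this]; simp

end

/-- `ℓ²` norm of a real sequence. -/
def nrm (x : ℤ → ℝ) : ℝ := Real.sqrt (∑' k, x k ^ 2)

theorem Bd.nrm_le {x : ℤ → ℝ} {X : ℝ} (h : Bd x X) : nrm x ≤ X := by
  unfold nrm
  rw [Real.sqrt_le_left h.1]
  exact h.2.2.tsum_le

theorem Bd.self {x : ℤ → ℝ} {X : ℝ} (h : Bd x X) : Bd x (nrm x) := by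
  refine ⟨Real.sqrt_nonneg _, h.2.1, ?_⟩
  rw [nrm, Real.sq_sqrt (tsum_nonneg fun _ => sq_nonneg _)]
  exact SB.of_tsum (fun _ => sq_nonneg _) h.2.2.summable le_rfl

theorem nrm_sub {x y z : ℤ → ℝ} {X Y R : ℝ} (hx : Bd x X) (hy : Bd y Y) (hz : Bd z R)
    (h : ∀ k, |x k - y k| ≤ z k) : |nrm x - nrm y| ≤ R := by
  have h1 := ((hy.self.add hz).mono hx.2.1 (fun k => by
    have := (abs_le.1 (h k)).2; linarith) le_rfl).nrm_le
  have h2 := ((hx.self.add hz).mono hy.2.1 (fun k => by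
    have := (abs_le.1 (h k)).1; linarith) le_rfl).nrm_le
  rw [abs_le]; constructor <;> linarith

theorem continuousOn_of_abs {f : ℝ → ℝ} {I : Set ℝ} (h : ∀ t₀ ∈ I, ∀ ε > 0, ∃ δ > 0, ∀ t ∈ I,
    |t - t₀| < δ → |f t - f t₀| ≤ ε) : ContinuousOn f I := by
  rw [Metric.continuousOn_iff]
  intro t₀ ht₀ ε hε
  obtain ⟨δ, hδ, h1⟩ := h t₀ ht₀ (ε / 2) (by linarith)
  refine ⟨δ, hδ, fun t ht htt => ?_⟩
  rw [Real.dist_eq] at *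
  linarith [h1 t ht htt]

/-- Sequence of amplitudes with the Sobolev weight `(1+k²)^(s/2)`. -/
def Ws (s : ℝ) (x : ℤ → ℂ) (k : ℤ) : ℝ := (1 + (k : ℝ) ^ 2) ^ (s / 2) * ‖x k‖

theorem Ws_nonneg (s : ℝ) (x : ℤ → ℂ) (k : ℤ) : 0 ≤ Ws s x k :=
  mul_nonneg (Real.rpow_nonneg (by positivity) _) (norm_nonneg _)

theorem Ws_sq (s : ℝ) (x : ℤ → ℂ) (k : ℤ) :
    Ws s x k ^ 2 = (1 + (k : ℝ) ^ 2) ^ s * ‖x k‖ ^ 2 := by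
  unfold Ws
  rw [mul_pow, ← Real.rpow_natCast, ← Real.rpow_mul (by positivity)]
  norm_num

theorem nm_le_Ws {s : ℝ} (hs : 0 ≤ s) (x : ℤ → ℂ) (k : ℤ) : ‖x k‖ ≤ Ws s x k :=
  le_mul_of_one_le_left (norm_nonneg _)
    (Real.one_le_rpow (by nlinarith [sq_nonneg (k : ℝ)]) (by linarith))

theorem HsSeqR_eq (s : ℝ) (x : ℤ → ℂ) : HsSeqR s x = nrm (Ws s x) := by
  unfold HsSeqR nrm; simp only [Ws_sq]

theorem l2R_eq (x : ℤ → ℂ) : l2R x = nrm (nm x) := rfl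

theorem HsSeq_bd {s : ℝ} {x : ℤ → ℂ} (h : HsSeq s x < ⊤) : Bd (Ws s x) (HsSeqR s x) := by
  have h0 : ∀ k, 0 ≤ Ws s x k ^ 2 := fun _ => sq_nonneg _
  have h1 : ∑' k : ℤ, ENNReal.ofReal (Ws s x k ^ 2) ≠ ⊤ := by
    intro ht
    simp only [Ws_sq] at ht
    rw [HsSeq, ht] at h
    simp at h
  have hs : Summable fun k => Ws s x k ^ 2 := by
    have := ENNReal.summable_toReal h1
    refine this.congr fun k => ?_
    rw [ENNReal.toReal_ofReal (h0 k)]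
  rw [HsSeqR_eq]
  refine ⟨Real.sqrt_nonneg _, Ws_nonneg s x, ?_⟩
  rw [nrm, Real.sq_sqrt (tsum_nonneg fun _ => sq_nonneg _)]
  exact SB.of_tsum h0 hs le_rfl

theorem HsSeq_lt {s : ℝ} {x : ℤ → ℂ} {ε : ℝ} (hε : 0 < ε) (h : HsSeq s x < ENNReal.ofReal ε) :
    Bd (Ws s x) ε := by
  have hb := HsSeq_bd (h.trans ENNReal.ofReal_lt_top)
  refine hb.mono hb.2.1 (fun _ => le_rfl) ?_
  have e : HsSeq s x = ENNReal.ofReal (HsSeqR s x) := by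
    rw [HsSeqR_eq, nrm, Real.sqrt_eq_rpow,
      ← ENNReal.ofReal_rpow_of_nonneg (tsum_nonneg fun _ => sq_nonneg _) (by norm_num),
      ENNReal.ofReal_tsum_of_nonneg (fun _ => sq_nonneg _) hb.2.2.summable]
    simp only [Ws_sq]; rfl
  rw [e] at h
  exact ((ENNReal.ofReal_lt_ofReal_iff hε).1 h).le

theorem Ws_sub (s : ℝ) (x y : ℤ → ℂ) (k : ℤ) : |Ws s x k - Ws s y k| ≤ Ws s (df x y) k := by
  unfold Ws df
  rw [← mul_sub, abs_mul, abs_of_nonneg (Real.rpow_nonneg (by positivity) _)]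
  exact mul_le_mul_of_nonneg_left (abs_norm_sub_norm_le _ _) (Real.rpow_nonneg (by positivity) _)

section

variable {s σ T : ℝ} {W : ℝ → ℤ → ℂ}

theorem HsSeqR_cont (hf : ∀ t' ∈ Set.Icc (0:ℝ) T, HsSeq s (W t') < ⊤)
    (hc : ∀ t₀ ∈ Set.Icc (0:ℝ) T, ∀ ε : ℝ, 0 < ε → ∃ δ : ℝ, 0 < δ ∧
          ∀ t' ∈ Set.Icc (0:ℝ) T, |t' - t₀| < δ →
            HsSeq s (fun k => W t' k - W t₀ k) < ENNReal.ofReal ε) :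
    ContinuousOn (fun t => HsSeqR s (W t)) (Set.Icc 0 T) := by
  refine continuousOn_of_abs fun t₀ ht₀ ε hε => ?_
  obtain ⟨δ, hδ, h⟩ := hc t₀ ht₀ ε hε
  refine ⟨δ, hδ, fun t ht htt => ?_⟩
  rw [HsSeqR_eq, HsSeqR_eq]
  exact nrm_sub (HsSeq_bd (hf t ht)) (HsSeq_bd (hf t₀ ht₀)) (HsSeq_lt hε (h t ht htt))
    (Ws_sub s _ _)

theorem solK (hs : 0 ≤ s) (hT : 0 ≤ T) (hσ : σ = 1 ∨ σ = -1) {w0 : ℤ → ℂ}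
    (hf : ∀ t' ∈ Set.Icc (0:ℝ) T, HsSeq s (W t') < ⊤)
    (hc : ∀ t₀ ∈ Set.Icc (0:ℝ) T, ∀ ε : ℝ, 0 < ε → ∃ δ : ℝ, 0 < δ ∧
          ∀ t' ∈ Set.Icc (0:ℝ) T, |t' - t₀| < δ →
            HsSeq s (fun k => W t' k - W t₀ k) < ENNReal.ofReal ε)
    (hE : kdvProfileEq σ w0 W (Set.Icc 0 T))
    (hZ : ∀ t' ∈ Set.Icc (0:ℝ) T, W t' 0 = 0) : Sol SK cK Set.univ σ T W where
  symb := symbK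
  sg := by rcases hσ with h | h <;> simp [h]
  zero := hZ
  off t _ k hk := absurd (Set.mem_univ k) hk
  bdd := by
    obtain ⟨B, hB⟩ := (isCompact_Icc.image_of_continuousOn (HsSeqR_cont hf hc)).bddAbove
    exact ⟨B, fun t ht => (HsSeq_bd (hf t ht)).mono (fun _ => norm_nonneg _) (nm_le_Ws hs _)
      (hB ⟨t, ht, rfl⟩)⟩
  cont t₀ ht₀ ε hε := by
    obtain ⟨δ, hδ, h⟩ := hc t₀ ht₀ ε hε
    exact ⟨δ, hδ, fun t ht htt => (HsSeq_lt hε (h t ht htt)).mono (fun _ => norm_nonneg _)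
      (nm_le_Ws hs (df (W t) (W t₀))) le_rfl⟩
  eq t ht k := by
    have h1 := hE t ht k
    have h0 := hE 0 ⟨le_rfl, hT⟩ k
    rw [intervalIntegral.integral_same, mul_zero, sub_zero] at h0
    rw [h1, h0]
    have hint : ∀ τ ∈ Set.uIcc 0 t, (∑' k₁ : ℤ,
        (if k₁ ≠ 0 ∧ k - k₁ ≠ 0 then
          eI (σ * τ * Psi2 k k₁ (k - k₁)) * W τ k₁ * W τ (k - k₁) else 0)) =
        GG SK σ τ (W τ) k := by
      intro τ hτ
      rw [Set.uIcc_of_le ht.1] at hτ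
      have hz := hZ τ ⟨hτ.1, hτ.2.trans ht.2⟩
      unfold GG Bi
      refine tsum_congr fun j => ?_
      by_cases hj0 : j = 0
      · rw [if_neg (by tauto), hj0, hz]; ring
      by_cases hj1 : k - j = 0
      · rw [if_neg (by tauto), hj1, hz]; ring
      rw [if_pos ⟨hj0, hj1⟩]
      have hp : ph2 SK j (k - j) = Psi2 k j (k - j) := by
        unfold ph2 Psi2
        simp only [SK]
        push_cast; ring
      unfold e2
      rw [hp]
      ring_nf
    rw [intervalIntegral.integral_congr hint]
    unfold qq
    push_cast
    ring

end

/-! ### Norms of the interpolated profile -/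

theorem Js_le_Ws {s : ℝ} (hs0 : 0 ≤ s) (hs1 : s ≤ 1) (x : ℤ → ℂ) (k : ℤ) :
    Js s x k ≤ 2 * Ws s x k := by
  unfold Js Ws
  rw [← mul_assoc]
  refine mul_le_mul_of_nonneg_right ?_ (norm_nonneg _)
  have h1 : J k ^ 2 ≤ 4 * (1 + (k : ℝ) ^ 2) := by
    unfold J; nlinarith [sq_nonneg (1 - |(k : ℝ)|), sq_abs (k : ℝ)]
  have h2 : J k ^ s = (J k ^ 2) ^ (s / 2) := by
    rw [← Real.rpow_natCast, ← Real.rpow_mul (J_pos k).le]; norm_num; ring_nf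
  rw [h2]
  refine (Real.rpow_le_rpow (by positivity) h1 (by linarith)).trans ?_
  rw [Real.mul_rpow (by norm_num) (by positivity)]
  refine mul_le_mul_of_nonneg_right ?_ (Real.rpow_nonneg (by positivity) _)
  rw [show (4 : ℝ) = 2 ^ (2 : ℝ) by norm_num, ← Real.rpow_mul (by norm_num)]
  calc (2 : ℝ) ^ (2 * (s / 2)) ≤ 2 ^ (1 : ℝ) :=
        Real.rpow_le_rpow_of_exponent_le (by norm_num) (by linarith)
    _ = 2 := by norm_num

section

variable {N : ℕ} {s T : ℝ} {V W : ℝ → ℤ → ℂ}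

theorem Hs_bd (N : ℕ) (s : ℝ) (V : ℝ → ℤ → ℂ) (t : ℝ) : Bd (Ws s (Uf N V t)) (Hs N s (V t)) := by
  have e : ind (dual N) (Ws s (Uf N V t)) = Ws s (Uf N V t) := funext fun k => by
    unfold ind; split_ifs with hk
    · rfl
    · unfold Ws; rw [Uf_off _ _ _ k hk]; simp
  rw [← e]
  refine Bd.of_ind (fun k _ => Ws_nonneg _ _ k) (Real.sqrt_nonneg _) ?_
  rw [Hs, Real.sq_sqrt (Finset.sum_nonneg fun k _ =>
    mul_nonneg (Real.rpow_nonneg (by positivity) _) (sq_nonneg _))]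
  refine Finset.sum_le_sum fun k hk => ?_
  rw [Ws_sq]; unfold Uf; rw [if_pos hk]

theorem Uf_Js (hs0 : 0 ≤ s) (hs1 : s ≤ 1) (t : ℝ) :
    Bd (Js s (Uf N V t)) (2 * Hs N s (V t)) :=
  ((Hs_bd N s V t).const_mul (by norm_num : (0:ℝ) ≤ 2)).mono (Js_nonneg _ _)
    (Js_le_Ws hs0 hs1 _) le_rfl

theorem Hs_cont (hV : ∀ n : ℤ, ContinuousOn (fun t' => V t' n) (Set.Icc 0 T)) :
    ContinuousOn (fun t => Hs N s (V t)) (Set.Icc 0 T) := by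
  unfold Hs
  exact Real.continuous_sqrt.comp_continuousOn (continuousOn_finsetSum _ fun k _ =>
    continuousOn_const.mul ((dF_continuousOn hV k).norm.pow 2))

theorem tF_al (hN : 1 ≤ N) (t : ℝ) (k : ℤ) : tF (interp N (V t)) k = al N (Uf N V t) k := by
  rw [tF_interp hN]; unfold al Uf; rw [if_pos (red_mem hN k)]

/-- Coefficient sequence of `𝓛_h 𝓥_h - 𝓦`. -/
def Dl (N : ℕ) (V W : ℝ → ℤ → ℂ) (t : ℝ) : ℤ → ℂ := df (al N (Uf N V t)) (W t)

theorem Dl_eq (hN : 1 ≤ N) (t : ℝ) :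
    (fun k => tF (interp N (V t)) k - W t k) = Dl N V W t :=
  funext fun k => by rw [tF_al hN]; rfl

theorem al_bd_zero (hN : 1 ≤ N) {y : ℤ → ℂ} {v : ℝ} (hy : ∀ k ∉ dual N, y k = 0)
    (hv : Bd (nm y) v) : Bd (nm (al N y)) ((Ca + 1) * v) := by
  have h0 : Js 0 y = nm y := funext fun k => by unfold Js nm; simp
  have := al_sub_bd hN (s := 0) le_rfl zero_le_one hy (h0 ▸ hv)
  refine (this.add hv).mono (fun _ => norm_nonneg _) (fun k => ?_) (by simp; linarith)
  have := norm_add_le (al N y k - y k) (y k)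
  simpa [nm, df] using this

theorem Dl_bd (hN : 1 ≤ N) (hs0 : 0 ≤ s) {t : ℝ} (hf : HsSeq s (W t) < ⊤) :
    Bd (nm (Dl N V W t)) (l2R (Dl N V W t)) := by
  have h1 := al_bd_zero hN (Uf_off N V t)
    ((Hs_bd N s V t).mono (fun _ => norm_nonneg _) (nm_le_Ws hs0 _) le_rfl)
  have h2 := (HsSeq_bd hf).mono (x := nm (W t)) (fun _ => norm_nonneg _) (nm_le_Ws hs0 _) le_rfl
  have : Bd (nm (Dl N V W t)) _ := (h1.add h2).mono (fun _ => norm_nonneg _)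
    (fun k => norm_sub_le _ _) le_rfl
  exact this.self

theorem Dl_cont (hN : 1 ≤ N) (hs0 : 0 ≤ s)
    (hV : ∀ n : ℤ, ContinuousOn (fun t' => V t' n) (Set.Icc 0 T))
    (hf : ∀ t' ∈ Set.Icc (0:ℝ) T, HsSeq s (W t') < ⊤)
    (hc : ∀ t₀ ∈ Set.Icc (0:ℝ) T, ∀ ε : ℝ, 0 < ε → ∃ δ : ℝ, 0 < δ ∧
          ∀ t' ∈ Set.Icc (0:ℝ) T, |t' - t₀| < δ →
            HsSeq s (fun k => W t' k - W t₀ k) < ENNReal.ofReal ε) :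
    ContinuousOn (fun t => l2R (Dl N V W t)) (Set.Icc 0 T) := by
  refine continuousOn_of_abs fun t₀ ht₀ ε hε => ?_
  have hK : 0 < Ca + 2 := by linarith [Ca_nonneg]
  have hε' : 0 < ε / (Ca + 2) := by positivity
  obtain ⟨δ₁, hδ₁, h₁⟩ := hc t₀ ht₀ _ hε'
  obtain ⟨δ₂, hδ₂, h₂⟩ := Uf_cont (N := N) hV t₀ ht₀ _ hε'
  refine ⟨min δ₁ δ₂, lt_min hδ₁ hδ₂, fun t ht htt => ?_⟩
  have a1 : Bd (nm (df (W t) (W t₀))) _ := (HsSeq_lt hε' (h₁ t ht (htt.trans_le (min_le_left _ _)))).mono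
    (fun _ => norm_nonneg _) (nm_le_Ws hs0 _) le_rfl
  have a2 := al_bd_zero hN (y := df (Uf N V t) (Uf N V t₀))
    (fun k hk => by unfold df; rw [Uf_off _ _ _ k hk, Uf_off _ _ _ k hk, sub_zero])
    (h₂ t ht (htt.trans_le (min_le_right _ _)))
  rw [l2R_eq, l2R_eq]
  refine nrm_sub (Dl_bd hN hs0 (hf t ht)) (Dl_bd hN hs0 (hf t₀ ht₀))
    ((a2.add a1).mono (X := ε) (fun k => add_nonneg (norm_nonneg _) (norm_nonneg _))
      (fun _ => le_rfl) (le_of_eq (by field_simp; ring))) fun k => ?_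
  refine (abs_norm_sub_norm_le _ _).trans ?_
  have e : Dl N V W t k - Dl N V W t₀ k =
      al N (df (Uf N V t) (Uf N V t₀)) k - df (W t) (W t₀) k := by
    rw [al_sub]; unfold Dl df; ring
  rw [e]
  exact norm_sub_le _ _

end

/-! ### Polynomial bounds -/

/-- Constant with `2H + n ≤ Lc * H + D` for the bounds used in `cmp_profiles`. -/
def Lc : ℝ := Ca + 3

/-- Constant in the polynomial estimates. -/
def Kp : ℝ := 16 + 2 * Ca * (Lc ^ 3 + Lc ^ 2 + 3 * Lc + 6)

theorem Lc_nonneg : 0 ≤ Lc := by unfold Lc; linarith [Ca_nonneg]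

theorem Kp_nonneg : 0 ≤ Kp := by
  unfold Kp; have := Lc_nonneg; have := Ca_nonneg; positivity

section

variable {E η H ω D y : ℝ}

theorem poly_aux (hH : 0 ≤ H) (hω : 0 ≤ ω) (hD : 0 ≤ D) (hy : 0 ≤ y)
    (hy1 : y ≤ 2 * (1 + H + ω)) (hy2 : y ≤ Lc * H + D) :
    H * y ≤ Lc * H ^ 2 + D * (1 + H + ω) ^ 2 ∧
    H * y ^ 2 ≤ Lc ^ 2 * H ^ 3 + (Lc + 2) * (D * (1 + H + ω) ^ 2) ∧
    H * y ^ 3 ≤ Lc ^ 3 * H ^ 4 + (Lc ^ 2 + 2 * Lc + 4) * (D * (1 + H + ω) ^ 3) := by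
  have hL := Lc_nonneg
  set X := 1 + H + ω with hX
  have hX1 : 1 ≤ X := by linarith
  have hHX : H ≤ X := by linarith
  have hX0 : 0 ≤ X := by linarith
  have x1 : X ≤ X ^ 2 := by nlinarith
  have hDX : D * H ≤ D * X ^ 2 := mul_le_mul_of_nonneg_left (hHX.trans x1) hD
  have a1 : H * y ≤ Lc * H ^ 2 + D * H := by nlinarith
  have a2 : H * y ^ 2 ≤ Lc ^ 2 * H ^ 3 + (Lc + 2) * (D * X ^ 2) := by
    have s1 : H * y ^ 2 ≤ (H * y) * (Lc * H + D) := by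
      rw [show H * y ^ 2 = (H * y) * y by ring]
      exact mul_le_mul_of_nonneg_left hy2 (mul_nonneg hH hy)
    have s2 : (H * y) * (Lc * H) ≤ (Lc * H ^ 2 + D * H) * (Lc * H) :=
      mul_le_mul_of_nonneg_right a1 (mul_nonneg hL hH)
    have s3 : D * (H * y) ≤ D * (X * (2 * X)) :=
      mul_le_mul_of_nonneg_left (mul_le_mul hHX hy1 hy hX0) hD
    have s4 : Lc * (D * H ^ 2) ≤ Lc * (D * X ^ 2) :=
      mul_le_mul_of_nonneg_left (mul_le_mul_of_nonneg_left (pow_le_pow_left₀ hH hHX 2) hD) hL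
    nlinarith
  refine ⟨by linarith, a2, ?_⟩
  have s1 : H * y ^ 3 ≤ (H * y ^ 2) * (Lc * H + D) := by
    rw [show H * y ^ 3 = (H * y ^ 2) * y by ring]
    exact mul_le_mul_of_nonneg_left hy2 (by positivity)
  have s2 : (H * y ^ 2) * (Lc * H) ≤ (Lc ^ 2 * H ^ 3 + (Lc + 2) * (D * X ^ 2)) * (Lc * H) :=
    mul_le_mul_of_nonneg_right a2 (mul_nonneg hL hH)
  have s3 : D * (H * y ^ 2) ≤ D * (X * (2 * X) ^ 2) :=
    mul_le_mul_of_nonneg_left (mul_le_mul hHX (pow_le_pow_left₀ hy hy1 2) (by positivity) hX0) hD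
  have s4 : (Lc ^ 2 + 2 * Lc) * (D * X ^ 2 * H) ≤ (Lc ^ 2 + 2 * Lc) * (D * X ^ 2 * X) :=
    mul_le_mul_of_nonneg_left (mul_le_mul_of_nonneg_left hHX (by positivity)) (by positivity)
  nlinarith

variable (hH : 0 ≤ H) (hω : 0 ≤ ω) (hD : 0 ≤ D) (h0 : 0 ≤ η) (h1 : η ≤ 1) (hE : η ≤ E)
include hH hω hD h0 h1 hE

/-- Bounds in terms of the quantities of the final estimate: `E` and `η` are the lattice error with
and without growth in time, `H` and `ω` the `H^s` norms of the two profiles, `D` the `ℓ²` norm of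
their difference. Whenever the interpolation error `η H` occurs next to the KdV profile, the latter
is traded for `H + D`. -/
theorem poly_bounds :
    bdry E (2 * H) (min ω ((Ca + 1) * H + D)) (D + Ca * (η * (2 * H))) ≤
      Kp * (E * ((1 + H) * H ^ 2) + D * (1 + H + ω) ^ 2) ∧
    bulk E (2 * H) (min ω ((Ca + 1) * H + D)) (D + Ca * (η * (2 * H))) ≤
      Kp * (E * ((1 + H) * H ^ 3) + D * (1 + H + ω) ^ 3) := by
  have hL := Lc_nonneg
  have hC := Ca_nonneg
  have hn0 : 0 ≤ min ω ((Ca + 1) * H + D) := le_min hω (by positivity)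
  have hn1 := min_le_left ω ((Ca + 1) * H + D)
  have hn2 := min_le_right ω ((Ca + 1) * H + D)
  generalize min ω ((Ca + 1) * H + D) = n at *
  obtain ⟨y, hy⟩ : ∃ y, y = 2 * H + n := ⟨_, rfl⟩
  have hy0 : 0 ≤ y := by linarith
  have hy1 : y ≤ 2 * (1 + H + ω) := by linarith
  have hy2 : y ≤ Lc * H + D := by unfold Lc; linarith
  obtain ⟨p1, p2, p3⟩ := poly_aux hH hω hD hy0 hy1 hy2
  have hE0 := h0.trans hE
  unfold bdry bulk
  rw [← hy]
  set X := 1 + H + ω with hX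
  have hX1 : 1 ≤ X := by linarith
  have x1 : X ≤ X ^ 2 := by nlinarith
  have x2 : X ^ 2 ≤ X ^ 3 := by nlinarith
  have d1 : D * y ≤ 2 * (D * X ^ 2) := by nlinarith
  have d2 : D * y ^ 2 ≤ 4 * (D * X ^ 2) := by
    have := mul_le_mul_of_nonneg_left (pow_le_pow_left₀ hy0 hy1 2) hD
    linarith
  have d3 : D * y ^ 3 ≤ 8 * (D * X ^ 3) := by
    have := mul_le_mul_of_nonneg_left (pow_le_pow_left₀ hy0 hy1 3) hD
    linarith
  have hDX2 : 0 ≤ D * X ^ 2 := by positivity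
  have hDX23 : D * X ^ 2 ≤ D * X ^ 3 := mul_le_mul_of_nonneg_left x2 hD
  -- a term carrying the factor `η` is bounded through `η ≤ E` or `η ≤ 1`
  have key : ∀ P Q R : ℝ, 0 ≤ P → 0 ≤ Q → R ≤ P + Q → Ca * (η * (2 * R)) ≤
      2 * Ca * (E * P) + 2 * Ca * Q := fun P Q R hP hQ hR => by
    have r1 : η * R ≤ η * P + η * Q := by
      have := mul_le_mul_of_nonneg_left hR h0; linarith
    have r2 : η * P ≤ E * P := mul_le_mul_of_nonneg_right hE hP
    have r3 : η * Q ≤ Q := by have := mul_le_mul_of_nonneg_right h1 hQ; linarith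
    have := mul_le_mul_of_nonneg_left (show η * R ≤ E * P + Q by linarith)
      (show 0 ≤ 2 * Ca by linarith)
    linarith
  have q1 := key _ _ _ (by positivity) hDX2 p1
  have q2 := key _ _ _ (by positivity) (by positivity) p2
  have q3 := key _ _ _ (by positivity) (by positivity) p3
  have z2 : 0 ≤ E * H ^ 2 := by positivity
  have z3 : 0 ≤ E * H ^ 3 := by positivity
  have z4 : 0 ≤ E * H ^ 4 := by positivity
  obtain ⟨c0, hc0⟩ : ∃ c, c = 2 * Ca := ⟨_, rfl⟩
  have hc : 0 ≤ c0 := by linarith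
  rw [← hc0] at q1 q2 q3
  have m1 : ∀ a z : ℝ, 0 ≤ a → 0 ≤ z → 0 ≤ c0 * (a * z) := fun a z ha hz =>
    mul_nonneg hc (mul_nonneg ha hz)
  have L2 : 0 ≤ Lc ^ 2 := sq_nonneg _
  have L3 : 0 ≤ Lc ^ 3 := pow_nonneg hL 3
  have hKp : Kp = 16 + c0 * (Lc ^ 3 + Lc ^ 2 + 3 * Lc + 6) := by rw [hc0]; rfl
  rw [hKp]
  constructor
  · have e : (16 + c0 * (Lc ^ 3 + Lc ^ 2 + 3 * Lc + 6)) * (E * ((1 + H) * H ^ 2) + D * X ^ 2) -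
      (E * (2 * H) ^ 2 + (D + Ca * (η * (2 * H))) * y + (E * (2 * H) ^ 3 +
        (D + Ca * (η * (2 * H))) * y ^ 2)) =
      (2 * (D * X ^ 2) - D * y) + (4 * (D * X ^ 2) - D * y ^ 2) + 10 * (D * X ^ 2) +
      12 * (E * H ^ 2) + 8 * (E * H ^ 3) +
      (c0 * (E * (Lc * H ^ 2)) + c0 * (D * X ^ 2) - Ca * (η * (2 * (H * y)))) +
      (c0 * (E * (Lc ^ 2 * H ^ 3)) + c0 * ((Lc + 2) * (D * X ^ 2)) -
        Ca * (η * (2 * (H * y ^ 2)))) +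
      c0 * ((Lc ^ 3 + Lc ^ 2 + 2 * Lc + 6) * (E * H ^ 2)) +
      c0 * ((Lc ^ 3 + 3 * Lc + 6) * (E * H ^ 3)) +
      c0 * ((Lc ^ 3 + Lc ^ 2 + 2 * Lc + 3) * (D * X ^ 2)) := by ring
    have t1 := m1 (Lc ^ 3 + Lc ^ 2 + 2 * Lc + 6) _ (by positivity) z2
    have t2 := m1 (Lc ^ 3 + 3 * Lc + 6) _ (by positivity) z3
    have t3 := m1 (Lc ^ 3 + Lc ^ 2 + 2 * Lc + 3) _ (by positivity) hDX2
    linarith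
  · have e : (16 + c0 * (Lc ^ 3 + Lc ^ 2 + 3 * Lc + 6)) * (E * ((1 + H) * H ^ 3) + D * X ^ 3) -
      (E * (2 * H) ^ 3 + (D + Ca * (η * (2 * H))) * y ^ 2 + (E * (2 * H) ^ 4 +
        (D + Ca * (η * (2 * H))) * y ^ 3)) =
      (4 * (D * X ^ 2) - D * y ^ 2) + 4 * (D * X ^ 3 - D * X ^ 2) +
      (8 * (D * X ^ 3) - D * y ^ 3) + 4 * (D * X ^ 3) +
      8 * (E * H ^ 3) +
      (c0 * (E * (Lc ^ 2 * H ^ 3)) + c0 * ((Lc + 2) * (D * X ^ 2)) -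
        Ca * (η * (2 * (H * y ^ 2)))) +
      c0 * ((Lc + 2) * (D * X ^ 3 - D * X ^ 2)) +
      (c0 * (E * (Lc ^ 3 * H ^ 4)) + c0 * ((Lc ^ 2 + 2 * Lc + 4) * (D * X ^ 3)) -
        Ca * (η * (2 * (H * y ^ 3)))) +
      c0 * ((Lc ^ 3 + 3 * Lc + 6) * (E * H ^ 3)) +
      c0 * ((Lc ^ 2 + 3 * Lc + 6) * (E * H ^ 4)) +
      c0 * (Lc ^ 3 * (D * X ^ 3)) := by ring
    have t1 := m1 (Lc ^ 3 + 3 * Lc + 6) _ (by positivity) z3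
    have t2 := m1 (Lc ^ 2 + 3 * Lc + 6) _ (by positivity) z4
    have t3 := m1 (Lc ^ 3) _ (by positivity) (hDX2.trans hDX23)
    have t4 := m1 (Lc + 2) _ (by positivity) (sub_nonneg.2 hDX23)
    linarith

end

/-! ### Increments of the difference at intermediate frequencies -/

theorem psn_neg (N : ℕ) (k : ℤ) : psn N (-k) = psn N k := by
  unfold psn
  simp [mul_neg, Real.cos_neg]

/-- The frequencies `M ≤ |k| ≤ N`. -/
def midF (N : ℕ) (M : ℝ) : Finset ℤ := (Finset.Icc (-(N : ℤ)) N).filter fun k => M ≤ |(k : ℝ)|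

section

variable {N : ℕ} {s T σ : ℝ} {V W : ℝ → ℤ → ℂ}

/-- The comparison data of the two profiles. The `ℓ²` norm of the KdV profile is bounded in two ways,
by its own `H^s` norm and by that of the FPU profile plus the difference; terms carrying the
interpolation error need the second bound. -/
theorem cmp_profiles (hN : 1 ≤ N) (hs0 : 0 ≤ s) (hs1 : s ≤ 1) (hσ : σ = 1 ∨ σ = -1) {τ : ℝ}
    (hτ : 0 ≤ τ) (hf : HsSeq s (W τ) < ⊤) :
    Cmp s (msh N) τ σ (SF N) (cF N) (dual N : Set ℤ) (Uf N V τ) (W τ) (2 * Hs N s (V τ))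
      (min (HsSeqR s (W τ)) ((Ca + 1) * Hs N s (V τ) + l2R (Dl N V W τ)))
      (l2R (Dl N V W τ) + Ca * (msh N ^ (s / 2) * (2 * Hs N s (V τ)))) where
  s0 := hs0
  s1 := hs1
  h0 := (msh_pos hN).le
  t0 := hτ
  sg := by rcases hσ with h | h <;> simp [h]
  symb := symbF hN
  near := nearF hN
  bv := Uf_Js hs0 hs1 τ
  bn := by
    have b1 : Bd (nm (W τ)) _ :=
      (HsSeq_bd hf).mono (fun _ => norm_nonneg _) (nm_le_Ws hs0 _) le_rfl
    have b2 : Bd (nm (W τ)) ((Ca + 1) * Hs N s (V τ) + l2R (Dl N V W τ)) := by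
      refine ((al_bd_zero hN (Uf_off N V τ)
        ((Hs_bd N s V τ).mono (fun _ => norm_nonneg _) (nm_le_Ws hs0 _) le_rfl)).add
        (Dl_bd (V := V) hN hs0 hf)).mono (fun _ => norm_nonneg _) (fun k => ?_) le_rfl
      have := norm_sub_le (al N (Uf N V τ) k) (Dl N V W τ k)
      simpa [nm, Dl, df] using this
    rcases min_cases (HsSeqR s (W τ)) ((Ca + 1) * Hs N s (V τ) + l2R (Dl N V W τ)) with h | h
    · rw [h.1]; exact b1
    · rw [h.1]; exact b2
  bd := by
    refine ((Dl_bd (V := V) hN hs0 hf).add (al_sub_bd hN hs0 hs1 (Uf_off N V τ)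
      (Uf_Js hs0 hs1 τ))).mono (fun _ => norm_nonneg _) (fun k => ?_) le_rfl
    have := norm_sub_le (Dl N V W τ k) (al N (Uf N V τ) k - Uf N V τ k)
    simpa [nm, Dl, df] using this

/-- Passage from the lattice comparison to the interpolated profile: on the dual lattice the
comparison applies with `p = sinc²`; the only other frequency with `|k| ≤ N` is `k = N`, an alias
of `-N`, where `p = 0` is also an admissible multiplier and controls each profile separately. -/
theorem incr_bd (hN : 1 ≤ N) {M : ℝ} (hM : M < N) {t0 t1 R : ℝ}
    (H : ∀ K : Finset ℤ, (∀ k ∈ K, M ≤ |(k : ℝ)|) → ∀ p : ℤ → ℝ,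
      (∀ k ∈ K, near (msh N * J k) 1 (p k)) →
      Bd (ind K fun k => ‖(p k : ℂ) * (Uf N V t1 k - Uf N V t0 k) - (W t1 k - W t0 k)‖) R) :
    Bd (ind (midF N M) fun k => ‖Dl N V W t1 k - Dl N V W t0 k‖) (4 * R) := by
  have hhN := msh_mul hN
  have hpi := Real.pi_gt_three
  set K := midF N M ∩ dual N with hK
  set F := fun k => ‖(psn N k : ℂ) * (Uf N V t1 k - Uf N V t0 k) - (W t1 k - W t0 k)‖ with hF
  have Z := H K (fun k hk => (Finset.mem_filter.1 (Finset.mem_inter.1 hk).1).2) (psn N)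
    fun k _ => psn_near hN k
  have aN : |((N : ℤ) : ℝ)| = N := by simp
  have aN' : |((-(N : ℤ) : ℤ) : ℝ)| = N := by simp
  have hne : ∀ k : ℤ, |(k : ℝ)| = N → near (msh N * J k) 1 0 := by
    intro k hk
    refine ⟨by simp, ?_⟩
    have := msh_pos hN
    unfold J
    rw [hk, mul_add, hhN]
    norm_num
    linarith
  have Z' := H {-(N : ℤ), (N : ℤ)} (fun k hk => by
      simp only [Finset.mem_insert, Finset.mem_singleton] at hk
      rcases hk with rfl | rfl
      · rw [aN']; exact hM.le
      · rw [aN]; exact hM.le) (fun _ => 0) (fun k hk => by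
      simp only [Finset.mem_insert, Finset.mem_singleton] at hk
      rcases hk with rfl | rfl
      · exact hne _ aN'
      · exact hne _ aN)
  have hR : 0 ≤ R := Z.1
  have w1 : ‖W t1 (N : ℤ) - W t0 (N : ℤ)‖ ≤ R := by
    have := Z'.sp.2.2 (N : ℤ)
    simpa [ind, ← norm_neg (W t1 (N : ℤ) - W t0 (N : ℤ))] using this
  have w2 : ‖W t1 (-(N : ℤ)) - W t0 (-(N : ℤ))‖ ≤ R := by
    have := Z'.sp.2.2 (-(N : ℤ))
    simpa [ind, ← norm_neg (W t1 (-(N : ℤ)) - W t0 (-(N : ℤ)))] using this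
  have hmd : -(N : ℤ) ∈ dual N := mem_dual.2 ⟨le_rfl, by omega⟩
  have hmK : -(N : ℤ) ∈ K := by
    rw [hK, Finset.mem_inter]
    refine ⟨Finset.mem_filter.2 ⟨Finset.mem_Icc.2 ⟨le_rfl, by omega⟩, ?_⟩, hmd⟩
    rw [aN']; exact hM.le
  have z1 : F (-(N : ℤ)) ≤ R := by
    have := Z.sp.2.2 (-(N : ℤ))
    simpa only [ind, if_pos hmK] using this
  have hrN : red N (N : ℤ) = -(N : ℤ) := by
    unfold red
    rw [show (N : ℤ) + N = 2 * N by ring, Int.emod_self]; ring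
  have hN3 : ‖Dl N V W t1 (N : ℤ) - Dl N V W t0 (N : ℤ)‖ ≤ 3 * R := by
    have e : Dl N V W t1 (N : ℤ) - Dl N V W t0 (N : ℤ) =
        ((psn N (-(N : ℤ)) : ℂ) * (Uf N V t1 (-(N : ℤ)) - Uf N V t0 (-(N : ℤ))) -
          (W t1 (-(N : ℤ)) - W t0 (-(N : ℤ)))) + (W t1 (-(N : ℤ)) - W t0 (-(N : ℤ))) -
          (W t1 (N : ℤ) - W t0 (N : ℤ)) := by
      unfold Dl df al
      rw [hrN, psn_neg]; ring
    rw [e]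
    refine (norm_sub_le _ _).trans ?_
    have := norm_add_le ((psn N (-(N : ℤ)) : ℂ) * (Uf N V t1 (-(N : ℤ)) - Uf N V t0 (-(N : ℤ))) -
          (W t1 (-(N : ℤ)) - W t0 (-(N : ℤ)))) (W t1 (-(N : ℤ)) - W t0 (-(N : ℤ)))
    have z1' : ‖(psn N (-(N : ℤ)) : ℂ) * (Uf N V t1 (-(N : ℤ)) - Uf N V t0 (-(N : ℤ))) -
          (W t1 (-(N : ℤ)) - W t0 (-(N : ℤ)))‖ ≤ R := z1
    linarith
  have P : Bd (ind {(N : ℤ)} fun _ => 3 * R) (3 * R) :=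
    Bd.of_ind (fun _ _ => by positivity) (by positivity) (by simp)
  refine ((Z.add P).ind_le (fun _ _ => norm_nonneg _) fun k hk => ?_).mono
    (ind_nonneg fun _ _ => norm_nonneg _) (fun _ => le_rfl) (by linarith)
  by_cases hd : k ∈ dual N
  · have hkK : k ∈ K := Finset.mem_inter.2 ⟨hk, hd⟩
    have e : Dl N V W t1 k - Dl N V W t0 k =
        (psn N k : ℂ) * (Uf N V t1 k - Uf N V t0 k) - (W t1 k - W t0 k) := by
      unfold Dl df al
      rw [red_of_mem hN hd]; ring
    rw [e]
    have : 0 ≤ ind {(N : ℤ)} (fun _ => 3 * R) k := P.2.1 k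
    unfold ind at this ⊢
    rw [if_pos hkK]
    linarith
  · have hkN : k = N := by
      have h1 := Finset.mem_Icc.1 (Finset.mem_filter.1 hk).1
      rw [mem_dual] at hd
      omega
    have : 0 ≤ ind K F k := Z.2.1 k
    subst hkN
    have e : ind {(N : ℤ)} (fun _ => 3 * R) (N : ℤ) = 3 * R := by simp [ind]
    show _ ≤ ind K F (N : ℤ) + ind {(N : ℤ)} (fun _ => 3 * R) (N : ℤ)
    rw [e]
    linarith

/-- The projected norm at time `t1` is at most the full norm at time `t0` plus the increment. -/
theorem proj_le (hN : 1 ≤ N) {M : ℝ} {t0 t1 R d : ℝ} (h0 : Bd (nm (Dl N V W t0)) d)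
    (h : Bd (ind (midF N M) fun k => ‖Dl N V W t1 k - Dl N V W t0 k‖) R) :
    l2projR {k : ℤ | M ≤ |(k : ℝ)| ∧ |(k : ℝ)| ≤ Real.pi / msh N} (Dl N V W t1) ≤ d + R := by
  have hpi : Real.pi / msh N = N := by
    rw [div_eq_iff (msh_pos hN).ne', mul_comm]; exact (msh_mul hN).symm
  have hmem : ∀ k : ℤ, (M ≤ |(k : ℝ)| ∧ |(k : ℝ)| ≤ Real.pi / msh N) ↔ k ∈ midF N M := by
    intro k
    rw [hpi, midF, Finset.mem_filter, Finset.mem_Icc, and_comm]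
    refine and_congr_left fun _ => ?_
    rw [abs_le]
    constructor
    · rintro ⟨h1, h2⟩; exact ⟨by exact_mod_cast h1, by exact_mod_cast h2⟩
    · rintro ⟨h1, h2⟩; exact ⟨by exact_mod_cast h1, by exact_mod_cast h2⟩
  have e : l2projR {k : ℤ | M ≤ |(k : ℝ)| ∧ |(k : ℝ)| ≤ Real.pi / msh N} (Dl N V W t1) =
      nrm (ind (midF N M) fun k => ‖Dl N V W t1 k‖) := by
    unfold l2projR nrm
    congr 2
    funext k
    unfold ind Set.indicator
    by_cases hk : k ∈ midF N M
    · rw [if_pos hk, if_pos (show k ∈ {k : ℤ | M ≤ |(k : ℝ)| ∧ |(k : ℝ)| ≤ Real.pi / msh N} from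
        (hmem k).2 hk)]
    · rw [if_neg hk, if_neg (show k ∉ {k : ℤ | M ≤ |(k : ℝ)| ∧ |(k : ℝ)| ≤ Real.pi / msh N} from
        fun h => hk ((hmem k).1 h))]; simp
  rw [e]
  refine Bd.nrm_le ((h0.add h).mono (ind_nonneg fun _ _ => norm_nonneg _) (fun k => ?_) le_rfl)
  unfold ind
  have := norm_add_le (Dl N V W t0 k) (Dl N V W t1 k - Dl N V W t0 k)
  rw [add_sub_cancel] at this
  split_ifs with hk
  · exact this
  · simp

end

/-! ### Absorption of the lattice error -/

/-- The interpolated FPU data is exactly the KdV data. -/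
theorem Dl_zero {N : ℕ} {σ t : ℝ} {u0 : ℤ → ℂ} {V W : ℝ → ℤ → ℂ} (hN : 1 ≤ N) (ht : 0 ≤ t)
    (hE : fpuProfileEq N σ u0 V (Set.Icc 0 t))
    (hK : kdvProfileEq σ (fun k => tF (interp N u0) k) W (Set.Icc 0 t)) :
    l2R (Dl N V W 0) = 0 := by
  have h0 : (0 : ℝ) ∈ Set.Icc 0 t := ⟨le_rfl, ht⟩
  have e : ∀ k, Dl N V W 0 k = 0 := by
    intro k
    have h1 := hK 0 h0 k
    have h2 := hE 0 h0 (red N k) (red_mem hN k)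
    rw [intervalIntegral.integral_same, mul_zero, sub_zero] at h1 h2
    unfold Dl df al Uf
    rw [if_pos (red_mem hN k), h1, h2]
    simp only [tF_interp hN]
    exact sub_self _
  unfold l2R
  simp [e]

section

variable {N : ℕ} {s t σ M a b : ℝ} {V W : ℝ → ℤ → ℂ}

/-- A priori bound between a time `t0` at which the difference is controlled by the lattice error
and the final time `t`, when on `(t0, t]` the difference dominates the lattice error, so that the
lattice error terms of the bulk estimate are absorbed. -/
theorem absorb (hN : 1 ≤ N) (hs0 : 0 ≤ s) (hs1 : s ≤ 1) (hh : msh N ≤ 1) (hM1 : 1 < M)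
    (hMN : M < N) (hσ : σ = 1 ∨ σ = -1) {u0 w0 : ℤ → ℂ}
    (hV : ∀ n : ℤ, ContinuousOn (fun t' => V t' n) (Set.Icc 0 t))
    (hE : fpuProfileEq N σ u0 V (Set.Icc 0 t))
    (hVZ : ∀ t' ∈ Set.Icc (0:ℝ) t, dF N (V t') 0 = 0)
    (hf : ∀ t' ∈ Set.Icc (0:ℝ) t, HsSeq s (W t') < ⊤)
    (hc : ∀ t₀ ∈ Set.Icc (0:ℝ) t, ∀ ε : ℝ, 0 < ε → ∃ δ : ℝ, 0 < δ ∧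
          ∀ t' ∈ Set.Icc (0:ℝ) t, |t' - t₀| < δ →
            HsSeq s (fun k => W t' k - W t₀ k) < ENNReal.ofReal ε)
    (hKE : kdvProfileEq σ w0 W (Set.Icc 0 t))
    (hWZ : ∀ t' ∈ Set.Icc (0:ℝ) t, W t' 0 = 0)
    (ha : ∀ t' ∈ Set.Icc (0:ℝ) t,
      l2R (Dl N V W t') * (1 + Hs N s (V t') + HsSeqR s (W t')) ^ 2 ≤ a)
    (hb : ∀ t' ∈ Set.Icc (0:ℝ) t,
      (1 + t') ^ (1 + s/2) * (1 + Hs N s (V t')) * Hs N s (V t') ^ 2 ≤ b)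
    {t0 : ℝ} (h0 : 0 ≤ t0) (h01 : t0 ≤ t)
    (hbad : l2R (Dl N V W t0) ≤ Ef s (msh N) t0 * ((1 + Hs N s (V t0)) * Hs N s (V t0) ^ 2))
    (hgood : ∀ τ ∈ Set.Ioc t0 t,
      Ef s (msh N) τ * ((1 + Hs N s (V τ)) * Hs N s (V τ) ^ 2) ≤ l2R (Dl N V W τ)) :
    l2projR {k : ℤ | M ≤ |(k : ℝ)| ∧ |(k : ℝ)| ≤ Real.pi / msh N} (Dl N V W t) ≤
      (1 + 16 * K0 * Kp + 8 * K1 * Kp) * (M ^ (-(1:ℝ)/2) * a + msh N ^ (s/2) * b +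
        ∫ t' in (0:ℝ)..t, l2R (Dl N V W t') * (1 + Hs N s (V t') + HsSeqR s (W t')) ^ 3) := by
  have ht : 0 ≤ t := h0.trans h01
  have hη0 : 0 ≤ msh N ^ (s / 2) := Real.rpow_nonneg (msh_pos hN).le _
  have hη1 : msh N ^ (s / 2) ≤ 1 := Real.rpow_le_one (msh_pos hN).le hh (by linarith)
  have hM2 : 0 ≤ M ^ (-(1:ℝ)/2) := Real.rpow_nonneg (by linarith) _
  have hM3 : M ^ (-(1:ℝ)/2) ≤ 1 := Real.rpow_le_one_of_one_le_of_nonpos hM1.le (by norm_num)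
  have hHn : ∀ τ, 0 ≤ Hs N s (V τ) := fun τ => Real.sqrt_nonneg _
  have hωn : ∀ τ, 0 ≤ HsSeqR s (W τ) := fun τ => Real.sqrt_nonneg _
  have hDn : ∀ τ, 0 ≤ l2R (Dl N V W τ) := fun τ => Real.sqrt_nonneg _
  set X : ℝ → ℝ := fun τ => 1 + Hs N s (V τ) + HsSeqR s (W τ) with hX
  have hX1 : ∀ τ, 1 ≤ X τ := fun τ => by have := hHn τ; have := hωn τ; simp only [hX]; linarith
  have hXH : ∀ τ, Hs N s (V τ) ≤ X τ := fun τ => by have := hωn τ; simp only [hX]; linarith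
  set G : ℝ → ℝ := fun τ => l2R (Dl N V W τ) * X τ ^ 3 with hG
  have hG0 : ∀ τ, 0 ≤ G τ := fun τ =>
    mul_nonneg (hDn τ) (pow_nonneg (zero_le_one.trans (hX1 τ)) 3)
  have hGc : ContinuousOn G (Set.Icc 0 t) :=
    (Dl_cont hN hs0 hV hf hc).mul
      (((continuousOn_const.add (Hs_cont hV)).add (HsSeqR_cont hf hc)).pow 3)
  have hGi : IntervalIntegrable G volume 0 t :=
    ContinuousOn.intervalIntegrable (by rwa [Set.uIcc_of_le ht])
  have hGi0 : IntervalIntegrable G volume t0 t :=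
    ContinuousOn.intervalIntegrable
      (by rw [Set.uIcc_of_le h01]; exact hGc.mono (Set.Icc_subset_Icc_left h0))
  have hEη : ∀ τ, 0 ≤ τ → msh N ^ (s / 2) ≤ Ef s (msh N) τ := fun τ hτ =>
    le_mul_of_one_le_right hη0 (Real.one_le_rpow (by linarith) (by linarith))
  -- the lattice error at any time is controlled by `b`
  have hEb : ∀ τ ∈ Set.Icc 0 t,
      Ef s (msh N) τ * ((1 + Hs N s (V τ)) * Hs N s (V τ) ^ 2) ≤ msh N ^ (s / 2) * b := by
    intro τ hτ
    unfold Ef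
    rw [mul_assoc]
    refine mul_le_mul_of_nonneg_left (le_trans ?_ (hb τ hτ)) hη0
    rw [mul_assoc]
    refine mul_le_mul_of_nonneg_right ?_
      (mul_nonneg (by linarith [hHn τ]) (sq_nonneg _))
    exact Real.rpow_le_rpow_of_exponent_le (by linarith [hτ.1]) (by linarith)
  have hpoly : ∀ τ ∈ Set.Icc 0 t, _ := fun τ hτ =>
    poly_bounds (hHn τ) (hωn τ) (hDn τ) hη0 hη1 (hEη τ hτ.1)
  have hbd : ∀ τ ∈ Set.Icc 0 t, bdry (Ef s (msh N) τ) (2 * Hs N s (V τ))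
      (min (HsSeqR s (W τ)) ((Ca + 1) * Hs N s (V τ) + l2R (Dl N V W τ)))
      (l2R (Dl N V W τ) + Ca * (msh N ^ (s / 2) * (2 * Hs N s (V τ)))) ≤
      Kp * (msh N ^ (s / 2) * b + a) := fun τ hτ =>
    (hpoly τ hτ).1.trans (mul_le_mul_of_nonneg_left (add_le_add (hEb τ hτ) (ha τ hτ)) Kp_nonneg)
  have hU := solF hN ht hσ hV hE hVZ
  have hW := solK hs0 ht hσ hf hc hKE hWZ
  have hsub : ∀ τ ∈ Set.Icc t0 t, τ ∈ Set.Icc 0 t := fun τ hτ => ⟨h0.trans hτ.1, hτ.2⟩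
  have hle : ∀ τ ∈ Set.Ioc t0 t, K1 * bulk (Ef s (msh N) τ) (2 * Hs N s (V τ))
      (min (HsSeqR s (W τ)) ((Ca + 1) * Hs N s (V τ) + l2R (Dl N V W τ)))
      (l2R (Dl N V W τ) + Ca * (msh N ^ (s / 2) * (2 * Hs N s (V τ)))) ≤
      K1 * (Kp * 2) * G τ := by
    intro τ hτ
    have hτ' := hsub τ ⟨hτ.1.le, hτ.2⟩
    rw [mul_assoc]
    refine mul_le_mul_of_nonneg_left ((hpoly τ hτ').2.trans ?_) K1_nonneg
    rw [mul_assoc]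
    refine mul_le_mul_of_nonneg_left ?_ Kp_nonneg
    have e1 : Ef s (msh N) τ * ((1 + Hs N s (V τ)) * Hs N s (V τ) ^ 3) ≤ G τ := by
      calc _ = Ef s (msh N) τ * ((1 + Hs N s (V τ)) * Hs N s (V τ) ^ 2) * Hs N s (V τ) := by ring
        _ ≤ l2R (Dl N V W τ) * Hs N s (V τ) := mul_le_mul_of_nonneg_right (hgood τ hτ) (hHn τ)
        _ ≤ G τ := mul_le_mul_of_nonneg_left
            ((hXH τ).trans (le_self_pow₀ (hX1 τ) (by norm_num))) (hDn τ)
    have e2 : l2R (Dl N V W τ) * (1 + Hs N s (V τ) + HsSeqR s (W τ)) ^ 3 = G τ := rfl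
    rw [e2]
    linarith
  have hI := incr_bd (V := V) (W := W) hN hMN (t0 := t0) (t1 := t)
    fun K hK p hp => state_cmp hU hW h0 h01 le_rfl
      (fun τ hτ => cmp_profiles hN hs0 hs1 hσ (h0.trans hτ.1) (hf τ (hsub τ hτ)))
      (hGi0.const_mul _) hle (by linarith) hK hp
  have hfin := proj_le hN (Dl_bd (V := V) hN hs0 (hf t0 ⟨h0, h01⟩)) hI
  refine hfin.trans ?_
  rw [intervalIntegral.integral_const_mul]
  have hInt : ∫ τ in t0..t, G τ ≤ ∫ τ in (0:ℝ)..t, G τ :=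
    intervalIntegral.integral_mono_interval h0 h01 le_rfl
      (Filter.Eventually.of_forall hG0) hGi
  have hI0 : 0 ≤ ∫ τ in (0:ℝ)..t, G τ :=
    intervalIntegral.integral_nonneg ht fun τ _ => hG0 τ
  have hd0 := hbad.trans (hEb t0 ⟨h0, h01⟩)
  have b1 := hbd t ⟨ht, le_rfl⟩
  have b0 := hbd t0 ⟨h0, h01⟩
  have hηb : 0 ≤ msh N ^ (s / 2) * b := (hDn t0).trans hd0
  have ha0 : 0 ≤ a := (mul_nonneg (hDn t) (sq_nonneg _)).trans (ha t ⟨ht, le_rfl⟩)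
  change _ ≤ (1 + 16 * K0 * Kp + 8 * K1 * Kp) * (M ^ (-(1:ℝ)/2) * a + msh N ^ (s/2) * b +
    ∫ τ in (0:ℝ)..t, G τ)
  set I := ∫ τ in (0:ℝ)..t, G τ
  set m := M ^ (-(1:ℝ)/2)
  set y := msh N ^ (s / 2) * b
  have hK0 := K0_nonneg
  have hK1 := K1_nonneg
  have hKp := Kp_nonneg
  have c1 := mul_le_mul_of_nonneg_left (add_le_add b1 b0) (by positivity : 0 ≤ 2 * K0 * m)
  have c2 := mul_le_mul_of_nonneg_left hInt (by positivity : 0 ≤ K1 * (Kp * 2))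
  have c3 : K0 * Kp * (m * y) ≤ K0 * Kp * y :=
    mul_le_mul_of_nonneg_left (mul_le_of_le_one_left hηb hM3) (by positivity)
  have c4 : 0 ≤ m * a := by positivity
  have c5 : 0 ≤ K0 * Kp * I := by positivity
  have c6 : 0 ≤ K1 * Kp * (m * a) := by positivity
  have c7 : 0 ≤ K1 * Kp * y := by positivity
  nlinarith

end

/-- intermediate-frequency estimate for the difference between the
interpolated FPU profile and the KdV profile.  The suprema over `[0,t]` appearing on the
right-hand side are encoded by quantifying over arbitrary upper bounds `a` and `b`. -/
theorem midfreq_profile_difference (s : ℝ) (hs0 : 0 ≤ s) (hs1 : s ≤ 1) :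
    ∃ C : ℝ, 0 < C ∧ ∀ N : ℕ, 1 ≤ N → msh N ≤ 1 →
      ∀ M : ℝ, 1 < M → M < Real.pi / msh N →
      ∀ t : ℝ, 0 ≤ t → ∀ σ : ℝ, σ = 1 ∨ σ = -1 →
      ∀ u0 : ℤ → ℝ, dF N (cf u0) 0 = 0 →
      ∀ V W : ℝ → ℤ → ℂ,
        -- `𝓥 ∈ C([0,t];H^s(𝕋_h))` solves the decoupled FPU profile equation, mean zero
        (∀ n : ℤ, ContinuousOn (fun t' => V t' n) (Set.Icc 0 t)) →
        fpuProfileEq N σ (cf u0) V (Set.Icc 0 t) →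
        (∀ t' ∈ Set.Icc (0:ℝ) t, dF N (V t') 0 = 0) →
        -- `𝓦 ∈ C([0,t];H^s(𝕋))` solves the KdV profile equation with data `𝓛_h u0`, mean zero
        (∀ t' ∈ Set.Icc (0:ℝ) t, HsSeq s (W t') < ⊤) →
        (∀ t₀ ∈ Set.Icc (0:ℝ) t, ∀ ε : ℝ, 0 < ε → ∃ δ : ℝ, 0 < δ ∧
          ∀ t' ∈ Set.Icc (0:ℝ) t, |t' - t₀| < δ →
            HsSeq s (fun k => W t' k - W t₀ k) < ENNReal.ofReal ε) →
        kdvProfileEq σ (fun k => tF (interp N (cf u0)) k) W (Set.Icc 0 t) →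
        (∀ t' ∈ Set.Icc (0:ℝ) t, W t' 0 = 0) →
        ∀ a b : ℝ,
          (∀ t' ∈ Set.Icc (0:ℝ) t,
            l2R (fun k => tF (interp N (V t')) k - W t' k) *
                (1 + Hs N s (V t') + HsSeqR s (W t')) ^ 2 ≤ a) →
          (∀ t' ∈ Set.Icc (0:ℝ) t,
            (1 + t') ^ (1 + s/2) * (1 + Hs N s (V t')) * Hs N s (V t') ^ 2 ≤ b) →
          l2projR {k : ℤ | M ≤ |(k : ℝ)| ∧ |(k : ℝ)| ≤ Real.pi / msh N}
              (fun k => tF (interp N (V t)) k - W t k)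
            ≤ C * (M ^ (-(1:ℝ)/2) * a + msh N ^ (s/2) * b +
                ∫ t' in (0:ℝ)..t,
                  l2R (fun k => tF (interp N (V t')) k - W t' k) *
                    (1 + Hs N s (V t') + HsSeqR s (W t')) ^ 3) := by
  refine ⟨1 + 16 * K0 * Kp + 8 * K1 * Kp, ?_, ?_⟩
  · have := K0_nonneg; have := K1_nonneg; have := Kp_nonneg; positivity
  intro N hN hh M hM1 hMN t ht σ hσ u0 _ V W hV hE hVZ hf hc hKE hWZ a b ha hb
  simp only [Dl_eq hN] at ha ⊢
  have hMN' : M < N := by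
    rwa [show Real.pi / msh N = N by
      rw [div_eq_iff (msh_pos hN).ne', mul_comm]; exact (msh_mul hN).symm] at hMN
  -- `t0` is the last time at which the difference is dominated by the lattice error
  set L : ℝ → ℝ := fun τ => Ef s (msh N) τ * ((1 + Hs N s (V τ)) * Hs N s (V τ) ^ 2) with hL
  have hLc : ContinuousOn L (Set.Icc 0 t) := by
    have h1 : ContinuousOn (fun τ : ℝ => Ef s (msh N) τ) (Set.Icc 0 t) := by
      refine continuousOn_const.mul (ContinuousOn.rpow_const (by fun_prop) fun τ _ =>
        Or.inr (by linarith))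
    exact h1.mul ((continuousOn_const.add (Hs_cont hV)).mul ((Hs_cont hV).pow 2))
  have hDc := Dl_cont hN hs0 hV hf hc
  have hcomp : IsCompact {τ | τ ∈ Set.Icc 0 t ∧ l2R (Dl N V W τ) ≤ L τ} :=
    isCompact_Icc.of_isClosed_subset (isClosed_Icc.isClosed_le hDc hLc) fun _ h => h.1
  obtain ⟨t0, ⟨ht0, hbad⟩, hmax⟩ := hcomp.exists_isGreatest ⟨0, ⟨le_rfl, ht⟩, by
    rw [Dl_zero hN ht hE hKE]
    have : 0 ≤ Hs N s (V 0) := Real.sqrt_nonneg _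
    exact mul_nonneg (Ef_nonneg (msh_pos hN).le le_rfl) (by positivity)⟩
  refine absorb hN hs0 hs1 hh hM1 hMN' hσ hV hE hVZ hf hc hKE hWZ ha hb ht0.1 ht0.2 hbad
    fun τ hτ => ?_
  by_contra hcon
  exact absurd (hmax ⟨⟨ht0.1.trans hτ.1.le, hτ.2⟩, (not_le.1 hcon).le⟩) (not_le.2 hτ.1)

end FPU

end
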